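/- arXiv:1510.08025 — 10 statements merged into one kernel-verified Lean document; each statement's English description precedes it below -/
import Mathlib

section
/- There exists δ₀ > 0 such that for every δ with 0 ≤ δ < δ₀ there exist functions h₁, h₂ : ℝ³ → ℝ and a real number κ with the following properties: h₁ and h₂ are twice continuously differentiable on the closed unit ball B̄₁ (all partial derivatives up to order 2 exist on the open ball and extend continuously to the closed ball); Δh₁(x) = h₂(x)² for every x in the open unit ball B₁; h₁(x) = 0 for every x with ‖x‖ = 1; Δh₂(x) − (κ + h₁(x))·h₂(x) = 0 for every x ∈ B₁; the radial (normal) derivative of h₂ vanishes on the boundary, i.e. ⟨∇h₂(x), x⟩ = 0 for every x with ‖x‖ = 1, where ∇h₂ is computed within the closed ball; and ∫_{B₁} h₂(x)² dx = δ². (In particular h₂ is not identically zero when δ > 0, while for δ = 0 one may take (h₁, h₂, κ) = (0, 0, 0).) -/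
/-!
The solution is radial. With `g = κ + h₁` and `f = h₂` the eigenvalue disappears and the equations
become `Δg = f²`, `Δf = gf`, where `κ` is recovered as the boundary value of `g`. By the divergence
theorem `∫ f² = ∫ Δg` is a positive multiple of `g'(1)`, so both remaining conditions, the Neumann
condition and the value of the mass, concern derivatives at `r = 1`.

Radial functions are written as power series in `t = ‖x‖²`, with coefficients weighted so that
they converge for `|t| < 2`. The coefficient sequences form the Banach space `ℓ¹` (`A`), on which
the Cauchy product `mulA` and the solution operator `K` of the radial Poisson equation are bounded;
`L u` is the derivative at `t = 1` of `K u`. Put `f = √ε φ` with `φ(0) = 1` and `g(0) = a`. The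
problem is then `theta (φ, g, a, ε) = (0, 0, 0, s)` for the polynomial map

  `theta (φ, g, a, ε) = (φ - 1 - K(φg), g - a - ε K(φ²), L(φg), ε L(φ²))`,

where `s` is proportional to `δ²`. Its derivative at the trivial solution `(1, 0, 0, 0)` is
triangular and onto, so `theta` is open there (`theta_open`), and solutions exist for all small
`s ≥ 0` (`exists_solution`). Here `ε ≥ 0` since `L(φ²)` is near `L(1) > 0`. Smoothness up to the
boundary is automatic, the power series converging past `t = 1`.
-/

open MeasureTheory

/-- The Euclidean Laplacian on `ℝ³`: the sum of the pure second partial derivatives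
in the coordinate directions. -/
noncomputable def euclideanLaplacian3 (f : EuclideanSpace ℝ (Fin 3) → ℝ)
    (x : EuclideanSpace ℝ (Fin 3)) : ℝ :=
  ∑ i : Fin 3,
    fderiv ℝ (fun y => fderiv ℝ f y (EuclideanSpace.single i 1)) x (EuclideanSpace.single i 1)

namespace NonlinearHair

/-! ### Real power series of convergence radius at least two -/

/-- The sum of the power series with coefficients `c`. -/
noncomputable def pser (c : ℕ → ℝ) (t : ℝ) : ℝ := ∑' n, c n * t ^ n

/-- Coefficients of the termwise derivative. -/
def dcoef (c : ℕ → ℝ) (n : ℕ) : ℝ := (n + 1) * c (n + 1)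

/-- The power series with coefficients `c` converges absolutely on `(-2, 2)`. -/
def Good (c : ℕ → ℝ) : Prop := ∀ r : ℝ, 0 ≤ r → r < 2 → Summable fun n => |c n| * r ^ n

lemma Good.summable {c : ℕ → ℝ} (hc : Good c) {t : ℝ} (ht : |t| < 2) :
    Summable fun n => ‖c n * t ^ n‖ := by
  simpa [abs_mul, abs_pow] using hc |t| (abs_nonneg t) ht

/-- Quantitative Bernoulli inequality, absorbing the factor `n + 1` produced by differentiation
into a slightly larger radius. -/
lemma bernoulli_aux {r s : ℝ} (hr : 0 ≤ r) (hrs : r ≤ s) (n : ℕ) :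
    (n + 1) * r ^ n * (s - r) ≤ s ^ (n + 1) - r ^ (n + 1) := by
  induction n with
  | zero => simp
  | succ n ih =>
    have h1 := mul_le_mul_of_nonneg_left ih hr
    have h2 : r * (s ^ (n + 1) - r ^ (n + 1)) ≤ s * (s ^ (n + 1) - r ^ (n + 1)) :=
      mul_le_mul_of_nonneg_right hrs (sub_nonneg.2 (pow_le_pow_left₀ hr hrs _))
    push_cast
    calc ((n : ℝ) + 1 + 1) * r ^ (n + 1) * (s - r)
        = r * ((n + 1) * r ^ n * (s - r)) + r ^ (n + 1) * (s - r) := by ring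
      _ ≤ s * (s ^ (n + 1) - r ^ (n + 1)) + r ^ (n + 1) * (s - r) := by linarith
      _ = _ := by ring

lemma Good.dcoef {c : ℕ → ℝ} (hc : Good c) : Good (dcoef c) := by
  intro r hr hr2
  have hs : 0 < (r + 2) / 2 - r := by linarith
  have h1 := (summable_nat_add_iff 1).2 (hc ((r + 2) / 2) (by linarith) (by linarith))
  refine Summable.of_nonneg_of_le (fun n => by positivity) (fun n => ?_)
    (h1.mul_left ((r + 2) / 2 - r)⁻¹)
  have h2 := bernoulli_aux hr (sub_pos.1 hs).le n
  have h3 : (n + 1) * r ^ n ≤ ((r + 2) / 2 - r)⁻¹ * ((r + 2) / 2) ^ (n + 1) := by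
    rw [inv_mul_eq_div, le_div_iff₀ hs]
    have : 0 ≤ r ^ (n + 1) := by positivity
    linarith
  have h4 : |NonlinearHair.dcoef c n| = (n + 1) * |c (n + 1)| := by
    rw [NonlinearHair.dcoef, abs_mul, abs_of_nonneg (by positivity)]
  rw [h4]
  calc (n + 1) * |c (n + 1)| * r ^ n = |c (n + 1)| * ((n + 1) * r ^ n) := by ring
    _ ≤ |c (n + 1)| * (((r + 2) / 2 - r)⁻¹ * ((r + 2) / 2) ^ (n + 1)) := by gcongr
    _ = _ := by ring

lemma Good.hasDerivAt {c : ℕ → ℝ} (hc : Good c) {t : ℝ} (ht : |t| < 2) :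
    HasDerivAt (pser c) (pser (NonlinearHair.dcoef c) t) t := by
  obtain ⟨r, htr, hr2⟩ := exists_between ht
  have hr : 0 ≤ r := (abs_nonneg t).trans htr.le
  have key : ∀ y : ℝ, (∀ n : ℕ, c (n + 1) * (((n + 1 : ℕ) : ℝ) * y ^ (n + 1 - 1)) =
      NonlinearHair.dcoef c n * y ^ n) := fun y n => by
    simp [NonlinearHair.dcoef]; ring
  have hu : Summable fun n : ℕ => |c n| * (n * r ^ (n - 1)) := by
    rw [← summable_nat_add_iff 1]
    refine (hc.dcoef r hr hr2).congr fun n => ?_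
    rw [NonlinearHair.dcoef, abs_mul, abs_of_nonneg (by positivity : (0 : ℝ) ≤ n + 1)]
    push_cast
    ring
  have h := hasDerivAt_tsum_of_isPreconnected (g := fun n z => c n * z ^ n)
    (g' := fun n z => c n * (n * z ^ (n - 1))) hu (isOpen_Ioo (a := -r) (b := r))
    isPreconnected_Ioo (fun n y _ => (hasDerivAt_pow n y).const_mul (c n))
    (fun n y hy => by
      rw [norm_mul, norm_mul, norm_pow, Real.norm_eq_abs, Real.norm_eq_abs y,
        Real.norm_of_nonneg (Nat.cast_nonneg n)]
      gcongr
      exact (abs_lt.2 hy).le) (y₀ := t) (abs_lt.1 htr) (hc.summable ht).of_norm (abs_lt.1 htr)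
  have e : ∑' n : ℕ, c n * (n * t ^ (n - 1)) = pser (NonlinearHair.dcoef c) t := by
    rw [Summable.tsum_eq_zero_add]
    · simp only [key]; simp [pser]
    rw [← summable_nat_add_iff 1]
    simp only [key]
    exact (hc.dcoef.summable ht).of_norm
  rw [← e]
  exact h

lemma Good.continuousOn {c : ℕ → ℝ} (hc : Good c) : ContinuousOn (pser c) (Set.Ioo (-2) 2) :=
  fun _ ht => (hc.hasDerivAt (abs_lt.2 ht)).continuousAt.continuousWithinAt

lemma Good.contDiffOn {c : ℕ → ℝ} (hc : Good c) (n : ℕ) :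
    ContDiffOn ℝ n (pser c) (Set.Ioo (-2) 2) := by
  induction n generalizing c with
  | zero => exact contDiffOn_zero.2 hc.continuousOn
  | succ n ih =>
    push_cast
    rw [contDiffOn_succ_iff_deriv_of_isOpen isOpen_Ioo]
    refine ⟨fun t ht => (hc.hasDerivAt (abs_lt.2 ht)).differentiableAt.differentiableWithinAt,
      by simp, (ih hc.dcoef).congr fun t ht => (hc.hasDerivAt (abs_lt.2 ht)).deriv⟩

/-- If `U = ∑ cₙ tⁿ` and `V = ∑ vₙ tⁿ` with `(2n+2)(2n+3) cₙ₊₁ = vₙ`, then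
`4 t U'' + 6 U' = V`; this is `ΔU(‖x‖²) = V(‖x‖²)` in dimension three. -/
lemma radial_ode {c v : ℕ → ℝ} (hc : Good c)
    (h : ∀ n : ℕ, (2 * n + 2) * (2 * n + 3) * c (n + 1) = v n) {t : ℝ} (ht : |t| < 2) :
    4 * t * pser (dcoef (dcoef c)) t + 6 * pser (dcoef c) t = pser v t := by
  have h1 := (hc.dcoef.summable ht).of_norm
  have h2 := (hc.dcoef.dcoef.summable ht).of_norm
  have e1 : t * pser (dcoef (dcoef c)) t = ∑' n : ℕ, n * dcoef c n * t ^ n := by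
    rw [Summable.tsum_eq_zero_add]
    · rw [pser, ← tsum_mul_left]
      simp only [Nat.cast_zero, zero_mul, zero_add]
      refine tsum_congr fun n => ?_
      simp only [dcoef]; push_cast; ring
    · rw [← summable_nat_add_iff 1]
      refine (h2.mul_left t).congr fun n => ?_
      simp only [dcoef]; push_cast; ring
  have s1 : Summable fun n : ℕ => n * dcoef c n * t ^ n := by
    rw [← summable_nat_add_iff 1]
    refine (h2.mul_left t).congr fun n => ?_
    simp only [dcoef]; push_cast; ring
  rw [mul_assoc, e1, pser, pser, ← tsum_mul_left, ← tsum_mul_left,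
    ← (s1.mul_left 4).tsum_add (h1.mul_left 6)]
  refine tsum_congr fun n => ?_
  rw [← h n]; simp only [dcoef]; ring

end NonlinearHair

namespace NonlinearHair

/-! ### The Banach algebra of coefficient sequences -/

/-- Summable real sequences, thought of as the coefficients of `∑ uₙ (t/2)ⁿ`. -/
abbrev A : Type := lp (fun _ : ℕ => ℝ) 1

lemma A.summable (u : A) : Summable fun n => ‖u n‖ := by
  simpa using (lp.memℓp u).summable (by simp)

lemma A.norm_eq (u : A) : ‖u‖ = ∑' n, ‖u n‖ := by
  simpa using lp.norm_eq_tsum_rpow (p := 1) (by simp) u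

/-- A summable sequence as an element of `A`. -/
def mkA (u : ℕ → ℝ) (hu : Summable fun n => ‖u n‖) : A := ⟨u, memℓp_gen (by simpa using hu)⟩

@[simp] lemma mkA_apply (u : ℕ → ℝ) (hu) (n : ℕ) : mkA u hu n = u n := rfl

/-- The Cauchy product. -/
noncomputable def mulA : A →L[ℝ] A →L[ℝ] A :=
  LinearMap.mkContinuous₂
    (LinearMap.mk₂ ℝ (fun u v : A => mkA (fun n => ∑ p ∈ Finset.HasAntidiagonal.antidiagonal n, u p.1 * v p.2)
        (summable_norm_sum_mul_antidiagonal_of_summable_norm u.summable v.summable))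
      (fun u u' v => by
        ext n; simp [add_mul, Finset.sum_add_distrib])
      (fun a u v => by
        ext n; simp [Finset.mul_sum, mul_assoc])
      (fun u v v' => by
        ext n; simp [mul_add, Finset.sum_add_distrib])
      (fun a u v => by
        ext n; simp [Finset.mul_sum, mul_left_comm]))
    1 (fun u v => by
      have h1 := summable_norm_sum_mul_antidiagonal_of_summable_norm u.summable v.summable
      have h2 : Summable fun n => ∑ p ∈ Finset.HasAntidiagonal.antidiagonal n, ‖u p.1‖ * ‖v p.2‖ :=
        (summable_norm_sum_mul_antidiagonal_of_summable_norm
          (f := fun n => ‖u n‖) (g := fun n => ‖v n‖)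
          (by simpa using u.summable) (by simpa using v.summable)).of_norm
      rw [one_mul, A.norm_eq, A.norm_eq, A.norm_eq,
        tsum_mul_tsum_eq_tsum_sum_antidiagonal_of_summable_norm
          (f := fun n => ‖u n‖) (g := fun n => ‖v n‖)
          (by simpa using u.summable) (by simpa using v.summable)]
      refine Summable.tsum_le_tsum (fun n => ?_) h1 h2
      change ‖∑ p ∈ Finset.HasAntidiagonal.antidiagonal n, u p.1 * v p.2‖ ≤ _
      refine (norm_sum_le _ _).trans (le_of_eq ?_)
      simp)

lemma mulA_apply (u v : A) (n : ℕ) :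
    mulA u v n = ∑ p ∈ Finset.HasAntidiagonal.antidiagonal n, u p.1 * v p.2 := rfl

/-- The constant function one. -/
noncomputable def oneA : A := mkA (fun n => if n = 0 then 1 else 0)
  (summable_of_ne_finset_zero (s := {0}) fun n hn => by simp_all)

lemma oneA_apply (n : ℕ) : oneA n = if n = 0 then 1 else 0 := rfl

lemma one_mulA (v : A) : mulA oneA v = v := by
  ext n
  rw [mulA_apply, Finset.sum_eq_single (0, n)]
  · simp [oneA_apply]
  · rintro ⟨i, j⟩ h1 h2
    have : i ≠ 0 := by
      rintro rfl
      simp at h1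
      simp_all
    simp [oneA_apply, this]
  · simp

/-- The solution operator of the radial Poisson equation `ΔU = V`, `U(0) = 0`; in the variable
`t = ‖x‖²` this is `4tU'' + 6U' = V`, hence `tⁿ ↦ tⁿ⁺¹ / ((2n+2)(2n+3))`. -/
noncomputable def K : A →L[ℝ] A :=
  LinearMap.mkContinuous
    { toFun := fun u => mkA (fun n => n.casesOn 0 fun k => 2 / ((2 * k + 2) * (2 * k + 3)) * u k)
        (by
          rw [← summable_nat_add_iff 1]
          refine Summable.of_nonneg_of_le (fun n => norm_nonneg _) (fun n => ?_) u.summable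
          simp only [norm_mul]
          refine mul_le_of_le_one_left (norm_nonneg _) ?_
          rw [Real.norm_of_nonneg (by positivity), div_le_one (by positivity)]
          nlinarith [(Nat.cast_nonneg n : (0 : ℝ) ≤ n)])
      map_add' := fun u v => by
        ext n; cases n <;> simp [mul_add]
      map_smul' := fun a u => by
        ext n; cases n <;> simp [mul_left_comm] }
    1 (fun u => by
      rw [one_mul, A.norm_eq, A.norm_eq, Summable.tsum_eq_zero_add (A.summable _)]
      simp only [LinearMap.coe_mk, AddHom.coe_mk, mkA_apply]
      change ‖(0 : ℝ)‖ + _ ≤ _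
      rw [norm_zero, zero_add]
      have hle : ∀ n : ℕ, ‖2 / ((2 * (n : ℝ) + 2) * (2 * n + 3)) * u n‖ ≤ ‖u n‖ := fun n => by
        rw [norm_mul]
        refine mul_le_of_le_one_left (norm_nonneg _) ?_
        rw [Real.norm_of_nonneg (by positivity), div_le_one (by positivity)]
        nlinarith [(Nat.cast_nonneg n : (0 : ℝ) ≤ n)]
      exact Summable.tsum_le_tsum hle
        (Summable.of_nonneg_of_le (fun n => norm_nonneg _) hle u.summable) u.summable)

lemma K_zero (u : A) : K u 0 = 0 := rfl

lemma K_succ (u : A) (n : ℕ) : K u (n + 1) = 2 / ((2 * n + 2) * (2 * n + 3)) * u n := rfl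

lemma L_term_le (u : A) (n : ℕ) : ‖u n * ((1 / 2) ^ n / (2 * (2 * n + 3)))‖ ≤ ‖u n‖ := by
  rw [norm_mul]
  refine mul_le_of_le_one_right (norm_nonneg _) ?_
  rw [Real.norm_of_nonneg (by positivity), div_le_one (by positivity)]
  have : (1 / 2 : ℝ) ^ n ≤ 1 := pow_le_one₀ (by norm_num) (by norm_num)
  linarith [(Nat.cast_nonneg n : (0 : ℝ) ≤ n)]

lemma L_summable (u : A) : Summable fun n : ℕ => ‖u n * ((1 / 2) ^ n / (2 * (2 * n + 3)))‖ :=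
  Summable.of_nonneg_of_le (fun _ => norm_nonneg _) (L_term_le u) u.summable

/-- The derivative at `t = 1` of the function represented by `K u`. -/
noncomputable def L : A →L[ℝ] ℝ :=
  LinearMap.mkContinuous
    { toFun := fun u => ∑' n : ℕ, u n * ((1 / 2) ^ n / (2 * (2 * n + 3)))
      map_add' := fun u v => by
        rw [← (L_summable u).of_norm.tsum_add (L_summable v).of_norm]
        refine tsum_congr fun n => ?_
        rw [lp.coeFn_add, Pi.add_apply, add_mul]
      map_smul' := fun a u => by
        rw [RingHom.id_apply, smul_eq_mul, ← tsum_mul_left]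
        refine tsum_congr fun n => ?_
        rw [lp.coeFn_smul, Pi.smul_apply, smul_eq_mul, mul_assoc] }
    1 (fun u => by
      rw [one_mul, A.norm_eq]
      exact (norm_tsum_le_tsum_norm (L_summable u)).trans
        (Summable.tsum_le_tsum (L_term_le u) (L_summable u) u.summable))

lemma L_apply (u : A) : L u = ∑' n : ℕ, u n * ((1 / 2) ^ n / (2 * (2 * n + 3))) := rfl

lemma L_one : L oneA = 1 / 6 := by
  rw [L_apply, tsum_eq_single 0]
  · norm_num [oneA_apply]
  · intro n hn
    simp [oneA_apply, hn]

/-- Taylor coefficients in `t` of the function represented by `u`. -/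
noncomputable def coef (u : A) (n : ℕ) : ℝ := u n * (1 / 2) ^ n

lemma coef_good (u : A) : Good (coef u) := by
  intro r hr hr2
  refine Summable.of_nonneg_of_le (fun n => by positivity) (fun n => ?_) u.summable
  rw [coef, abs_mul, abs_pow, mul_assoc, ← mul_pow, Real.norm_eq_abs]
  refine mul_le_of_le_one_right (abs_nonneg _) (pow_le_one₀ (by positivity) ?_)
  rw [abs_of_pos (by norm_num)]
  linarith

lemma pser_mul (u v : A) {t : ℝ} (ht : |t| < 2) :
    pser (coef (mulA u v)) t = pser (coef u) t * pser (coef v) t := by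
  rw [pser, pser, pser, tsum_mul_tsum_eq_tsum_sum_antidiagonal_of_summable_norm
    ((coef_good u).summable ht) ((coef_good v).summable ht)]
  refine tsum_congr fun n => ?_
  rw [coef, mulA_apply, Finset.sum_mul, Finset.sum_mul]
  refine Finset.sum_congr rfl fun p hp => ?_
  rw [← Finset.HasAntidiagonal.mem_antidiagonal.1 hp, coef, coef, pow_add, pow_add]
  ring

lemma dcoef_L {u v : A} {a : ℝ} (h : u = a • oneA + K v) :
    pser (dcoef (coef u)) 1 = L v := by
  rw [pser, L_apply]
  refine tsum_congr fun n => ?_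
  have h1 : (2 * (n : ℝ) + 2) ≠ 0 := by positivity
  have h2 : (2 * (n : ℝ) + 3) ≠ 0 := by positivity
  simp only [dcoef, coef, h, lp.coeFn_add, lp.coeFn_smul, Pi.add_apply, Pi.smul_apply, K_succ,
    oneA_apply, smul_eq_mul]
  simp only [Nat.add_eq_zero_iff, one_ne_zero, and_false, if_false]
  field_simp
  ring

/-- The function represented by `a + K v` has radial Laplacian the one represented by `v`. -/
lemma ode_of_eq {u v : A} {a : ℝ} (h : u = a • oneA + K v) {t : ℝ} (ht : |t| < 2) :
    4 * t * pser (dcoef (dcoef (coef u))) t + 6 * pser (dcoef (coef u)) t = pser (coef v) t := by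
  refine radial_ode (coef_good u) (fun n => ?_) ht
  have h1 : (2 * (n : ℝ) + 2) ≠ 0 := by positivity
  have h2 : (2 * (n : ℝ) + 3) ≠ 0 := by positivity
  simp only [coef, h, lp.coeFn_add, lp.coeFn_smul, Pi.add_apply, Pi.smul_apply, K_succ,
    oneA_apply, smul_eq_mul]
  simp only [Nat.add_eq_zero_iff, one_ne_zero, and_false, if_false]
  field_simp
  ring

/-! ### Solving the boundary value problem -/

/-- The nonlinear map whose zeros in the first three components are the radial solutions
`Δφ = gφ`, `Δg = εφ²`, `φ(0) = 1`, `g(0) = a` with Neumann condition on `φ`; the last component is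
proportional to `ε ∫ φ²`. -/
noncomputable def theta (p : A × A × ℝ × ℝ) : A × A × ℝ × ℝ :=
  (p.1 - oneA - K (mulA p.1 p.2.1), p.2.1 - p.2.2.1 • oneA - p.2.2.2 • K (mulA p.1 p.1),
    L (mulA p.1 p.2.1), p.2.2.2 * L (mulA p.1 p.1))

lemma theta_base : theta (oneA, 0, 0, 0) = 0 := by
  simp [theta]

lemma theta_open :
    Filter.map theta (nhds (oneA, 0, 0, 0)) = nhds 0 := by
  let p₀ : A × A × ℝ × ℝ := (oneA, 0, 0, 0)
  have d1 : HasStrictFDerivAt (fun p : A × A × ℝ × ℝ => p.1)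
    (ContinuousLinearMap.fst ℝ A (A × ℝ × ℝ)) p₀ := hasStrictFDerivAt_fst
  have d234 : HasStrictFDerivAt (fun p : A × A × ℝ × ℝ => p.2)
    (ContinuousLinearMap.snd ℝ A (A × ℝ × ℝ)) p₀ := hasStrictFDerivAt_snd
  have d2 := d234.fst
  have d34 := d234.snd
  have d3 := d34.fst
  have d4 := d34.snd
  have m12 := mulA.hasStrictFDerivAt_of_bilinear d1 d2
  have m11 := mulA.hasStrictFDerivAt_of_bilinear d1 d1
  have c1 := (d1.sub_const oneA).sub (K.hasStrictFDerivAt.comp p₀ m12)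
  have c2 := (d2.sub (d3.smul_const oneA)).sub (d4.smul (K.hasStrictFDerivAt.comp p₀ m11))
  have c3 := L.hasStrictFDerivAt.comp p₀ m12
  have c4 := d4.mul (L.hasStrictFDerivAt.comp p₀ m11)
  have H : HasStrictFDerivAt theta _ p₀ := c1.prodMk (c2.prodMk (c3.prodMk c4))
  have := H.map_nhds_eq_of_surj ?_
  · rwa [theta_base] at this
  rw [LinearMap.range_eq_top]
  -- The derivative is `(f, g, a, ε) ↦ (f - K g, g - a - ε K 1, L g, ε L 1)`, with `L 1 = 1/6`;
  -- it is inverted by solving for `ε`, `a`, `g`, `f` in this order.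
  rintro ⟨w1, w2, w3, w4⟩
  let e : ℝ := 6 * w4
  let a : ℝ := 6 * (w3 - e * L (K oneA) - L w2)
  let g : A := a • oneA + e • K oneA + w2
  refine ⟨(w1 + K g, g, a, e), ?_⟩
  have hLg : L g = w3 := by
    simp only [g, map_add, map_smul, L_one, smul_eq_mul, a]; ring
  simp [p₀, one_mulA, hLg, L_one]
  refine ⟨?_, ?_⟩
  · simp only [g]; abel
  · simp [e]

/-- Open mapping at the trivial solution produces a radial solution for every small value `s` of
the normalised mass. The unknown `φ` of `theta` is rescaled to `f = √ε φ`, which turns the system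
into `Δf = gf`, `Δg = f²`; this needs `ε ≥ 0`, which holds because `L (φ²)` is close to `L 1 > 0`. -/
lemma exists_solution : ∃ s₀ > 0, ∀ s : ℝ, 0 ≤ s → s < s₀ →
    ∃ (f g : A) (a b : ℝ), f = b • oneA + K (mulA f g) ∧ g = a • oneA + K (mulA f f) ∧
      L (mulA f g) = 0 ∧ L (mulA f f) = s := by
  have hpos : ∀ᶠ p : A × A × ℝ × ℝ in nhds (oneA, 0, 0, 0), 0 < L (mulA p.1 p.1) := by
    have hc : Continuous fun p : A × A × ℝ × ℝ => L (mulA p.1 p.1) := by fun_prop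
    refine hc.continuousAt.eventually (lt_mem_nhds ?_)
    simp [one_mulA, L_one]
  have h1 := Filter.image_mem_map (m := theta) hpos
  rw [theta_open] at h1
  have hc : Filter.Tendsto (fun s : ℝ => ((0, 0, 0, s) : A × A × ℝ × ℝ)) (nhds 0) (nhds 0) := by
    have : Continuous (fun s : ℝ => ((0, 0, 0, s) : A × A × ℝ × ℝ)) := by fun_prop
    exact this.tendsto 0
  obtain ⟨s₀, hs₀, hs⟩ := Metric.eventually_nhds_iff.1 (hc.eventually h1)
  refine ⟨s₀, hs₀, fun s h0 hlt => ?_⟩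
  obtain ⟨⟨f, g, a, ε⟩, hp, heq⟩ := hs (y := s) (by simpa [abs_of_nonneg h0] using hlt)
  simp only [theta, Prod.mk.injEq] at heq
  obtain ⟨e1, e2, e3, e4⟩ := heq
  have hε : 0 ≤ ε := by
    have hp' : 0 < L (mulA f f) := hp
    by_contra hneg
    have := mul_neg_of_neg_of_pos (not_le.1 hneg) hp'
    linarith
  have hsq : mulA (√ε • f) (√ε • f) = ε • mulA f f := by
    rw [map_smul, map_smul, smul_apply, smul_smul, Real.mul_self_sqrt hε]
  have hf : f = oneA + K (mulA f g) := by
    rw [← sub_eq_zero, ← e1]; abel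
  refine ⟨√ε • f, g, a, √ε, ?_, ?_, ?_, ?_⟩
  · rw [map_smul, smul_apply, map_smul, ← smul_add, ← hf]
  · rw [hsq, map_smul, ← sub_eq_zero, ← e2]; abel
  · rw [map_smul, smul_apply, map_smul, e3, smul_zero]
  · rw [hsq, map_smul, smul_eq_mul, e4]

end NonlinearHair

namespace NonlinearHair

/-! ### Radial functions on the unit ball of `ℝ³` -/

local notation "E3" => EuclideanSpace ℝ (Fin 3)

/-- The radial function `x ↦ U(‖x‖²)`. -/
noncomputable def rad (c : ℕ → ℝ) (x : E3) : ℝ := pser c (‖x‖ ^ 2)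

lemma abs_norm_sq_lt {x : E3} (hx : ‖x‖ ≤ 1) : |‖x‖ ^ 2| < 2 := by
  rw [abs_of_nonneg (by positivity)]
  nlinarith [norm_nonneg x]

lemma rad_hasFDerivAt {c : ℕ → ℝ} (hc : Good c) {x : E3} (hx : ‖x‖ ≤ 1) :
    HasFDerivAt (rad c) (rad (dcoef c) x • ((2 : ℝ) • innerSL ℝ x)) x := by
  have h := (hc.hasDerivAt (abs_norm_sq_lt hx)).comp_hasFDerivAt x
    (hasStrictFDerivAt_norm_sq x).hasFDerivAt
  refine h.congr_fderiv ?_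
  ext y
  simp [rad]

lemma rad_contDiffOn {c : ℕ → ℝ} (hc : Good c) :
    ContDiffOn ℝ 2 (rad c) (Metric.closedBall 0 1) := by
  have h : ContDiffOn ℝ 2 (pser c) (Set.Ioo (-2) 2) := mod_cast hc.contDiffOn 2
  exact h.comp (contDiff_norm_sq ℝ).contDiffOn fun x hx =>
    abs_lt.1 (abs_norm_sq_lt (by simpa using hx))

lemma rad_laplacian {c : ℕ → ℝ} (hc : Good c) {x : E3} (hx : ‖x‖ < 1) :
    euclideanLaplacian3 (rad c) x = 4 * ‖x‖ ^ 2 * pser (dcoef (dcoef c)) (‖x‖ ^ 2)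
      + 6 * pser (dcoef c) (‖x‖ ^ 2) := by
  have key : ∀ i : Fin 3, fderiv ℝ (fun y => fderiv ℝ (rad c) y (EuclideanSpace.single i 1)) x
      (EuclideanSpace.single i 1) = 4 * x i ^ 2 * rad (dcoef (dcoef c)) x
        + 2 * rad (dcoef c) x := by
    intro i
    have h1 : (fun y => fderiv ℝ (rad c) y (EuclideanSpace.single i 1)) =ᶠ[nhds x]
        fun y => rad (dcoef c) y * (2 * y i) := by
      filter_upwards [Metric.isOpen_ball.mem_nhds (mem_ball_zero_iff.2 hx)] with y hy
      rw [(rad_hasFDerivAt hc (mem_ball_zero_iff.1 hy).le).fderiv]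
      simp [EuclideanSpace.inner_single_right]
    have h2 : HasFDerivAt (fun y : E3 => 2 * y i)
        ((2 : ℝ) • (EuclideanSpace.proj i : E3 →L[ℝ] ℝ)) x :=
      (EuclideanSpace.proj i : E3 →L[ℝ] ℝ).hasFDerivAt.const_mul 2
    have h3 : HasFDerivAt (fun y : E3 => rad (dcoef c) y * (2 * y i)) _ x :=
      (rad_hasFDerivAt hc.dcoef hx.le).mul h2
    rw [h1.fderiv_eq, h3.fderiv]
    simp [EuclideanSpace.inner_single_right]
    ring
  have hn : ‖x‖ ^ 2 = x 0 ^ 2 + x 1 ^ 2 + x 2 ^ 2 := by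
    rw [EuclideanSpace.norm_sq_eq, Fin.sum_univ_three]; simp
  simp only [euclideanLaplacian3, Fin.sum_univ_three, key]
  change _ = 4 * ‖x‖ ^ 2 * rad (dcoef (dcoef c)) x + 6 * rad (dcoef c) x
  rw [hn]; ring

lemma rad_normal {c : ℕ → ℝ} (hc : Good c) {x : E3} (hx : ‖x‖ = 1) :
    fderivWithin ℝ (rad c) (Metric.closedBall 0 1) x x = 2 * pser (dcoef c) 1 := by
  have hu : UniqueDiffWithinAt ℝ (Metric.closedBall (0 : E3) 1) x :=
    uniqueDiffOn_convex (convex_closedBall 0 1) (by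
      rw [interior_closedBall _ one_ne_zero]; exact ⟨0, by simp⟩) x (by simp [hx])
  rw [((rad_hasFDerivAt hc hx.le).hasFDerivWithinAt).fderivWithin hu]
  simp [rad, hx]
  ring

/-- The divergence theorem for a radial function: `∫ ΔU` is the flux of `∇U` through the sphere.
The factor `6 |B₁|` is `2 · |∂B₁|`, as `∂ᵣ U(r²) = 2U'(1)` at `r = 1`. -/
lemma rad_integral {c v : ℕ → ℝ} (hc : Good c) (hv : Good v)
    (h : ∀ t, |t| < 2 → 4 * t * pser (dcoef (dcoef c)) t + 6 * pser (dcoef c) t = pser v t) :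
    ∫ x in Metric.ball (0 : E3) 1, rad v x =
      6 * volume.real (Metric.ball (0 : E3) 1) * pser (dcoef c) 1 := by
  have hsq : ∀ y ∈ Set.uIcc (0 : ℝ) 1, |y ^ 2| < 2 := fun y hy => by
    rw [Set.uIcc_of_le zero_le_one] at hy
    rw [abs_of_nonneg (by positivity)]; nlinarith [hy.1, hy.2]
  have hd : ∀ y ∈ Set.uIcc (0 : ℝ) 1, HasDerivAt (fun y => 2 * y ^ 3 * pser (dcoef c) (y ^ 2))
      (y ^ 2 * pser v (y ^ 2)) y := fun y hy => by
    have h1 : HasDerivAt (fun y => pser (dcoef c) (y ^ 2)) _ y :=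
      HasDerivAt.comp (h := fun y : ℝ => y ^ 2) y (hc.dcoef.hasDerivAt (hsq y hy))
        (hasDerivAt_pow 2 y)
    have h2 := ((hasDerivAt_pow 3 y).const_mul 2).mul h1
    refine h2.congr_deriv ?_
    rw [← h _ (hsq y hy)]
    simp
    ring
  have hcont : ContinuousOn (fun y => y ^ 2 * pser v (y ^ 2)) (Set.uIcc (0 : ℝ) 1) :=
    (continuousOn_pow 2).mul (hv.continuousOn.comp (continuousOn_pow 2)
      fun y hy => abs_lt.1 (hsq y hy))
  have hI := intervalIntegral.integral_eq_sub_of_hasDerivAt hd hcont.intervalIntegrable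
  have hpol := integral_fun_norm_addHaar (volume : Measure E3)
    ((Set.Iio (1 : ℝ)).indicator fun y => pser v (y ^ 2))
  have hl : ∫ x in Metric.ball (0 : E3) 1, rad v x =
      ∫ x : E3, (Set.Iio (1 : ℝ)).indicator (fun y => pser v (y ^ 2)) ‖x‖ := by
    rw [← integral_indicator Metric.isOpen_ball.measurableSet]
    congr 1
    ext x
    by_cases hx : ‖x‖ < 1 <;> simp [Set.indicator, hx, rad]
  have hr : ∫ y in Set.Ioi (0 : ℝ), y ^ 2 * (Set.Iio (1 : ℝ)).indicator (fun y => pser v (y ^ 2)) y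
      = ∫ y in (0 : ℝ)..1, y ^ 2 * pser v (y ^ 2) := by
    rw [intervalIntegral.integral_of_le zero_le_one, integral_Ioc_eq_integral_Ioo,
      ← Set.Ioi_inter_Iio, ← setIntegral_indicator measurableSet_Iio]
    congr 1
    ext y
    by_cases hy : y < 1 <;> simp [Set.indicator, hy]
  rw [hl, hpol]
  simp only [finrank_euclideanSpace, Fintype.card_fin, smul_eq_mul, nsmul_eq_mul]
  norm_num only [Nat.reduceSub]
  rw [hr, hI]
  norm_num
  ring

end NonlinearHair

open NonlinearHair in
/-- The model nonlinear eigenvalue problem: "linear hair" can be upgraded to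
"nonlinear hair". -/
theorem model_problem_nonlinear_hair :
    ∃ δ₀ : ℝ, 0 < δ₀ ∧ ∀ δ : ℝ, 0 ≤ δ → δ < δ₀ →
      ∃ (h₁ h₂ : EuclideanSpace ℝ (Fin 3) → ℝ) (κ : ℝ),
        ContDiffOn ℝ 2 h₁ (Metric.closedBall 0 1) ∧
        ContDiffOn ℝ 2 h₂ (Metric.closedBall 0 1) ∧
        (∀ x ∈ Metric.ball (0 : EuclideanSpace ℝ (Fin 3)) 1,
          euclideanLaplacian3 h₁ x = (h₂ x) ^ 2) ∧
        (∀ x : EuclideanSpace ℝ (Fin 3), ‖x‖ = 1 → h₁ x = 0) ∧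
        (∀ x ∈ Metric.ball (0 : EuclideanSpace ℝ (Fin 3)) 1,
          euclideanLaplacian3 h₂ x - (κ + h₁ x) * h₂ x = 0) ∧
        (∀ x : EuclideanSpace ℝ (Fin 3), ‖x‖ = 1 →
          fderivWithin ℝ h₂ (Metric.closedBall 0 1) x x = 0) ∧
        (∫ x in Metric.ball (0 : EuclideanSpace ℝ (Fin 3)) 1, (h₂ x) ^ 2) = δ ^ 2 := by
  obtain ⟨s₀, hs₀, hsol⟩ := exists_solution
  set C : ℝ := 6 * volume.real (Metric.ball (0 : EuclideanSpace ℝ (Fin 3)) 1) with hCdef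
  have hC : 0 < C := by
    have : 0 < volume.real (Metric.ball (0 : EuclideanSpace ℝ (Fin 3)) 1) :=
      ENNReal.toReal_pos (Metric.measure_ball_pos _ _ one_pos).ne' measure_ball_lt_top.ne
    positivity
  refine ⟨√(C * s₀), Real.sqrt_pos.2 (by positivity), fun δ hδ hlt => ?_⟩
  have hδ2 : δ ^ 2 < C * s₀ := (Real.lt_sqrt hδ).1 hlt
  obtain ⟨f, g, a, b, hf, hg, hLfg, hLff⟩ := hsol (δ ^ 2 / C) (by positivity)
    (by rw [div_lt_iff₀ hC]; linarith)
  have gf := coef_good f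
  have gg := coef_good g
  have lap_sub : ∀ (r : ℝ) (u : EuclideanSpace ℝ (Fin 3) → ℝ) (x),
      euclideanLaplacian3 (fun y => u y - r) x = euclideanLaplacian3 u x := by
    intro r u x
    simp only [euclideanLaplacian3, fderiv_sub_const]
  -- `g = κ + h₁` absorbs the eigenvalue, so `κ` is the boundary value of `g`.
  refine ⟨fun x => rad (coef g) x - pser (coef g) 1, rad (coef f), pser (coef g) 1,
    (rad_contDiffOn gg).sub contDiffOn_const, rad_contDiffOn gf, ?_, ?_, ?_, ?_, ?_⟩
  · intro x hx
    have hx1 : ‖x‖ < 1 := mem_ball_zero_iff.1 hx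
    have ht := abs_norm_sq_lt hx1.le
    rw [lap_sub, rad_laplacian gg hx1, ode_of_eq hg ht, pser_mul f f ht, rad, sq (pser _ _)]
  · intro x hx
    simp [rad, hx]
  · intro x hx
    have hx1 : ‖x‖ < 1 := mem_ball_zero_iff.1 hx
    have ht := abs_norm_sq_lt hx1.le
    rw [rad_laplacian gf hx1, ode_of_eq hf ht, pser_mul f g ht]
    simp only [rad]
    ring
  · intro x hx
    rw [rad_normal gf hx, dcoef_L hf, hLfg, mul_zero]
  · have hint := rad_integral gg (coef_good (mulA f f)) (fun t ht => ode_of_eq hg ht)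
    rw [dcoef_L hg, hLff, ← hCdef] at hint
    have hcongr : ∫ x in Metric.ball (0 : EuclideanSpace ℝ (Fin 3)) 1, (rad (coef f) x) ^ 2 =
        ∫ x in Metric.ball (0 : EuclideanSpace ℝ (Fin 3)) 1, rad (coef (mulA f f)) x := by
      refine setIntegral_congr_fun Metric.isOpen_ball.measurableSet fun x hx => ?_
      have ht := abs_norm_sq_lt (mem_ball_zero_iff.1 hx).le
      simp only [rad, pser_mul f f ht, sq (pser _ _)]
    rw [hcongr, hint]
    field_simp
end

section
/- Let 𝓛, 𝓠, 𝓟 be real Banach spaces and let ε > 0. Let 𝔗 be a map assigning to every triple (l, q, p) ∈ 𝓛 × 𝓠 × 𝓟 with ‖l‖ ≤ ε, ‖q‖ ≤ ε, ‖p‖ ≤ ε an element 𝔗(l,q,p) ∈ 𝓛 with ‖𝔗(l,q,p)‖ ≤ ε. Assume there exists a constant D > 0 such that for all such triples: (i) ‖𝔗(l,q,p)‖ ≤ D(‖l‖² + ‖q‖²), and (ii) ‖𝔗(l₁,q₁,p₁) − 𝔗(l₂,q₂,p₂)‖ ≤ D[(‖l₁‖ + ‖l₂‖)‖l₁ − l₂‖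 + (‖q₁‖ + ‖q₂‖)‖q₁ − q₂‖ + ‖p₁ − p₂‖]. Then there exist ε′ with 0 < ε′ ≤ ε and a map 𝔖 assigning to each pair (q, p) with ‖q‖ ≤ ε′, ‖p‖ ≤ ε′ an element 𝔖(q,p) ∈ 𝓛 with ‖𝔖(q,p)‖ ≤ ε′, such that: (1) 𝔗(𝔖(q,p), q, p) = 𝔖(q,p); (2) there is a constant D′ > 0 with ‖𝔖(q,p)‖ ≤ D′‖q‖² for all such (q,p); (3) there is a constant D′′ > 0 with ‖𝔖(q₁,p₁) − 𝔖(q₂,p₂)‖ ≤ D′′[(‖q₁‖ + ‖q₂‖)‖q₁ − q₂‖ + ‖p₁ − p₂‖] for all such pairs. -/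
/-! On a ball of radius `r = min ε (1 / (4 * D))` one has `D * r ≤ 1 / 4`, so for fixed `q`, `p` in
the `r`-balls the map `T · q p` sends the `r`-ball of `L` to itself (`D * (r ^ 2 + r ^ 2) ≤ r / 2`) and
is a contraction there with constant `D * (r + r) ≤ 1 / 2`. The Banach fixed point theorem gives `S q p`.
Inserting the fixed points into the two estimates for `T`, the terms involving `S` on the right-hand
side have coefficient at most `1 / 2` and are absorbed on the left, so both constants can be
taken to be `2 * D`. -/

/-- The basic fixed point lemma (Lemma 4.1): a quadratically small map of the
`ε`-ball of a Banach space `L`, depending Lipschitz-continuously on parameters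
`q ∈ Q` (genuinely nonlinear) and `p ∈ P`, has a fixed point ("solution map")
depending continuously on the parameters. -/
theorem fixed_point_lemma_basic
    {L Q P : Type*}
    [NormedAddCommGroup L] [NormedSpace ℝ L] [CompleteSpace L]
    [NormedAddCommGroup Q] [NormedSpace ℝ Q] [CompleteSpace Q]
    [NormedAddCommGroup P] [NormedSpace ℝ P] [CompleteSpace P]
    (ε : ℝ) (hε : 0 < ε) (T : L → Q → P → L)
    (hTball : ∀ l q p, ‖l‖ ≤ ε → ‖q‖ ≤ ε → ‖p‖ ≤ ε → ‖T l q p‖ ≤ ε)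
    (D : ℝ) (hD : 0 < D)
    (hquad : ∀ l q p, ‖l‖ ≤ ε → ‖q‖ ≤ ε → ‖p‖ ≤ ε →
      ‖T l q p‖ ≤ D * (‖l‖ ^ 2 + ‖q‖ ^ 2))
    (hlip : ∀ l₁ q₁ p₁ l₂ q₂ p₂, ‖l₁‖ ≤ ε → ‖q₁‖ ≤ ε → ‖p₁‖ ≤ ε →
      ‖l₂‖ ≤ ε → ‖q₂‖ ≤ ε → ‖p₂‖ ≤ ε →
      ‖T l₁ q₁ p₁ - T l₂ q₂ p₂‖ ≤
        D * ((‖l₁‖ + ‖l₂‖) * ‖l₁ - l₂‖ + (‖q₁‖ + ‖q₂‖) * ‖q₁ - q₂‖ + ‖p₁ - p₂‖)) :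
    ∃ ε' : ℝ, 0 < ε' ∧ ε' ≤ ε ∧ ∃ S : Q → P → L,
      (∀ q p, ‖q‖ ≤ ε' → ‖p‖ ≤ ε' →
        ‖S q p‖ ≤ ε' ∧ T (S q p) q p = S q p) ∧
      (∃ D' : ℝ, 0 < D' ∧ ∀ q p, ‖q‖ ≤ ε' → ‖p‖ ≤ ε' →
        ‖S q p‖ ≤ D' * ‖q‖ ^ 2) ∧
      (∃ D'' : ℝ, 0 < D'' ∧ ∀ q₁ p₁ q₂ p₂,
        ‖q₁‖ ≤ ε' → ‖p₁‖ ≤ ε' → ‖q₂‖ ≤ ε' → ‖p₂‖ ≤ ε' →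
        ‖S q₁ p₁ - S q₂ p₂‖ ≤ D'' * ((‖q₁‖ + ‖q₂‖) * ‖q₁ - q₂‖ + ‖p₁ - p₂‖)) := by
  obtain ⟨r, hr, hrε, hDr⟩ : ∃ r : ℝ, 0 < r ∧ r ≤ ε ∧ D * r ≤ 1 / 4 := by
    refine ⟨min ε (1 / (4 * D)), lt_min hε (by positivity), min_le_left _ _, ?_⟩
    calc D * min ε (1 / (4 * D)) ≤ D * (1 / (4 * D)) := by gcongr; exact min_le_right _ _
      _ = 1 / 4 := by field_simp
  have hcontr : ∀ l₁ l₂ : L, ‖l₁‖ ≤ r → ‖l₂‖ ≤ r →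
      D * ((‖l₁‖ + ‖l₂‖) * ‖l₁ - l₂‖) ≤ 1 / 2 * ‖l₁ - l₂‖ := by
    intro l₁ l₂ h₁ h₂
    rw [← mul_assoc]
    gcongr
    nlinarith
  have hex : ∀ q p, ∃ l : L, ‖q‖ ≤ r → ‖p‖ ≤ r → ‖l‖ ≤ r ∧ T l q p = l := by
    intro q p
    by_cases hqp : ‖q‖ ≤ r ∧ ‖p‖ ≤ r
    · obtain ⟨hq, hp⟩ := hqp
      have hmaps : Set.MapsTo (fun l => T l q p) (Metric.closedBall 0 r)
          (Metric.closedBall 0 r) := by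
        intro l hl
        rw [mem_closedBall_zero_iff] at hl ⊢
        have hT := hquad l q p (hl.trans hrε) (hq.trans hrε) (hp.trans hrε)
        have hl2 : ‖l‖ ^ 2 ≤ r ^ 2 := by gcongr
        have hq2 : ‖q‖ ^ 2 ≤ r ^ 2 := by gcongr
        have hsum : D * (‖l‖ ^ 2 + ‖q‖ ^ 2) ≤ D * (r ^ 2 + r ^ 2) := by gcongr
        nlinarith
      have hf : ContractingWith (1 / 2) (hmaps.restrict _ _ _) := by
        refine ⟨by rw [← NNReal.coe_lt_coe]; norm_num, LipschitzWith.of_dist_le_mul ?_⟩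
        rintro ⟨l₁, h₁⟩ ⟨l₂, h₂⟩
        rw [mem_closedBall_zero_iff] at h₁ h₂
        have hT := hlip l₁ q p l₂ q p (h₁.trans hrε) (hq.trans hrε) (hp.trans hrε)
          (h₂.trans hrε) (hq.trans hrε) (hp.trans hrε)
        simp only [sub_self, norm_zero, mul_zero, add_zero] at hT
        have h := hT.trans (hcontr l₁ l₂ h₁ h₂)
        simpa [Subtype.dist_eq, dist_eq_norm] using h
      obtain ⟨l, hl, hfix, -⟩ := ContractingWith.exists_fixedPoint'
        Metric.isClosed_closedBall.isComplete hmaps hf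
        (Metric.mem_closedBall_self hr.le) (edist_ne_top _ _)
      exact ⟨l, fun _ _ => ⟨mem_closedBall_zero_iff.mp hl, hfix⟩⟩
    · exact ⟨0, fun hq hp => absurd ⟨hq, hp⟩ hqp⟩
  choose S hS using hex
  refine ⟨r, hr, hrε, S, hS, ⟨2 * D, by positivity, ?_⟩, ⟨2 * D, by positivity, ?_⟩⟩
  · intro q p hq hp
    obtain ⟨hb, hfix⟩ := hS q p hq hp
    have hT := hquad (S q p) q p (hb.trans hrε) (hq.trans hrε) (hp.trans hrε)
    rw [hfix] at hT
    have habs : D * ‖S q p‖ * ‖S q p‖ ≤ 1 / 4 * ‖S q p‖ := by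
      gcongr
      nlinarith
    have hn := norm_nonneg (S q p)
    linarith
  · intro q₁ p₁ q₂ p₂ hq₁ hp₁ hq₂ hp₂
    obtain ⟨hb₁, hfix₁⟩ := hS q₁ p₁ hq₁ hp₁
    obtain ⟨hb₂, hfix₂⟩ := hS q₂ p₂ hq₂ hp₂
    have hT := hlip (S q₁ p₁) q₁ p₁ (S q₂ p₂) q₂ p₂ (hb₁.trans hrε) (hq₁.trans hrε)
      (hp₁.trans hrε) (hb₂.trans hrε) (hq₂.trans hrε) (hp₂.trans hrε)
    rw [hfix₁, hfix₂] at hT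
    have habs := hcontr (S q₁ p₁) (S q₂ p₂) hb₁ hb₂
    linarith
end

section
/- Let 𝓛, 𝓠, 𝓛̃, 𝓝 be real Banach spaces, let ι : 𝓝 → 𝓛̃ and L : 𝓛 → 𝓛̃ be linear maps, and let ε > 0. Let N be a map assigning to each pair (l, q) ∈ 𝓛 × 𝓠 with ‖l‖ ≤ ε, ‖q‖ ≤ ε an element N(l,q) ∈ 𝓝. Assume: (i) there is a bounded linear map L⁻¹ : 𝓝 → 𝓛 such that L(L⁻¹(H)) = ι(H) for every H ∈ 𝓝; (ii) there is D > 0 with ‖N(l,q)‖_𝓝 ≤ D(‖l‖² + ‖q‖²) for all such pairs; (iii) there is D > 0 with ‖N(l₁,q₁) − N(l₂,q₂)‖_𝓝 ≤ D[(‖l₁‖ + ‖l₂‖)‖l₁ − l₂‖ + (‖q₁‖ + ‖q₂‖)‖q₁ − q₂‖] for all such pairs. Then there exist ε′ with 0 < ε′ ≤ ε and a 'solution map' 𝔖 assigning to each q with ‖q‖ ≤ ε′ an element 𝔖(q) ∈ 𝓛 with ‖𝔖(q)‖ ≤ ε′, such that: (1) L(𝔖(q)) = ι(N(𝔖(q),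 q)) (i.e. the equation L(l) − N(l,q) = 0 is solved); (2) there is D′ > 0 with ‖𝔖(q)‖ ≤ D′‖q‖²; (3) there is D′ > 0 with ‖𝔖(q₁) − 𝔖(q₂)‖ ≤ D′(‖q₁‖ + ‖q₂‖)‖q₁ − q₂‖. -/
/-!
A solution of `L l = ι (N (l, q))` is obtained as a fixed point of `l ↦ L⁻¹ (N (l, q))`. With
`K = D (‖L⁻¹‖ + 1)`, this map inherits the quadratic and Lipschitz estimates of `N` with constant
`K`. Taking `ε' = min ε (1 / (4 K))`, so that `K ε' ≤ 1/4`, it maps the closed `ε'`-ball into itself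
and is a `1/2`-contraction there, so Banach's theorem gives the solution map. Both bounds on the
solution map follow by inserting the fixed point equation into the estimates for `L⁻¹ ∘ N` and
absorbing the `l`-terms, whose coefficient is at most `1/2`, into the left-hand side.
-/

/-- The fixed point lemma (Lemma 4.2) for solving quasilinear equations
`L(l) = N(l, q)`: given a right inverse `L⁻¹` of the linear operator `L`
(defined on a Banach space `𝓝` mapped into `𝓛̃` by `ι`) and quadratic
estimates on the nonlinearity `N`, there is a solution map `𝔖` with
continuous nonlinear dependence on the parameter `q`. -/
theorem fixed_point_lemma_quasilinear
    {L Q Lt N : Type*}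
    [NormedAddCommGroup L] [NormedSpace ℝ L] [CompleteSpace L]
    [NormedAddCommGroup Q] [NormedSpace ℝ Q] [CompleteSpace Q]
    [NormedAddCommGroup Lt] [NormedSpace ℝ Lt] [CompleteSpace Lt]
    [NormedAddCommGroup N] [NormedSpace ℝ N] [CompleteSpace N]
    (ι : N →ₗ[ℝ] Lt) (Lop : L →ₗ[ℝ] Lt) (ε : ℝ) (hε : 0 < ε)
    (Nop : L → Q → N)
    (Linv : N →L[ℝ] L) (hLinv : ∀ H : N, Lop (Linv H) = ι H)
    (D : ℝ) (hD : 0 < D)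
    (hquad : ∀ l q, ‖l‖ ≤ ε → ‖q‖ ≤ ε → ‖Nop l q‖ ≤ D * (‖l‖ ^ 2 + ‖q‖ ^ 2))
    (hlip : ∀ l₁ q₁ l₂ q₂, ‖l₁‖ ≤ ε → ‖q₁‖ ≤ ε → ‖l₂‖ ≤ ε → ‖q₂‖ ≤ ε →
      ‖Nop l₁ q₁ - Nop l₂ q₂‖ ≤
        D * ((‖l₁‖ + ‖l₂‖) * ‖l₁ - l₂‖ + (‖q₁‖ + ‖q₂‖) * ‖q₁ - q₂‖)) :
    ∃ ε' : ℝ, 0 < ε' ∧ ε' ≤ ε ∧ ∃ S : Q → L,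
      (∀ q, ‖q‖ ≤ ε' →
        ‖S q‖ ≤ ε' ∧ Lop (S q) = ι (Nop (S q) q)) ∧
      (∃ D' : ℝ, 0 < D' ∧ ∀ q, ‖q‖ ≤ ε' → ‖S q‖ ≤ D' * ‖q‖ ^ 2) ∧
      (∃ D' : ℝ, 0 < D' ∧ ∀ q₁ q₂, ‖q₁‖ ≤ ε' → ‖q₂‖ ≤ ε' →
        ‖S q₁ - S q₂‖ ≤ D' * (‖q₁‖ + ‖q₂‖) * ‖q₁ - q₂‖) := by
  set K : ℝ := D * (‖Linv‖ + 1) with hK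
  have hKpos : 0 < K := by positivity
  have hop : ∀ (H : N) (b : ℝ), ‖H‖ ≤ D * b → ‖Linv H‖ ≤ K * b := by
    intro H b hb
    calc ‖Linv H‖ ≤ ‖Linv‖ * ‖H‖ := Linv.le_opNorm H
      _ ≤ (‖Linv‖ + 1) * ‖H‖ := by gcongr; linarith
      _ ≤ (‖Linv‖ + 1) * (D * b) := by gcongr
      _ = K * b := by rw [hK]; ring
  set e : ℝ := min ε (1 / (4 * K)) with he
  have hepos : 0 < e := by positivity
  have heε : e ≤ ε := min_le_left _ _
  have hKe : K * e ≤ 1 / 4 := by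
    calc K * e ≤ K * (1 / (4 * K)) := by gcongr; exact min_le_right _ _
      _ = 1 / 4 := by field_simp
  have hTquad : ∀ l q, ‖l‖ ≤ e → ‖q‖ ≤ e →
      ‖Linv (Nop l q)‖ ≤ 1 / 4 * ‖l‖ + K * ‖q‖ ^ 2 := by
    intro l q hl hq
    have h₁ := hop _ _ (hquad l q (hl.trans heε) (hq.trans heε))
    have h₂ : K * ‖l‖ * ‖l‖ ≤ 1 / 4 * ‖l‖ := by
      gcongr
      exact (mul_le_mul_of_nonneg_left hl hKpos.le).trans hKe
    linarith
  have hTlip : ∀ l₁ q₁ l₂ q₂, ‖l₁‖ ≤ e → ‖q₁‖ ≤ e → ‖l₂‖ ≤ e → ‖q₂‖ ≤ e →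
      ‖Linv (Nop l₁ q₁) - Linv (Nop l₂ q₂)‖ ≤
        1 / 2 * ‖l₁ - l₂‖ + K * ((‖q₁‖ + ‖q₂‖) * ‖q₁ - q₂‖) := by
    intro l₁ q₁ l₂ q₂ hl₁ hq₁ hl₂ hq₂
    have h₁ := hop _ _ (hlip l₁ q₁ l₂ q₂ (hl₁.trans heε) (hq₁.trans heε) (hl₂.trans heε)
      (hq₂.trans heε))
    rw [map_sub] at h₁
    have h₂ : K * (‖l₁‖ + ‖l₂‖) * ‖l₁ - l₂‖ ≤ 1 / 2 * ‖l₁ - l₂‖ := by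
      gcongr
      have := mul_le_mul_of_nonneg_left (add_le_add hl₁ hl₂) hKpos.le
      linarith
    linarith
  have hfix : ∀ q : Q, ∃ l : L, ‖q‖ ≤ e → ‖l‖ ≤ e ∧ Linv (Nop l q) = l := by
    intro q
    by_cases hq : ‖q‖ ≤ e
    swap
    · exact ⟨0, fun h => absurd h hq⟩
    have hmaps : Set.MapsTo (fun l => Linv (Nop l q)) (Metric.closedBall 0 e)
        (Metric.closedBall 0 e) := by
      intro l hl
      rw [mem_closedBall_zero_iff] at hl ⊢
      have h₁ := hTquad l q hl hq
      have h₂ : K * ‖q‖ ^ 2 ≤ 1 / 4 * e := by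
        calc K * ‖q‖ ^ 2 ≤ K * e ^ 2 := by gcongr
          _ = K * e * e := by ring
          _ ≤ 1 / 4 * e := by gcongr
      linarith
    have hcontr : ContractingWith (1 / 2) (hmaps.restrict _ _ _) := by
      refine ⟨by norm_num, LipschitzWith.of_dist_le_mul ?_⟩
      rintro ⟨x, hx⟩ ⟨y, hy⟩
      rw [mem_closedBall_zero_iff] at hx hy
      simpa [Subtype.dist_eq, dist_eq_norm] using hTlip x q y q hx hq hy hq
    obtain ⟨l, hl, hfixed, -⟩ := hcontr.exists_fixedPoint' Metric.isClosed_closedBall.isComplete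
      hmaps (Metric.mem_closedBall_self hepos.le) (edist_ne_top _ _)
    exact ⟨l, fun _ => ⟨mem_closedBall_zero_iff.mp hl, hfixed⟩⟩
  choose S hS using hfix
  refine ⟨e, hepos, heε, S, ?_, ⟨2 * K, by positivity, ?_⟩, ⟨2 * K, by positivity, ?_⟩⟩
  · intro q hq
    obtain ⟨hle, hf⟩ := hS q hq
    refine ⟨hle, ?_⟩
    rw [← hLinv, hf]
  · intro q hq
    obtain ⟨hle, hf⟩ := hS q hq
    have h := hTquad (S q) q hle hq
    rw [hf] at h
    have : 0 ≤ K * ‖q‖ ^ 2 := by positivity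
    linarith
  · intro q₁ q₂ hq₁ hq₂
    obtain ⟨hle₁, hf₁⟩ := hS q₁ hq₁
    obtain ⟨hle₂, hf₂⟩ := hS q₂ hq₂
    have h := hTlip (S q₁) q₁ (S q₂) q₂ hle₁ hq₁ hle₂ hq₂
    rw [hf₁, hf₂] at h
    linarith
end

section
/- Let F : ℝ → ℝ and define f : ℝ² → ℝ by f(x, y) = F(√(x² + y²)). Suppose f is twice continuously differentiable on ℝ². Then for every point (x₀, y₀) ∈ ℝ² with (x₀, y₀) ≠ (0, 0), writing r₀ = √(x₀² + y₀²), one has r₀⁻¹ · F′(r₀) = (∂²f/∂x²)(0, r₀), i.e. the radial derivative divided by the radius at (x₀, y₀) equals the second partial derivative of f in the first coordinate direction evaluated at the point (0, r₀). -/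
/-!
The slice `g s = f (s, 0) = F |s|` is differentiable with continuous derivative and agrees with `F`
on `(0, ∞)`. Since `f (x, r) = g (√(x² + r²))`, the chain rule gives `∂ₓ f (x, r) = x * h x` with
`h x = g' (√(x² + r²)) / √(x² + r²)`. As `h` is continuous at `0`, the derivative of `x * h x` at
`0` is `h 0 = g' r / r = F' r / r`.
-/

/-- The product rule at a zero of the first factor: continuity of `h` suffices. -/
lemma hasDerivAt_id_mul_zero {h : ℝ → ℝ} (hh : ContinuousAt h 0) :
    HasDerivAt (fun x => x * h x) (h 0) 0 := by
  rw [hasDerivAt_iff_tendsto_slope]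
  refine (hh.tendsto.mono_left nhdsWithin_le_nhds).congr' ?_
  filter_upwards [self_mem_nhdsWithin] with x hx
  have hx : x ≠ 0 := hx
  simp [slope_def_field, hx]

/-- Lemma `firstdecay`: for a `C²` spherically symmetric function
`f(x,y) = F(√(x²+y²))` on `ℝ²`, at any point `(x₀,y₀) ≠ (0,0)` the radial
derivative divided by the radius equals the pure second `x`-derivative at
`(0, r₀)`, where `r₀ = √(x₀²+y₀²)`. -/
theorem spherically_symmetric_radial_derivative
    (F : ℝ → ℝ) (f : ℝ × ℝ → ℝ)
    (hf : ∀ x y : ℝ, f (x, y) = F (Real.sqrt (x ^ 2 + y ^ 2)))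
    (hreg : ContDiff ℝ 2 f)
    (x₀ y₀ : ℝ) (h0 : (x₀, y₀) ≠ (0, 0)) :
    (Real.sqrt (x₀ ^ 2 + y₀ ^ 2))⁻¹ * deriv F (Real.sqrt (x₀ ^ 2 + y₀ ^ 2)) =
      deriv (deriv (fun x => f (x, Real.sqrt (x₀ ^ 2 + y₀ ^ 2)))) 0 := by
  obtain ⟨r, hr⟩ : ∃ r, r = Real.sqrt (x₀ ^ 2 + y₀ ^ 2) := ⟨_, rfl⟩
  rw [← hr]
  have hr0 : 0 < r := by
    rw [hr, Real.sqrt_pos]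
    by_contra hcon
    apply h0
    have hx : x₀ = 0 := by nlinarith [sq_nonneg x₀, sq_nonneg y₀]
    have hy : y₀ = 0 := by nlinarith [sq_nonneg x₀, sq_nonneg y₀]
    rw [hx, hy]
  let g : ℝ → ℝ := fun s => f (s, 0)
  have hg : ContDiff ℝ 2 g := hreg.comp (contDiff_id.prodMk contDiff_const)
  have hgF : ∀ s, 0 ≤ s → g s = F s := fun s hs => by
    simp [g, hf, Real.sqrt_sq hs]
  have hderivF : deriv F r = deriv g r := by
    apply Filter.EventuallyEq.deriv_eq
    filter_upwards [lt_mem_nhds hr0] with s hs using (hgF s hs.le).symm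
  have hpos : ∀ x : ℝ, 0 < x ^ 2 + r ^ 2 := fun x => by positivity
  have hslice : (fun x => f (x, r)) = fun x => g (Real.sqrt (x ^ 2 + r ^ 2)) := by
    funext x
    rw [hf, hgF _ (Real.sqrt_nonneg _)]
  let h : ℝ → ℝ := fun x => deriv g (Real.sqrt (x ^ 2 + r ^ 2)) / Real.sqrt (x ^ 2 + r ^ 2)
  have hd : deriv (fun x => f (x, r)) = fun x => x * h x := by
    rw [hslice]
    funext x
    have h1 : HasDerivAt (fun x : ℝ => x ^ 2 + r ^ 2) (2 * x) x := by
      simpa using (hasDerivAt_pow 2 x).add_const (r ^ 2)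
    have h2 := h1.sqrt (hpos x).ne'
    have h3 := (hg.differentiable (by norm_num) (Real.sqrt (x ^ 2 + r ^ 2))).hasDerivAt
    have h4 := HasDerivAt.comp x h3 h2
    refine h4.deriv.trans ?_
    have := (Real.sqrt_pos.2 (hpos x)).ne'
    simp only [h]
    field_simp
  have hcont : Continuous h := by
    have hg' : Continuous (deriv g) := hg.continuous_deriv (by norm_num)
    have hs : Continuous fun x : ℝ => Real.sqrt (x ^ 2 + r ^ 2) := by fun_prop
    exact (hg'.comp hs).div hs fun x => (Real.sqrt_pos.2 (hpos x)).ne'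
  rw [hd, (hasDerivAt_id_mul_zero hcont.continuousAt).deriv, hderivF]
  simp [h, Real.sqrt_sq hr0.le, div_eq_inv_mul]
end

section
/- Fix γ > 0 and define h on ℝ³ minus the z-axis by h(x, y, z) = log(√(ρ² + (z − γ)²) − (z − γ)) + log(√(ρ² + (z + γ)²) + (z + γ)), where ρ = √(x² + y²). Then h is well defined (both arguments of the logarithms are strictly positive when ρ > 0), h is smooth on {(x,y,z) : x² + y² > 0}, and h is harmonic there: ∂²h/∂x² + ∂²h/∂y² + ∂²h/∂z² = 0 at every point with x² + y² > 0. -/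
/-!
With `r = √(x² + y² + s²)` put `G x y s = log (r + s)`. Then `h = G x y (γ - z) + G x y (z + γ)`,
so, Laplace's equation being invariant under `s ↦ -s` and translations, it suffices that `G` is
harmonic off the axis. Its first derivatives are `G_x = x / (r (r + s))`, `G_y = y / (r (r + s))`
and `G_s = 1 / r`; differentiating once more and using `x² + y² = (r - s) (r + s)`, the sum of the
pure second derivatives cancels.
-/

/-- The distance from the origin to `(x, y, s)`. -/
noncomputable def kerrR (x y s : ℝ) : ℝ := Real.sqrt ((x ^ 2 + y ^ 2) + s ^ 2)

/-- The function `log (r + s)`: up to sign, the regularized potential of a uniformly charged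
negative half-axis. -/
noncomputable def kerrG (x y s : ℝ) : ℝ := Real.log (kerrR x y s + s)

lemma kerrR_comm (x y s : ℝ) : kerrR x y s = kerrR y x s := by
  simp only [kerrR, add_comm (x ^ 2)]

lemma kerrG_comm (x y s : ℝ) : kerrG x y s = kerrG y x s := by
  simp only [kerrG, kerrR_comm x y]

lemma kerrR_sq (x y s : ℝ) : kerrR x y s ^ 2 = x ^ 2 + y ^ 2 + s ^ 2 :=
  Real.sq_sqrt (by positivity)

lemma kerrR_pos {x y : ℝ} (s : ℝ) (h : 0 < x ^ 2 + y ^ 2) : 0 < kerrR x y s :=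
  Real.sqrt_pos.2 (by positivity)

lemma kerrR_add_pos {x y : ℝ} (s : ℝ) (h : 0 < x ^ 2 + y ^ 2) : 0 < kerrR x y s + s := by
  have : |s| < kerrR x y s := by
    rw [← Real.sqrt_sq_eq_abs]
    exact Real.sqrt_lt_sqrt (sq_nonneg s) (by linarith)
  linarith [neg_abs_le s]

lemma hasDerivAt_kerrR_x {x y : ℝ} (s : ℝ) (h : 0 < x ^ 2 + y ^ 2) :
    HasDerivAt (fun t => kerrR t y s) (x / kerrR x y s) x := by
  have h1 : HasDerivAt (fun t : ℝ => (t ^ 2 + y ^ 2) + s ^ 2) (2 * x) x := by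
    simpa using (((hasDerivAt_pow 2 x).add_const (y ^ 2)).add_const (s ^ 2))
  refine (h1.sqrt (by positivity)).congr_deriv ?_
  rw [kerrR, mul_div_mul_left _ _ two_ne_zero]

lemma hasDerivAt_kerrR_s {x y : ℝ} (s : ℝ) (h : 0 < x ^ 2 + y ^ 2) :
    HasDerivAt (fun t => kerrR x y t) (s / kerrR x y s) s := by
  have h1 : HasDerivAt (fun t : ℝ => (x ^ 2 + y ^ 2) + t ^ 2) (2 * s) s := by
    simpa using ((hasDerivAt_pow 2 s).const_add (x ^ 2 + y ^ 2))
  refine (h1.sqrt (by positivity)).congr_deriv ?_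
  rw [kerrR, mul_div_mul_left _ _ two_ne_zero]

lemma hasDerivAt_kerrG_x {x y : ℝ} (s : ℝ) (h : 0 < x ^ 2 + y ^ 2) :
    HasDerivAt (fun t => kerrG t y s) (x / (kerrR x y s * (kerrR x y s + s))) x := by
  refine (((hasDerivAt_kerrR_x s h).add_const s).log (kerrR_add_pos s h).ne').congr_deriv ?_
  rw [div_div]

lemma hasDerivAt_kerrG_s {x y : ℝ} (s : ℝ) (h : 0 < x ^ 2 + y ^ 2) :
    HasDerivAt (fun t => kerrG x y t) (1 / kerrR x y s) s := by
  have hr := kerrR_pos s h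
  have hp := kerrR_add_pos s h
  refine (((hasDerivAt_kerrR_s s h).add (hasDerivAt_id s)).log hp.ne').congr_deriv ?_
  simp only [Pi.add_apply, id]
  field_simp
  ring

/-- The value of `∂²G/∂x²`. -/
noncomputable def kerrGxx (x y s : ℝ) : ℝ :=
  1 / (kerrR x y s * (kerrR x y s + s))
    - x ^ 2 * (2 * kerrR x y s + s) / (kerrR x y s ^ 3 * (kerrR x y s + s) ^ 2)

lemma hasDerivAt_kerrG_xx {x y : ℝ} (s : ℝ) (h : 0 < x ^ 2 + y ^ 2) :
    HasDerivAt (fun t => t / (kerrR t y s * (kerrR t y s + s))) (kerrGxx x y s) x := by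
  have hr := kerrR_pos s h
  have hp := kerrR_add_pos s h
  have h1 := hasDerivAt_kerrR_x s h
  refine ((hasDerivAt_id x).div (h1.mul (h1.add_const s)) (mul_pos hr hp).ne').congr_deriv ?_
  simp only [Pi.mul_apply, id, kerrGxx]
  field_simp
  ring

lemma hasDerivAt_kerrG_ss {x y : ℝ} (s : ℝ) (h : 0 < x ^ 2 + y ^ 2) :
    HasDerivAt (fun t => 1 / kerrR x y t) (-s / kerrR x y s ^ 3) s := by
  have hr := kerrR_pos s h
  simp only [one_div]
  refine ((hasDerivAt_kerrR_s s h).inv hr.ne').congr_deriv ?_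
  field_simp

lemma kerrG_laplace {x y : ℝ} (s : ℝ) (h : 0 < x ^ 2 + y ^ 2) :
    kerrGxx x y s + kerrGxx y x s + -s / kerrR x y s ^ 3 = 0 := by
  have hr := kerrR_pos s h
  have hp := kerrR_add_pos s h
  have hsq := kerrR_sq x y s
  rw [kerrGxx, kerrGxx, kerrR_comm y x]
  generalize kerrR x y s = r at *
  have hy : y ^ 2 = r ^ 2 - s ^ 2 - x ^ 2 := by linarith
  rw [hy]
  field_simp
  ring

lemma deriv_deriv_kerrG_x_add {x y : ℝ} (a b : ℝ) (h : 0 < x ^ 2 + y ^ 2) :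
    deriv (deriv (fun t => kerrG t y a + kerrG t y b)) x = kerrGxx x y a + kerrGxx x y b := by
  have hev : ∀ᶠ t in nhds x, 0 < t ^ 2 + y ^ 2 :=
    (by fun_prop : Continuous fun t : ℝ => t ^ 2 + y ^ 2).continuousAt.eventually (lt_mem_nhds h)
  have heq : deriv (fun t => kerrG t y a + kerrG t y b) =ᶠ[nhds x]
      fun t => t / (kerrR t y a * (kerrR t y a + a)) + t / (kerrR t y b * (kerrR t y b + b)) := by
    filter_upwards [hev] with t ht
    exact ((hasDerivAt_kerrG_x a ht).add (hasDerivAt_kerrG_x b ht)).deriv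
  rw [heq.deriv_eq]
  exact ((hasDerivAt_kerrG_xx a h).add (hasDerivAt_kerrG_xx b h)).deriv

lemma deriv_deriv_kerrG_z {x y : ℝ} (γ z : ℝ) (h : 0 < x ^ 2 + y ^ 2) :
    deriv (deriv (fun t => kerrG x y (γ - t) + kerrG x y (t + γ))) z
      = -(γ - z) / kerrR x y (γ - z) ^ 3 + -(z + γ) / kerrR x y (z + γ) ^ 3 := by
  have heq : deriv (fun t => kerrG x y (γ - t) + kerrG x y (t + γ)) =
      fun t => -(1 / kerrR x y (γ - t)) + 1 / kerrR x y (t + γ) := by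
    funext t
    exact (((hasDerivAt_kerrG_s (γ - t) h).comp_const_sub γ t).add
      ((hasDerivAt_kerrG_s (t + γ) h).comp_add_const t γ)).deriv
  rw [heq]
  refine ((((hasDerivAt_kerrG_ss (γ - z) h).comp_const_sub γ z).neg.add
      ((hasDerivAt_kerrG_ss (z + γ) h).comp_add_const z γ)).congr_deriv ?_).deriv
  rw [neg_neg]

/-- The auxiliary harmonic function `h` capturing the singular behaviour of
`log X_K` at the Kerr horizon: with `ρ² = x² + y²`,
`h = log(√(ρ²+(z−γ)²) − (z−γ)) + log(√(ρ²+(z+γ)²) + (z+γ))` is well defined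
(both log arguments are positive off the axis), smooth off the `z`-axis, and
harmonic there. -/
theorem kerr_h_harmonic
    (γ : ℝ) (hγ : 0 < γ) (H : ℝ × ℝ × ℝ → ℝ)
    (hH : ∀ x y z : ℝ, H (x, y, z) =
      Real.log (Real.sqrt ((x ^ 2 + y ^ 2) + (z - γ) ^ 2) - (z - γ)) +
      Real.log (Real.sqrt ((x ^ 2 + y ^ 2) + (z + γ) ^ 2) + (z + γ))) :
    (∀ x y z : ℝ, 0 < x ^ 2 + y ^ 2 →
      0 < Real.sqrt ((x ^ 2 + y ^ 2) + (z - γ) ^ 2) - (z - γ) ∧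
      0 < Real.sqrt ((x ^ 2 + y ^ 2) + (z + γ) ^ 2) + (z + γ)) ∧
    ContDiffOn ℝ (⊤ : ℕ∞) H {p : ℝ × ℝ × ℝ | 0 < p.1 ^ 2 + p.2.1 ^ 2} ∧
    (∀ x y z : ℝ, 0 < x ^ 2 + y ^ 2 →
      deriv (deriv (fun t => H (t, y, z))) x +
      deriv (deriv (fun t => H (x, t, z))) y +
      deriv (deriv (fun t => H (x, y, t))) z = 0) := by
  have hG : ∀ x y z : ℝ, H (x, y, z) = kerrG x y (γ - z) + kerrG x y (z + γ) := by
    intro x y z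
    rw [hH, kerrG, kerrG, kerrR, kerrR, sub_sq_comm γ z, sub_eq_add_neg _ (z - γ), neg_sub]
  have hpos : ∀ x y z : ℝ, 0 < x ^ 2 + y ^ 2 →
      0 < Real.sqrt ((x ^ 2 + y ^ 2) + (z - γ) ^ 2) - (z - γ) ∧
      0 < Real.sqrt ((x ^ 2 + y ^ 2) + (z + γ) ^ 2) + (z + γ) := by
    intro x y z h
    refine ⟨?_, kerrR_add_pos (z + γ) h⟩
    have := kerrR_add_pos (γ - z) h
    rw [kerrR, sub_sq_comm γ z] at this
    linarith
  refine ⟨hpos, ?_, ?_⟩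
  · have hfun : H = fun p : ℝ × ℝ × ℝ =>
        Real.log (Real.sqrt ((p.1 ^ 2 + p.2.1 ^ 2) + (p.2.2 - γ) ^ 2) - (p.2.2 - γ)) +
        Real.log (Real.sqrt ((p.1 ^ 2 + p.2.1 ^ 2) + (p.2.2 + γ) ^ 2) + (p.2.2 + γ)) := by
      funext ⟨x, y, z⟩
      exact hH x y z
    rw [hfun]
    intro p hp
    have hp' : 0 < p.1 ^ 2 + p.2.1 ^ 2 := hp
    obtain ⟨h1, h2⟩ := hpos p.1 p.2.1 p.2.2 hp'
    apply ContDiffAt.contDiffWithinAt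
    refine ContDiffAt.add (ContDiffAt.log (ContDiffAt.sub (ContDiffAt.sqrt ?_ ?_) ?_) h1.ne')
      (ContDiffAt.log (ContDiffAt.add (ContDiffAt.sqrt ?_ ?_) ?_) h2.ne')
    · fun_prop
    · positivity
    · fun_prop
    · fun_prop
    · positivity
    · fun_prop
  · intro x y z h
    have h' : 0 < y ^ 2 + x ^ 2 := by rwa [add_comm]
    simp only [hG]
    -- The `y`-derivative reduces to the `x`-derivative by the symmetry of `G` in `x` and `y`.
    have hswap : (fun t => kerrG x t (γ - z) + kerrG x t (z + γ))
        = fun t => kerrG t x (γ - z) + kerrG t x (z + γ) := by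
      funext t
      rw [kerrG_comm x t, kerrG_comm x t]
    rw [hswap, deriv_deriv_kerrG_x_add _ _ h, deriv_deriv_kerrG_x_add _ _ h',
      deriv_deriv_kerrG_z γ z h]
    linarith [kerrG_laplace (γ - z) h, kerrG_laplace (z + γ) h]
end

section
/- Fix γ > 0 and define h on ℝ³ minus the z-axis by h(x, y, z) = log(√(ρ² + (z − γ)²) − (z − γ)) + log(√(ρ² + (z + γ)²) + (z + γ)), where ρ = √(x² + y²). There exists a constant C > 0 (depending only on γ) such that for every smooth compactly supported function f : ℝ³ → ℝ that is axisymmetric (f(x,y,z) = f(√(x²+y²), 0, z) for all (x,y,z)), one has ∫_{ℝ³} e^{2h} |∇h|² f² ≤ C ∫_{ℝ³} e^{2h} |∇f|², where both integrals are Lebesgue integrals over ℝ³ (the integrands are defined away from the z-axis, a null set) taking values in [0, ∞]. -/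
open MeasureTheory

/-!
Let `X = e^h`. Off the axis `h` is harmonic, so `X ΔX = |∇X|²`, and expanding
`|X ∇f + f ∇X|² ≥ 0` gives, pointwise,

  `f² |∇X|² ≤ X² |∇f|² + div (f² X ∇X)`.

Integrating yields the inequality with `C = 1`.

To integrate by parts without treating the axis and the two poles `(0, 0, ±γ)` separately, both
square roots are regularised: `R = √(|p - a|² + δ)` with `δ > 0`, and `L = R ± (z - a₂)`. Then `L`
is smooth and positive on all of `ℝ³`, and

  `L ΔL - |∇L|² = δ L / R³ + δ / R² ≥ 0`,

so `log L` is subharmonic (`L_subharmonic`). Hence so is the logarithm of the product `X` of the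
two factors (`X_subharmonic`), i.e. `|∇X|² ≤ X ΔX`, which has the sign needed for the argument
above (`energy_estimate`). As `δ → 0`, Fatou's lemma handles the left-hand side and dominated
convergence the right-hand side.
-/

namespace WeightedPoincare

/-! ### The regularised factors -/

/-- Euclidean three-space. -/
abbrev E3 := EuclideanSpace ℝ (Fin 3)

/-- The standard basis vectors. -/
noncomputable def e (i : Fin 3) : E3 := EuclideanSpace.single i 1

/-- The regularised distance `√(|p - a|² + δ)` to the point `a`. -/
noncomputable def R (a : E3) (δ : ℝ) (p : E3) : ℝ := Real.sqrt (∑ j, (p j - a j) ^ 2 + δ)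

/-- The regularised factor `√(|p - a|² + δ) + s (z - a₂)`; the sign `s` is `1` or `-1`. -/
noncomputable def L (s : ℝ) (a : E3) (δ : ℝ) (p : E3) : ℝ := R a δ p + s * (p 2 - a 2)

/-- The `i`-th partial derivative of `L s a δ`. -/
noncomputable def dL (s : ℝ) (a : E3) (δ : ℝ) (i : Fin 3) (p : E3) : ℝ :=
  (p i - a i) / R a δ p + s * e i 2

/-- The pure second partial derivative `∂ᵢ∂ᵢ` of `L s a δ`, which does not depend on `s`. -/
noncomputable def ddL (a : E3) (δ : ℝ) (i : Fin 3) (p : E3) : ℝ :=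
  1 / R a δ p - (p i - a i) ^ 2 / R a δ p ^ 3

lemma R_pos {a : E3} {δ : ℝ} {p : E3} (h : 0 < ∑ j, (p j - a j) ^ 2 + δ) : 0 < R a δ p :=
  Real.sqrt_pos.2 h

lemma R_sq {a : E3} {δ : ℝ} {p : E3} (h : 0 < ∑ j, (p j - a j) ^ 2 + δ) :
    R a δ p ^ 2 = ∑ j, (p j - a j) ^ 2 + δ := Real.sq_sqrt h.le

lemma e_apply (i j : Fin 3) : e i j = if j = i then 1 else 0 := by
  simp [e]

lemma hasLineDerivAt_coord (a : E3) (i j : Fin 3) (p : E3) :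
    HasLineDerivAt ℝ (fun q : E3 => q j - a j) (e i j) p (e i) := by
  have : HasDerivAt (fun t : ℝ => p j + t * e i j - a j) (e i j) 0 := by
    simpa using (((hasDerivAt_id (0:ℝ)).mul_const (e i j)).const_add (p j)).sub_const (a j)
  simpa [HasLineDerivAt] using this

lemma hasLineDerivAt_R {a : E3} {δ : ℝ} {p : E3} (h : 0 < ∑ j, (p j - a j) ^ 2 + δ)
    (i : Fin 3) : HasLineDerivAt ℝ (R a δ) ((p i - a i) / R a δ p) p (e i) := by
  have h1 : ∀ j, HasDerivAt (fun t : ℝ => ((p + t • e i) j - a j) ^ 2)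
      (2 * (p j - a j) * e i j) 0 := fun j => by
    simpa using (HasDerivAt.fun_pow (hasLineDerivAt_coord a i j p) 2)
  have h2 := (HasDerivAt.fun_sum (u := Finset.univ) fun j _ => h1 j).add_const δ
  have h3 := h2.sqrt (by simpa using h.ne')
  refine HasDerivAt.congr_deriv (f := fun t => R a δ (p + t • e i)) h3 ?_
  simp [e_apply, R]
  field_simp

lemma hasLineDerivAt_L (s : ℝ) {a : E3} {δ : ℝ} {p : E3} (h : 0 < ∑ j, (p j - a j) ^ 2 + δ)
    (i : Fin 3) : HasLineDerivAt ℝ (L s a δ) (dL s a δ i p) p (e i) :=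
  HasDerivAt.add (hasLineDerivAt_R h i) (HasDerivAt.const_mul s (hasLineDerivAt_coord a i 2 p))

lemma hasLineDerivAt_dL (s : ℝ) {a : E3} {δ : ℝ} {p : E3}
    (h : 0 < ∑ j, (p j - a j) ^ 2 + δ)
    (i : Fin 3) : HasLineDerivAt ℝ (dL s a δ i) (ddL a δ i p) p (e i) := by
  have hR := R_pos h
  have h1 := (HasDerivAt.fun_div (hasLineDerivAt_coord a i i p) (hasLineDerivAt_R h i)
    (by simpa using hR.ne')).add_const (s * e i 2)
  refine HasDerivAt.congr_deriv (f := fun t => dL s a δ i (p + t • e i)) h1 ?_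
  simp [e_apply, ddL]
  field_simp

lemma L_pos {s : ℝ} (hs : s ^ 2 = 1) {a : E3} {δ : ℝ} {p : E3}
    (h : 0 < (p 0 - a 0) ^ 2 + (p 1 - a 1) ^ 2 + δ) : 0 < L s a δ p := by
  have h0 : 0 < ∑ j, (p j - a j) ^ 2 + δ := by
    rw [Fin.sum_univ_three]; nlinarith [sq_nonneg (p 2 - a 2)]
  have h1 : |s * (p 2 - a 2)| < R a δ p := by
    apply abs_lt_of_sq_lt_sq _ (R_pos h0).le
    rw [R_sq h0, Fin.sum_univ_three, mul_pow, hs]; linarith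
  unfold L
  linarith [(abs_lt.1 h1).1]

/-- Subharmonicity of `log L` for `δ > 0`, in the form `|∇L|² ≤ L ΔL`. -/
lemma L_subharmonic {s : ℝ} (hs : s ^ 2 = 1) {a : E3} {δ : ℝ} (hδ : 0 < δ) (p : E3) :
    ∑ i, dL s a δ i p ^ 2 ≤ L s a δ p * ∑ i, ddL a δ i p := by
  have h : 0 < ∑ j, (p j - a j) ^ 2 + δ := by positivity
  have hL : 0 < L s a δ p := L_pos hs (by positivity)
  have hR := R_pos h
  have hR2 := R_sq h
  have key : L s a δ p * ∑ i, ddL a δ i p - ∑ i, dL s a δ i p ^ 2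
      = δ * L s a δ p / R a δ p ^ 3 + δ / R a δ p ^ 2 := by
    rw [Fin.sum_univ_three] at hR2
    have hδ' : δ = R a δ p ^ 2 - ((p 0 - a 0) ^ 2 + (p 1 - a 1) ^ 2 + (p 2 - a 2) ^ 2) := by
      linarith
    simp only [Fin.sum_univ_three, dL, ddL, e_apply, L]
    generalize R a δ p = r at *
    subst hδ'
    simp
    field_simp
    linear_combination (-r^2) * r * hs
  have : 0 ≤ δ * L s a δ p / R a δ p ^ 3 + δ / R a δ p ^ 2 := by positivity
  linarith

lemma norm_gradient_sq (f : E3 → ℝ) (p : E3) :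
    ‖gradient f p‖ ^ 2 = ∑ i, fderiv ℝ f p (e i) ^ 2 := by
  rw [EuclideanSpace.real_norm_sq_eq]
  refine Finset.sum_congr rfl fun i _ => ?_
  rw [← inner_gradient_left, e, EuclideanSpace.inner_single_right]
  simp

/-! ### The weighted inequality for regular weights -/

/-- The inequality, with constant `1`, for a weight `X` satisfying `|∇X|² ≤ X ΔX`. The partial
derivatives `∂ᵢX` and `∂ᵢ∂ᵢX`, assumed continuous, are supplied as explicit functions. -/
lemma energy_estimate {X : E3 → ℝ} {dX ddX : Fin 3 → E3 → ℝ} (hX : Continuous X)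
    (hdX : ∀ i, Continuous (dX i)) (hddX : ∀ i, Continuous (ddX i))
    (hX' : ∀ i p, HasLineDerivAt ℝ X (dX i p) p (e i))
    (hX'' : ∀ i p, HasLineDerivAt ℝ (dX i) (ddX i p) p (e i))
    (hsub : ∀ p, ∑ i, dX i p ^ 2 ≤ X p * ∑ i, ddX i p)
    {f : E3 → ℝ} (hf : ContDiff ℝ (⊤ : ℕ∞) f) (hfc : HasCompactSupport f) :
    ∫⁻ p, ENNReal.ofReal ((∑ i, dX i p ^ 2) * f p ^ 2) ≤
      ∫⁻ p, ENNReal.ofReal (X p ^ 2 * ‖gradient f p‖ ^ 2) := by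
  set D : Fin 3 → E3 → ℝ := fun i p => fderiv ℝ f p (e i) with hD
  have hf0 : Continuous f := hf.continuous
  have hDc : ∀ i, Continuous (D i) := fun i =>
    (hf.continuous_fderiv (by simp)).clm_apply continuous_const
  have hDs : ∀ i, HasCompactSupport (D i) := fun i => hfc.fderiv_apply ℝ (e i)
  have hfD : ∀ i p, HasLineDerivAt ℝ f (D i p) p (e i) := fun i p =>
    ((hf.differentiable (by simp)) p).hasFDerivAt.hasLineDerivAt (e i)
  have hff : HasCompactSupport (fun p => f p ^ 2) := by
    simpa only [pow_two] using! hfc.mul_left (f := f)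
  have hDD : ∀ i, HasCompactSupport (fun p => D i p ^ 2) := fun i => by
    simpa only [pow_two] using! (hDs i).mul_left (f := D i)
  have i1 : ∀ i, Integrable (fun p => f p ^ 2 * (X p * ddX i p + dX i p ^ 2)) := fun i =>
    Continuous.integrable_of_hasCompactSupport (by fun_prop) hff.mul_right
  have i2 : ∀ i, Integrable (fun p => 2 * f p * D i p * (X p * dX i p)) := fun i =>
    Continuous.integrable_of_hasCompactSupport (by fun_prop) (hDs i).mul_left.mul_right
  have i3 : ∀ i, Integrable (fun p => f p ^ 2 * (X p * dX i p)) := fun i =>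
    Continuous.integrable_of_hasCompactSupport (by fun_prop) hff.mul_right
  have i4 : ∀ i, Integrable (fun p => dX i p ^ 2 * f p ^ 2) := fun i =>
    Continuous.integrable_of_hasCompactSupport (by fun_prop) hff.mul_left
  have i5 : ∀ i, Integrable (fun p => X p ^ 2 * D i p ^ 2) := fun i =>
    Continuous.integrable_of_hasCompactSupport (by fun_prop) (hDD i).mul_left
  -- The integral of `∂ᵢ (f² X ∂ᵢX)` vanishes.
  have ibp : ∀ i, ∫ p, (f p ^ 2 * (X p * ddX i p + dX i p ^ 2)
      + 2 * f p * D i p * (X p * dX i p)) = 0 := fun i => by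
    have := integral_bilinear_hasLineDerivAt_right_eq_neg_left_of_integrable
      (μ := (volume : Measure E3)) (B := ContinuousLinearMap.mul ℝ ℝ) (v := e i)
      (f := fun p => f p ^ 2) (f' := fun p => 2 * f p * D i p)
      (g := fun p => X p * dX i p) (g' := fun p => X p * ddX i p + dX i p ^ 2)
      (i2 i) (i1 i) (i3 i)
      (fun p _ => by
        refine HasDerivAt.congr_deriv (HasDerivAt.fun_pow (hfD i p) 2) ?_
        simp)
      (fun p _ => by
        refine HasDerivAt.congr_deriv (HasDerivAt.fun_mul (hX' i p) (hX'' i p)) ?_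
        simp; ring)
    simp only [ContinuousLinearMap.mul_apply'] at this
    rw [integral_add (i1 i) (i2 i), this]; ring
  have i12 : ∀ i, Integrable (fun p => f p ^ 2 * (X p * ddX i p + dX i p ^ 2)
      + 2 * f p * D i p * (X p * dX i p)) := fun i => (i1 i).add (i2 i)
  have h0 : ∫ p, ∑ i, (f p ^ 2 * (X p * ddX i p + dX i p ^ 2)
      + 2 * f p * D i p * (X p * dX i p)) = 0 := by
    rw [integral_finsetSum _ fun i _ => i12 i]
    exact Finset.sum_eq_zero fun i _ => ibp i
  have j0 := integrable_finsetSum Finset.univ fun i _ => i12 i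
  have j4 : Integrable (fun p => (∑ i, dX i p ^ 2) * f p ^ 2) := by
    simp only [Finset.sum_mul]; exact integrable_finsetSum _ fun i _ => i4 i
  have j5 : Integrable (fun p => X p ^ 2 * ∑ i, D i p ^ 2) := by
    simp only [Finset.mul_sum]; exact integrable_finsetSum _ fun i _ => i5 i
  have hreal : ∫ p, (∑ i, dX i p ^ 2) * f p ^ 2 ≤ ∫ p, X p ^ 2 * ∑ i, D i p ^ 2 := by
    have h1 := integral_add j5 j0
    rw [h0, add_zero] at h1
    rw [← h1]
    refine integral_mono j4 (j5.add j0) fun p => ?_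
    -- Expand `|X ∇f + f ∇X|² ≥ 0` and use `f² |∇X|² ≤ f² X ΔX`.
    have hs := mul_le_mul_of_nonneg_left (hsub p) (sq_nonneg (f p))
    simp only [Fin.sum_univ_three] at hs ⊢
    nlinarith [sq_nonneg (X p * D 0 p + f p * dX 0 p), sq_nonneg (X p * D 1 p + f p * dX 1 p),
      sq_nonneg (X p * D 2 p + f p * dX 2 p)]
  simp only [norm_gradient_sq]
  rw [← ofReal_integral_eq_lintegral_ofReal j4 (.of_forall fun p => by positivity),
    ← ofReal_integral_eq_lintegral_ofReal j5 (.of_forall fun p => by positivity)]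
  exact ENNReal.ofReal_le_ofReal hreal

/-! ### The regularised weight -/

/-- The regularisation of `e^h`: the product of the factors centred at `(0, 0, γ)` (sign `-1`) and
at `(0, 0, -γ)` (sign `1`). At `δ = 0` it equals `e^h` off the axis. -/
noncomputable def X (γ δ : ℝ) (p : E3) : ℝ := L (-1) (γ • e 2) δ p * L 1 ((-γ) • e 2) δ p

/-- The `i`-th partial derivative of `X γ δ`. -/
noncomputable def dX (γ δ : ℝ) (i : Fin 3) (p : E3) : ℝ :=
  dL (-1) (γ • e 2) δ i p * L 1 ((-γ) • e 2) δ p + L (-1) (γ • e 2) δ p * dL 1 ((-γ) • e 2) δ i p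

/-- The pure second partial derivative `∂ᵢ∂ᵢ` of `X γ δ`. -/
noncomputable def ddX (γ δ : ℝ) (i : Fin 3) (p : E3) : ℝ :=
  ddL (γ • e 2) δ i p * L 1 ((-γ) • e 2) δ p
    + 2 * (dL (-1) (γ • e 2) δ i p * dL 1 ((-γ) • e 2) δ i p)
    + L (-1) (γ • e 2) δ p * ddL ((-γ) • e 2) δ i p

lemma hasLineDerivAt_X (γ : ℝ) {δ : ℝ} (hδ : 0 < δ) (i : Fin 3) (p : E3) :
    HasLineDerivAt ℝ (X γ δ) (dX γ δ i p) p (e i) := by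
  refine HasDerivAt.congr_deriv (HasDerivAt.fun_mul
    (hasLineDerivAt_L (-1) (a := γ • e 2) (δ := δ) (by positivity) i)
    (hasLineDerivAt_L 1 (a := (-γ) • e 2) (δ := δ) (by positivity) i)) ?_
  simp [dX]

lemma hasLineDerivAt_dX (γ : ℝ) {δ : ℝ} (hδ : 0 < δ) (i : Fin 3) (p : E3) :
    HasLineDerivAt ℝ (dX γ δ i) (ddX γ δ i p) p (e i) := by
  have hA := hasLineDerivAt_L (-1) (a := γ • e 2) (δ := δ) (p := p) (by positivity) i
  have hB := hasLineDerivAt_L 1 (a := (-γ) • e 2) (δ := δ) (p := p) (by positivity) i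
  have hA' := hasLineDerivAt_dL (-1) (a := γ • e 2) (δ := δ) (p := p) (by positivity) i
  have hB' := hasLineDerivAt_dL 1 (a := (-γ) • e 2) (δ := δ) (p := p) (by positivity) i
  refine HasDerivAt.congr_deriv
    (HasDerivAt.fun_add (HasDerivAt.fun_mul hA' hB) (HasDerivAt.fun_mul hA hB')) ?_
  simp [ddX]
  ring

/-- Subharmonicity of `log X = log L₁ + log L₂`; it follows from
`X ΔX - |∇X|² = L₂² (L₁ ΔL₁ - |∇L₁|²) + L₁² (L₂ ΔL₂ - |∇L₂|²)`. -/
lemma X_subharmonic (γ : ℝ) {δ : ℝ} (hδ : 0 < δ) (p : E3) :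
    ∑ i, dX γ δ i p ^ 2 ≤ X γ δ p * ∑ i, ddX γ δ i p := by
  have hA := mul_le_mul_of_nonneg_left
    (L_subharmonic (s := -1) (by norm_num) (a := γ • e 2) hδ p)
    (sq_nonneg (L 1 ((-γ) • e 2) δ p))
  have hB := mul_le_mul_of_nonneg_left
    (L_subharmonic (s := 1) (by norm_num) (a := (-γ) • e 2) hδ p)
    (sq_nonneg (L (-1) (γ • e 2) δ p))
  simp only [Fin.sum_univ_three, X, dX, ddX] at hA hB ⊢
  linarith

lemma continuous_R (a : E3) (δ : ℝ) : Continuous (R a δ) := by unfold R; fun_prop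

lemma continuous_L (s : ℝ) (a : E3) (δ : ℝ) : Continuous (L s a δ) := by
  have := continuous_R a δ
  unfold L; fun_prop

lemma continuous_dL (s : ℝ) (a : E3) {δ : ℝ} (hδ : 0 < δ) (i : Fin 3) :
    Continuous (dL s a δ i) := by
  have := continuous_R a δ
  have h : ∀ p, R a δ p ≠ 0 := fun p => (R_pos (by positivity)).ne'
  unfold dL; fun_prop (disch := assumption)

lemma continuous_ddL (a : E3) {δ : ℝ} (hδ : 0 < δ) (i : Fin 3) :
    Continuous (ddL a δ i) := by
  have := continuous_R a δ
  have h : ∀ p, R a δ p ≠ 0 := fun p => (R_pos (by positivity)).ne'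
  have h' : ∀ p, R a δ p ^ 3 ≠ 0 := fun p => pow_ne_zero 3 (h p)
  unfold ddL; fun_prop (disch := assumption)

lemma continuous_X (γ δ : ℝ) : Continuous (X γ δ) :=
  (continuous_L _ _ _).mul (continuous_L _ _ _)

lemma continuous_dX (γ : ℝ) {δ : ℝ} (hδ : 0 < δ) (i : Fin 3) : Continuous (dX γ δ i) :=
  ((continuous_dL _ _ hδ i).mul (continuous_L _ _ _)).add
    ((continuous_L _ _ _).mul (continuous_dL _ _ hδ i))

lemma continuous_ddX (γ : ℝ) {δ : ℝ} (hδ : 0 < δ) (i : Fin 3) : Continuous (ddX γ δ i) :=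
  (((continuous_ddL _ hδ i).mul (continuous_L _ _ _)).add
    (((continuous_dL _ _ hδ i).mul (continuous_dL _ _ hδ i)).const_mul 2)).add
    ((continuous_L _ _ _).mul (continuous_ddL _ hδ i))

/-! ### The limit `δ → 0` -/

lemma cen_zero (c : ℝ) : (c • e 2) 0 = 0 := by simp [e_apply]
lemma cen_one (c : ℝ) : (c • e 2) 1 = 0 := by simp [e_apply]
lemma cen_two (c : ℝ) : (c • e 2) 2 = c := by simp [e_apply]

lemma sum_cen_pos (c : ℝ) {p : E3} (hp : p 0 ≠ 0) :
    0 < ∑ j, (p j - (c • e 2) j) ^ 2 + 0 := by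
  rw [Fin.sum_univ_three, cen_zero]
  have : 0 < (p 0 - 0) ^ 2 := by rw [sub_zero]; positivity
  nlinarith [sq_nonneg (p 1 - (c • e 2) 1), sq_nonneg (p 2 - (c • e 2) 2)]

lemma L_cen_pos {s : ℝ} (hs : s ^ 2 = 1) (c : ℝ) {p : E3} (hp : p 0 ≠ 0) :
    0 < L s (c • e 2) 0 p := by
  apply L_pos hs
  rw [cen_zero]
  have : 0 < (p 0 - 0) ^ 2 := by rw [sub_zero]; positivity
  nlinarith [sq_nonneg (p 1 - (c • e 2) 1)]

lemma continuous_L_param (s : ℝ) (a p : E3) : Continuous fun δ => L s a δ p := by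
  unfold L R; fun_prop

lemma continuousAt_dL_param (s c : ℝ) (i : Fin 3) {p : E3} (hp : p 0 ≠ 0) :
    ContinuousAt (fun δ => dL s (c • e 2) δ i p) 0 := by
  have h1 : Continuous fun δ => R (c • e 2) δ p := by unfold R; fun_prop
  exact (continuousAt_const.div h1.continuousAt (R_pos (sum_cen_pos c hp)).ne').add
    continuousAt_const

lemma continuousAt_dX_param (γ : ℝ) (i : Fin 3) {p : E3} (hp : p 0 ≠ 0) :
    ContinuousAt (fun δ => dX γ δ i p) 0 :=
  ((continuousAt_dL_param _ _ i hp).mul (continuous_L_param _ _ p).continuousAt).add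
    ((continuous_L_param _ _ p).continuousAt.mul (continuousAt_dL_param _ _ i hp))

lemma continuous_X_param (γ : ℝ) (p : E3) : Continuous fun δ => X γ δ p :=
  (continuous_L_param _ _ p).mul (continuous_L_param _ _ p)

lemma L_mono (s : ℝ) (a p : E3) {δ δ' : ℝ} (h : δ ≤ δ') : L s a δ p ≤ L s a δ' p := by
  unfold L R; gcongr

lemma X_sq_le (γ : ℝ) {δ : ℝ} (hδ : 0 < δ) (hδ1 : δ ≤ 1) (p : E3) :
    X γ δ p ^ 2 ≤ X γ 1 p ^ 2 := by
  have hA : 0 < L (-1) (γ • e 2) δ p := L_pos (by norm_num) (by positivity)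
  have hB : 0 < L 1 ((-γ) • e 2) δ p := L_pos (by norm_num) (by positivity)
  have hA' := L_mono (-1) (γ • e 2) p hδ1
  have hB' := L_mono 1 ((-γ) • e 2) p hδ1
  have hA1 := hA.le.trans hA'
  unfold X
  gcongr

/-- The axis is contained in the null set `{x = 0}`, off which all limits are taken. -/
lemma ae_coord_ne_zero : ∀ᵐ p : E3, p 0 ≠ 0 := by
  let S : Submodule ℝ E3 := LinearMap.ker (EuclideanSpace.proj (𝕜 := ℝ) (0 : Fin 3)).toLinearMap
  have hS : S ≠ ⊤ := fun h => by
    have : e 0 ∈ S := h ▸ Submodule.mem_top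
    simp [S, e_apply] at this
  have := Measure.addHaar_submodule volume S hS
  rw [ae_iff]
  refine measure_mono_null (fun p hp => ?_) this
  simpa [S] using hp

/-- Off the plane `x = 0`, `e^{2h} |∇h|²` is bounded by (in fact equal to) `|∇X|²` at `δ = 0`.
The inequality suffices, and it spares a proof that `h` is differentiable: otherwise
`gradient h p` is `0` by convention. -/
lemma exp_mul_gradient_le {γ : ℝ} {h : E3 → ℝ}
    (hL : ∀ p, h p = Real.log (L (-1) (γ • e 2) 0 p) + Real.log (L 1 ((-γ) • e 2) 0 p))
    {p : E3} (hp : p 0 ≠ 0) :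
    Real.exp (2 * h p) * ‖gradient h p‖ ^ 2 ≤ ∑ i, dX γ 0 i p ^ 2 := by
  by_cases hd : DifferentiableAt ℝ h p
  swap
  · rw [gradient_eq_zero_of_not_differentiableAt hd]
    rw [norm_zero, zero_pow two_ne_zero, mul_zero]
    positivity
  have hA : 0 < L (-1) (γ • e 2) 0 p := L_cen_pos (by norm_num) _ hp
  have hB : 0 < L 1 ((-γ) • e 2) 0 p := L_cen_pos (by norm_num) _ hp
  have hexp : Real.exp (2 * h p) = (L (-1) (γ • e 2) 0 p * L 1 ((-γ) • e 2) 0 p) ^ 2 := by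
    rw [hL, two_mul, Real.exp_add, Real.exp_add, Real.exp_log hA, Real.exp_log hB]; ring
  rw [norm_gradient_sq, Finset.mul_sum, hexp]
  refine (Finset.sum_congr rfl fun i _ => ?_).le
  have h1 : HasLineDerivAt ℝ h (dL (-1) (γ • e 2) 0 i p / L (-1) (γ • e 2) 0 p
      + dL 1 ((-γ) • e 2) 0 i p / L 1 ((-γ) • e 2) 0 p) p (e i) := by
    have h1' := (HasDerivAt.log (hasLineDerivAt_L (-1) (sum_cen_pos γ hp) i)
      (by simpa using hA.ne')).fun_add
      (HasDerivAt.log (hasLineDerivAt_L 1 (sum_cen_pos (-γ) hp) i) (by simpa using hB.ne'))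
    rw [funext hL]
    exact HasDerivAt.congr_deriv h1' (by simp)
  rw [HasDerivAt.unique (hd.hasFDerivAt.hasLineDerivAt (e i)) h1, dX]
  field_simp

end WeightedPoincare

open WeightedPoincare in
/-- The weighted Poincaré inequality of Lemma `poin`: with
`h = log(√(ρ²+(z−γ)²) − (z−γ)) + log(√(ρ²+(z+γ)²) + (z+γ))` (where
`ρ² = x² + y²`), for every smooth compactly supported axisymmetric
`f : ℝ³ → ℝ` one has `∫ e^{2h}|∇h|² f² ≤ C ∫ e^{2h}|∇f|²`. -/
theorem weighted_poincare_inequality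
    (γ : ℝ) (hγ : 0 < γ)
    (h : EuclideanSpace ℝ (Fin 3) → ℝ)
    (hh : ∀ p : EuclideanSpace ℝ (Fin 3), h p =
      Real.log (Real.sqrt ((p 0) ^ 2 + (p 1) ^ 2 + (p 2 - γ) ^ 2) - (p 2 - γ)) +
      Real.log (Real.sqrt ((p 0) ^ 2 + (p 1) ^ 2 + (p 2 + γ) ^ 2) + (p 2 + γ))) :
    ∃ C : ℝ, 0 < C ∧
      ∀ f : EuclideanSpace ℝ (Fin 3) → ℝ,
        ContDiff ℝ (⊤ : ℕ∞) f → HasCompactSupport f →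
        (∀ p q : EuclideanSpace ℝ (Fin 3),
          Real.sqrt ((p 0) ^ 2 + (p 1) ^ 2) = Real.sqrt ((q 0) ^ 2 + (q 1) ^ 2) →
          p 2 = q 2 → f p = f q) →
        (∫⁻ p, ENNReal.ofReal
            (Real.exp (2 * h p) * ‖gradient h p‖ ^ 2 * (f p) ^ 2)) ≤
          ENNReal.ofReal C *
            ∫⁻ p, ENNReal.ofReal (Real.exp (2 * h p) * ‖gradient f p‖ ^ 2) := by
  refine ⟨1, one_pos, fun f hf hfc _ => ?_⟩
  rw [ENNReal.ofReal_one, one_mul]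
  have hL : ∀ p, h p =
      Real.log (L (-1) (γ • e 2) 0 p) + Real.log (L 1 ((-γ) • e 2) 0 p) := fun p => by
    rw [hh]
    simp only [L, R, Fin.sum_univ_three, cen_zero, cen_one, cen_two, sub_zero, add_zero,
      sub_neg_eq_add, one_mul, neg_one_mul, ← sub_eq_add_neg]
  let δ : ℕ → ℝ := fun n => 1 / ((n : ℝ) + 1)
  have hδ : ∀ n, 0 < δ n := fun n => by positivity
  have hδ1 : ∀ n, δ n ≤ 1 := fun n => by
    simp only [δ]; rw [div_le_one (by positivity)]; linarith [(n.cast_nonneg : (0:ℝ) ≤ n)]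
  have hδ0 : Filter.Tendsto δ Filter.atTop (nhds 0) := tendsto_one_div_add_atTop_nhds_zero_nat
  have hgc : Continuous fun p => ‖gradient f p‖ ^ 2 := by
    simp only [norm_gradient_sq]
    have := hf.continuous_fderiv (by simp)
    fun_prop
  have hgs : HasCompactSupport fun p => ‖gradient f p‖ ^ 2 :=
    (hfc.fderiv (𝕜 := ℝ)).mono fun p hp h0 => hp <| by
      simp only [norm_gradient_sq, h0]
      simp
  have hfin : ∫⁻ p, ENNReal.ofReal (X γ 1 p ^ 2 * ‖gradient f p‖ ^ 2) ≠ ⊤ := by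
    have : Integrable fun p => X γ 1 p ^ 2 * ‖gradient f p‖ ^ 2 :=
      Continuous.integrable_of_hasCompactSupport (((continuous_X γ 1).pow 2).mul hgc) hgs.mul_left
    exact this.lintegral_lt_top.ne
  have hright : Filter.Tendsto
      (fun n => ∫⁻ p, ENNReal.ofReal (X γ (δ n) p ^ 2 * ‖gradient f p‖ ^ 2)) Filter.atTop
      (nhds (∫⁻ p, ENNReal.ofReal (Real.exp (2 * h p) * ‖gradient f p‖ ^ 2))) := by
    refine tendsto_lintegral_of_dominated_convergence
      (fun p => ENNReal.ofReal (X γ 1 p ^ 2 * ‖gradient f p‖ ^ 2)) (fun n => ?_) (fun n => ?_)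
      hfin ?_
    · exact (ENNReal.continuous_ofReal.comp
        (((continuous_X γ (δ n)).pow 2).mul hgc)).measurable
    · refine .of_forall fun p => ENNReal.ofReal_le_ofReal ?_
      exact mul_le_mul_of_nonneg_right (X_sq_le γ (hδ n) (hδ1 n) p) (sq_nonneg _)
    · filter_upwards [ae_coord_ne_zero] with p hp
      have hexp : Real.exp (2 * h p) = X γ 0 p ^ 2 := by
        rw [hL, two_mul, Real.exp_add, Real.exp_add, Real.exp_log (L_cen_pos (by norm_num) _ hp),
          Real.exp_log (L_cen_pos (by norm_num) _ hp), X]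
        ring
      rw [hexp]
      refine (ENNReal.continuous_ofReal.tendsto _).comp (.mul_const _ (.pow ?_ 2))
      exact ((continuous_X_param γ p).tendsto 0).comp hδ0
  calc ∫⁻ p, ENNReal.ofReal (Real.exp (2 * h p) * ‖gradient h p‖ ^ 2 * (f p) ^ 2)
      ≤ ∫⁻ p, Filter.liminf
          (fun n => ENNReal.ofReal ((∑ i, dX γ (δ n) i p ^ 2) * f p ^ 2)) Filter.atTop := by
        refine lintegral_mono_ae ?_
        filter_upwards [ae_coord_ne_zero] with p hp
        have ht : Filter.Tendsto
            (fun n => ENNReal.ofReal ((∑ i, dX γ (δ n) i p ^ 2) * f p ^ 2)) Filter.atTop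
            (nhds (ENNReal.ofReal ((∑ i, dX γ 0 i p ^ 2) * f p ^ 2))) :=
          (ENNReal.continuous_ofReal.tendsto _).comp (.mul_const _ (tendsto_finsetSum _
            fun i _ => ((continuousAt_dX_param γ i hp).tendsto.comp hδ0).pow 2))
        rw [ht.liminf_eq]
        exact ENNReal.ofReal_le_ofReal
          (mul_le_mul_of_nonneg_right (exp_mul_gradient_le hL hp) (sq_nonneg _))
    _ ≤ Filter.liminf (fun n => ∫⁻ p, ENNReal.ofReal ((∑ i, dX γ (δ n) i p ^ 2) * f p ^ 2))
          Filter.atTop := by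
        refine lintegral_liminf_le fun n => (ENNReal.continuous_ofReal.comp ?_).measurable
        have := fun i => continuous_dX γ (hδ n) i
        have := hf.continuous
        fun_prop
    _ ≤ Filter.liminf (fun n => ∫⁻ p, ENNReal.ofReal (X γ (δ n) p ^ 2 * ‖gradient f p‖ ^ 2))
          Filter.atTop :=
        Filter.liminf_le_liminf (.of_forall fun n => energy_estimate (continuous_X γ (δ n))
          (continuous_dX γ (hδ n)) (continuous_ddX γ (hδ n)) (hasLineDerivAt_X γ (hδ n))
          (hasLineDerivAt_dX γ (hδ n)) (X_subharmonic γ (hδ n)) hf hfc)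
    _ = ∫⁻ p, ENNReal.ofReal (Real.exp (2 * h p) * ‖gradient f p‖ ^ 2) := hright.liminf_eq
end

section
/- Let m ∈ ℤ and k ∈ ℕ. Suppose u : ℂ → ℂ is k-times continuously differentiable (as a map between two-dimensional real vector spaces) and satisfies u(z) = ‖z‖ᵏ · (z/‖z‖)ᵐ for every z ≠ 0, where for negative m the integer power denotes the corresponding power of the inverse; equivalently, in polar coordinates u(r·e^{iθ}) = rᵏ e^{imθ} for all r > 0. Then k ≥ |m|. -/
/-!
On the punctured plane `u` is positively homogeneous of degree `k`, so `t ↦ u (t z)` equals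
`tᵏ u z` for `t > 0` and has constant `k`-th derivative `k! u z` there. As `u` is `Cᵏ`, letting
`t → 0⁺` gives `D^k u(0)(z, …, z) = k! u z` (`iteratedFDeriv_zero_diag`). Hence `u` is the diagonal
of an `ℝ`-multilinear form of degree `k`.

On the unit circle `w · re w = (w² + 1) / 2` and `w · im w = (w² - 1) / (2i)`, so for such a form `L`
the function `wᵏ L(w, …, w)` is a complex polynomial in `w` of degree at most `2k`
(`exists_polynomial_on_circle`). Since `u w = wᵐ` on the circle, `w^(k+m)` agrees with this
polynomial at infinitely many points, which forces `0 ≤ k + m ≤ 2k`.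
-/

open Polynomial in
/-- The diagonal of a real `k`-linear form on `ℂ` is, on the unit circle, a trigonometric polynomial
with frequencies in `[-k, k]`. -/
lemma exists_polynomial_on_circle (k : ℕ) (L : MultilinearMap ℝ (fun _ : Fin k => ℂ) ℂ) :
    ∃ P : ℂ[X], P.natDegree ≤ 2 * k ∧
      ∀ w : ℂ, ‖w‖ = 1 → w ^ k * L (fun _ => w) = P.eval w := by
  let v : Fin 2 → ℂ := ![1, Complex.I]
  let A : Fin 2 → ℂ[X] := ![C (1 / 2) * (X ^ 2 + 1), C (-Complex.I / 2) * (X ^ 2 - 1)]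
  have hA : ∀ j, (A j).natDegree ≤ 2 := by
    intro j
    fin_cases j
    · change (C (1 / 2 : ℂ) * (X ^ 2 + 1)).natDegree ≤ 2
      compute_degree
    · change (C (-Complex.I / 2 : ℂ) * (X ^ 2 - 1)).natDegree ≤ 2
      compute_degree
  refine ⟨∑ r : Fin k → Fin 2, C (L fun i => v (r i)) * ∏ i, A (r i), ?_, ?_⟩
  · refine natDegree_sum_le_of_forall_le _ _ fun r _ => ?_
    refine (natDegree_C_mul_le _ _).trans ((natDegree_prod_le _ _).trans ?_)
    refine (Finset.sum_le_sum fun i _ => hA (r i)).trans ?_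
    simp [mul_comm]
  · intro w hw
    let c : Fin 2 → ℝ := ![w.re, w.im]
    have hsum : w = ∑ j, c j • v j := by
      simp [c, v, Fin.sum_univ_two, Complex.re_add_im]
    have hcirc : w.re * w.re + w.im * w.im = 1 := by
      rw [← Complex.normSq_apply, Complex.normSq_eq_norm_sq, hw, one_pow]
    have hev : ∀ j, w * (c j : ℂ) = (A j).eval w := by
      intro j
      fin_cases j
      · simp only [c, A, Fin.zero_eta, Matrix.cons_val_zero, eval_mul, eval_C, eval_add, eval_pow,
          eval_X, eval_one]
        apply Complex.ext <;> simp [pow_two] <;> nlinarith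
      · simp only [c, A, Fin.mk_one, Matrix.cons_val_one, Matrix.cons_val_fin_one, eval_mul, eval_C,
          eval_sub, eval_pow, eval_X, eval_one]
        apply Complex.ext <;> simp [pow_two] <;> nlinarith
    have hL : L (fun _ => w) = ∑ r : Fin k → Fin 2, (∏ i, c (r i)) • L fun i => v (r i) := by
      conv_lhs => rw [hsum]
      rw [L.map_sum]
      exact Finset.sum_congr rfl fun r _ => L.map_smul_univ (fun i => c (r i)) _
    rw [hL, eval_finsetSum, Finset.mul_sum]
    refine Finset.sum_congr rfl fun r _ => ?_
    rw [eval_mul, eval_C, eval_prod, ← Finset.prod_congr rfl fun i _ => hev (r i),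
      Finset.prod_mul_distrib, Complex.real_smul, Complex.ofReal_prod]
    simp
    ring

open Filter Topology in
/-- A `Cᵏ` function that is homogeneous of degree `k` along the open ray through `z` coincides at `z`
with its `k`-th order Taylor term at the origin. -/
lemma iteratedFDeriv_zero_diag {k : ℕ} {u : ℂ → ℂ} (hreg : ContDiff ℝ (k : ℕ∞) u) (z : ℂ)
    (hz : ∀ t : ℝ, 0 < t → u (t • z) = t ^ k • u z) :
    iteratedFDeriv ℝ k u 0 (fun _ => z) = (k.factorial : ℂ) * u z := by
  let ℓ : ℝ →L[ℝ] ℂ := (ContinuousLinearMap.id ℝ ℝ).smulRight z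
  have hline : ∀ t : ℝ, iteratedFDeriv ℝ k u (t • z) (fun _ => z)
      = iteratedDeriv k (fun s : ℝ => u (s • z)) t := by
    intro t
    have h := ℓ.iteratedFDeriv_comp_right hreg t (i := k) le_rfl
    have h' : (fun s : ℝ => u (s • z)) = u ∘ ℓ := rfl
    rw [iteratedDeriv_eq_iteratedFDeriv, h', h]
    simp [ℓ]
  have hpos : ∀ t : ℝ, 0 < t →
      iteratedFDeriv ℝ k u (t • z) (fun _ => z) = (k.factorial : ℂ) * u z := by
    intro t ht
    have he : (fun s : ℝ => u (s • z)) =ᶠ[𝓝 t] fun s => s ^ k • u z := by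
      filter_upwards [lt_mem_nhds ht] with s hs using hz s hs
    rw [hline, he.iteratedDeriv_eq]
    rw [iteratedDeriv_smul_const (by fun_prop), iteratedDeriv_pow, Nat.descFactorial_self]
    simp
  have hcont : Continuous fun t : ℝ => iteratedFDeriv ℝ k u (t • z) (fun _ => z) := by
    have h1 : Continuous (iteratedFDeriv ℝ k u) := hreg.continuous_iteratedFDeriv le_rfl
    have h2 : Continuous fun t : ℝ => iteratedFDeriv ℝ k u (t • z) :=
      h1.comp (by fun_prop)
    exact (ContinuousMultilinearMap.apply ℝ (fun _ : Fin k => ℂ) ℂ (fun _ => z)).continuous.comp h2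
  have hlim := (hcont.tendsto 0).mono_left (nhdsWithin_le_nhds (s := Set.Ioi 0))
  rw [zero_smul] at hlim
  refine tendsto_nhds_unique hlim (tendsto_const_nhds.congr' ?_)
  filter_upwards [self_mem_nhdsWithin] with t ht using (hpos t ht).symm

open Polynomial in
/-- Lemma `regu`: if the function written in polar coordinates as `rᵏ e^{imθ}`
(i.e. `u(z) = ‖z‖ᵏ (z/‖z‖)ᵐ` for `z ≠ 0`) is `Cᵏ` on `ℂ ≅ ℝ²`, then `k ≥ |m|`. -/
theorem polar_mode_regularity
    (m : ℤ) (k : ℕ) (u : ℂ → ℂ)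
    (hreg : ContDiff ℝ (k : ℕ∞) u)
    (hu : ∀ z : ℂ, z ≠ 0 → u z = (‖z‖ : ℂ) ^ k * (z / (‖z‖ : ℂ)) ^ m) :
    m.natAbs ≤ k := by
  obtain ⟨P, hdeg, hP⟩ :=
    exists_polynomial_on_circle k (iteratedFDeriv ℝ k u 0).toMultilinearMap
  have hfac : (k.factorial : ℂ) ≠ 0 := by exact_mod_cast k.factorial_ne_zero
  have hcircle : ∀ w : ℂ, ‖w‖ = 1 → (k.factorial : ℂ) * w ^ ((k : ℤ) + m) = P.eval w := by
    intro w hw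
    have hw0 : w ≠ 0 := by
      rintro rfl
      simp at hw
    have huw : u w = w ^ m := by simp [hu w hw0, hw]
    have hd := iteratedFDeriv_zero_diag hreg w fun t ht => by
      have ht' : (t : ℂ) ≠ 0 := by exact_mod_cast ht.ne'
      rw [huw, hu _ (smul_ne_zero ht.ne' hw0), norm_smul, hw, Real.norm_of_nonneg ht.le]
      simp [mul_div_cancel_left₀ _ ht']
    have hPw := hP w hw
    rw [ContinuousMultilinearMap.coe_coe, hd, huw] at hPw
    rw [← hPw, zpow_add₀ hw0, zpow_natCast]
    ring
  have hinf : {w : ℂ | ‖w‖ = 1}.Infinite := by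
    -- The real parts of points on the circle cover `[0, 1]`.
    refine Set.Infinite.of_image Complex.re ((Set.Icc_infinite (zero_lt_one' ℝ)).mono ?_)
    intro x hx
    refine ⟨⟨x, √(1 - x ^ 2)⟩, ?_, rfl⟩
    have hs : 0 ≤ 1 - x ^ 2 := by nlinarith [hx.1, hx.2]
    have hsq : ‖(⟨x, √(1 - x ^ 2)⟩ : ℂ)‖ ^ 2 = 1 := by
      rw [← Complex.normSq_eq_norm_sq, Complex.normSq_mk, Real.mul_self_sqrt hs]
      ring
    exact (pow_eq_one_iff_of_nonneg (norm_nonneg _) two_ne_zero).mp hsq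
  have hext : ∀ Q R : ℂ[X], (∀ w : ℂ, ‖w‖ = 1 → Q.eval w = R.eval w) → Q = R := fun Q R h =>
    Polynomial.eq_of_infinite_eval_eq Q R (hinf.mono h)
  have hlow : 0 ≤ (k : ℤ) + m := by
    by_contra! hneg
    obtain ⟨n, hn⟩ := Int.eq_ofNat_of_zero_le (show 0 ≤ -((k : ℤ) + m) by omega)
    have hpoly : X ^ n * P = C (k.factorial : ℂ) := by
      refine hext _ _ fun w hw => ?_
      have hw0 : w ≠ 0 := by
        rintro rfl
        simp at hw
      rw [eval_mul, ← hcircle w hw, show (k : ℤ) + m = -(n : ℤ) by omega]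
      simp only [eval_pow, eval_X, eval_C, zpow_neg, zpow_natCast]
      field_simp
    have h0 := congrArg (Polynomial.eval 0) hpoly
    rw [eval_mul, eval_pow, eval_X, zero_pow (by omega), zero_mul, eval_C] at h0
    exact hfac h0.symm
  obtain ⟨n, hn⟩ := Int.eq_ofNat_of_zero_le hlow
  have hpoly : C (k.factorial : ℂ) * X ^ n = P := by
    refine hext _ _ fun w hw => ?_
    rw [← hcircle w hw, hn]
    simp
  rw [← hpoly, natDegree_C_mul_X_pow n _ hfac] at hdeg
  omega
end

section
/- Let m ∈ ℤ and k ∈ ℕ. Let f : ℝ → ℂ and g : ℂ → ℂ satisfy g(z) = (z/‖z‖)ᵐ · f(‖z‖) for every z ≠ 0, and suppose g is k-times continuously differentiable on ℂ (identified with ℝ²). Then, letting φ : ℝ → ℂ be the restriction of g to the real axis, φ(r) = g(r): (1) φ is k-times continuously differentiable and φ(r) = f(r) for all r > 0; (2) the j-th derivative of φ at 0 vanishes for every natural number j with j ≤ min(|m| − 1, k); (3) the j-th derivative of φ at 0 vanishes for every j with |m| + 1 ≤ j ≤ k such that j − |m| is odd. -/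
/-!
Let `T` be the `j`-th derivative of `g` at the origin, a real `j`-linear map on `ℂ`, so that the
`j`-th derivative of the restriction to the real axis is `T(1, …, 1)`. By continuity
`g (u z) = uᵐ g z` for all `z` and all `‖u‖ = 1`, and differentiating `j` times at `0` gives
`T(u, …, u) = uᵐ T(1, …, 1)` (`iteratedFDeriv_diag_of_equivariant`).

If `j - |m|` is odd, take `u = -1`: then `(-1)ʲ T(1, …, 1) = (-1)ᵐ T(1, …, 1)`.
If `j < |m|`, observe that `u ↦ T(u, …, u)` restricted to the unit circle is a trigonometric
polynomial of degree at most `j` (`exists_polynomial_diag`), so it has no frequency `m`, and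
`T(1, …, 1) = 0`. This avoids an explicit Taylor expansion of `g`.
-/

open Polynomial in
/-- On the unit circle, the diagonal of a real `j`-linear map on `ℂ` is a trigonometric polynomial
of degree at most `j`; multiplying by `uʲ` clears the negative frequencies. -/
lemma exists_polynomial_diag {j : ℕ} (T : MultilinearMap ℝ (fun _ : Fin j => ℂ) ℂ) :
    ∃ R : ℂ[X], R.natDegree ≤ 2 * j ∧
      ∀ u : ℂ, ‖u‖ = 1 → u ^ j * T (fun _ => u) = R.eval u := by
  -- `u * re u = (u² + 1) / 2` and `u * im u = (u² - 1) / (2i)` on the unit circle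
  let Q : Fin 2 → ℂ[X] := ![C (1 / 2) * (X ^ 2 + 1), C (-Complex.I / 2) * (X ^ 2 - 1)]
  let c : Fin 2 → ℂ → ℝ := ![Complex.re, Complex.im]
  let v : Fin 2 → ℂ := ![1, Complex.I]
  have hQdeg : ∀ e, (Q e).natDegree ≤ 2 := by
    intro e
    fin_cases e
    · change (C (1 / 2 : ℂ) * (X ^ 2 + 1)).natDegree ≤ 2
      compute_degree
    · change (C (-Complex.I / 2 : ℂ) * (X ^ 2 - 1)).natDegree ≤ 2
      compute_degree
  have hQ : ∀ e, ∀ u : ℂ, ‖u‖ = 1 → u * (c e u : ℂ) = (Q e).eval u := by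
    intro e u hu
    have h1 : u * (starRingEnd ℂ) u = 1 := by
      rw [Complex.mul_conj, Complex.normSq_eq_norm_sq, hu]; simp
    fin_cases e
    · change u * (u.re : ℂ) = (C (1 / 2 : ℂ) * (X ^ 2 + 1)).eval u
      simp only [eval_mul, eval_C, eval_add, eval_pow, eval_X, eval_one]
      rw [Complex.re_eq_add_conj]
      linear_combination (1 / 2) * h1
    · change u * (u.im : ℂ) = (C (-Complex.I / 2 : ℂ) * (X ^ 2 - 1)).eval u
      simp only [eval_mul, eval_C, eval_sub, eval_pow, eval_X, eval_one]
      rw [Complex.im_eq_sub_conj]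
      field_simp
      linear_combination (-1) * h1 + (u ^ 2 - 1) * Complex.I_sq
  refine ⟨∑ r : Fin j → Fin 2, C (T fun i => v (r i)) * ∏ i, Q (r i), ?_, ?_⟩
  · refine natDegree_sum_le_of_forall_le _ _ fun r _ => ?_
    refine (natDegree_C_mul_le _ _).trans ((natDegree_prod_le _ _).trans ?_)
    refine (Finset.sum_le_sum fun i _ => hQdeg (r i)).trans ?_
    simp [mul_comm]
  · intro u hu
    have hsum : u = ∑ e, c e u • v e := by
      simp [c, v, Fin.sum_univ_two, Complex.re_add_im]
    have hT : T (fun _ => u) = ∑ r : Fin j → Fin 2, T (fun i => c (r i) u • v (r i)) := by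
      conv_lhs => rw [hsum]
      exact T.map_sum (fun _ e => c e u • v e)
    rw [hT, Finset.mul_sum, eval_finsetSum]
    refine Finset.sum_congr rfl fun r _ => ?_
    rw [T.map_smul_univ, eval_mul, eval_C, eval_prod, Complex.real_smul]
    simp_rw [← hQ _ u hu]
    rw [Finset.prod_mul_distrib]
    push_cast
    simp
    ring

lemma iteratedFDeriv_diag_of_equivariant {m : ℤ} {k j : ℕ} {g : ℂ → ℂ}
    (hreg : ContDiff ℝ k g) (hj : j ≤ k) {u : ℂ} (heq : ∀ z, g (u * z) = u ^ m * g z) :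
    iteratedFDeriv ℝ j g 0 (fun _ => u) = u ^ m * iteratedFDeriv ℝ j g 0 (fun _ => 1) := by
  let L : ℂ →L[ℝ] ℂ := ContinuousLinearMap.mul ℝ ℂ u
  have hfun : g ∘ L = u ^ m • g := funext fun z => by simp [L, heq]
  have hj' : (j : WithTop ℕ∞) ≤ k := by exact_mod_cast hj
  have h1 := L.iteratedFDeriv_comp_right hreg 0 hj'
  rw [hfun, iteratedFDeriv_const_smul_apply ((hreg.of_le hj').contDiffAt)] at h1
  have h2 := DFunLike.congr_fun h1 (fun _ => (1 : ℂ))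
  simpa [L] using h2.symm

/-- Lemma `usefullemma`: if `g(z) = (z/‖z‖)ᵐ f(‖z‖)` (i.e. `g(re^{iθ}) = e^{imθ}f(r)`)
is `Cᵏ` on `ℂ ≅ ℝ²`, then the restriction `φ(r) = g(r)` of `g` to the real axis is
`Cᵏ`, agrees with `f` for `r > 0`, its derivatives of order `j ≤ min(|m|−1, k)`
vanish at `0`, and its derivatives of order `j` with `|m|+1 ≤ j ≤ k` and
`j − |m|` odd also vanish at `0`. -/
theorem azimuthal_mode_profile_compatibility
    (m : ℤ) (k : ℕ) (f : ℝ → ℂ) (g : ℂ → ℂ)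
    (hg : ∀ z : ℂ, z ≠ 0 → g z = (z / (‖z‖ : ℂ)) ^ m * f ‖z‖)
    (hreg : ContDiff ℝ (k : ℕ∞) g) :
    ContDiff ℝ (k : ℕ∞) (fun r : ℝ => g r) ∧
    (∀ r : ℝ, 0 < r → g r = f r) ∧
    (∀ j : ℕ, (j : ℤ) ≤ min (|m| - 1) (k : ℤ) →
      iteratedDeriv j (fun r : ℝ => g r) 0 = 0) ∧
    (∀ j : ℕ, m.natAbs + 1 ≤ j → j ≤ k → Odd (j - m.natAbs) →
      iteratedDeriv j (fun r : ℝ => g r) 0 = 0) := by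
  have hreg' : ContDiff ℝ k g := by exact_mod_cast hreg
  have hpos : ∀ r : ℝ, 0 < r → g r = f r := by
    intro r hr
    have hr' : (r : ℂ) ≠ 0 := by exact_mod_cast hr.ne'
    rw [hg r hr', Complex.norm_of_nonneg hr.le, div_self hr', one_zpow, one_mul]
  have hequiv : ∀ u : ℂ, ‖u‖ = 1 → ∀ z, g (u * z) = u ^ m * g z := by
    intro u hu
    have hu0 : u ≠ 0 := by
      rintro rfl
      simp at hu
    -- The value `g 0` is not constrained by `hg`; it is reached by continuity.
    refine congrFun (Continuous.ext_on (dense_compl_singleton (0 : ℂ))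
      (hreg.continuous.comp (continuous_const.mul continuous_id))
      (continuous_const.mul hreg.continuous) fun z hz => ?_)
    have hz : z ≠ 0 := hz
    change g (u * z) = u ^ m * g z
    rw [hg _ (mul_ne_zero hu0 hz), hg z hz, norm_mul, hu, one_mul, mul_div_assoc, mul_zpow,
      mul_assoc]
  have hφ : ∀ j ≤ k, iteratedDeriv j (fun r : ℝ => g r) 0
      = iteratedFDeriv ℝ j g 0 (fun _ => 1) := by
    intro j hj
    have h := Complex.ofRealCLM.iteratedFDeriv_comp_right hreg' 0
      (i := j) (by exact_mod_cast hj)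
    rw [iteratedDeriv_eq_iteratedFDeriv]
    simpa [Function.comp_def] using DFunLike.congr_fun h (fun _ => (1 : ℝ))
  refine ⟨hreg.comp Complex.ofRealCLM.contDiff, hpos, ?_, ?_⟩
  · intro j hj
    obtain ⟨hjm, hjk⟩ := le_min_iff.mp hj
    have hjk : j ≤ k := by exact_mod_cast hjk
    rw [hφ j hjk]
    obtain ⟨R, hRdeg, hR⟩ := exists_polynomial_diag (iteratedFDeriv ℝ j g 0).toMultilinearMap
    set a := iteratedFDeriv ℝ j g 0 (fun _ => 1) with ha
    have key : ∀ u : ℂ, ‖u‖ = 1 → u ^ j * (u ^ m * a) = R.eval u := by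
      intro u hu
      rw [← hR u hu, ha, ← iteratedFDeriv_diag_of_equivariant hreg' hjk (hequiv u hu)]
      rfl
    have hinf : (Metric.sphere (0 : ℂ) 1).Infinite := by
      have hconn := isPreconnected_sphere (E := ℂ) (by simp) 0 1
      exact hconn.infinite_of_nontrivial ⟨1, by simp, -1, by simp, by norm_num⟩
    obtain ⟨n, rfl | rfl⟩ := m.eq_nat_or_neg
    · have hjn : j < n := by simp at hjm; omega
      have hpoly : Polynomial.C a * Polynomial.X ^ (j + n) = R := by
        refine Polynomial.eq_of_infinite_eval_eq _ _ (hinf.mono fun u hu => ?_)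
        have hu : ‖u‖ = 1 := by simpa using hu
        simp only [Set.mem_ofPred_eq, ← key u hu, Polynomial.eval_mul, Polynomial.eval_C,
          Polynomial.eval_pow, Polynomial.eval_X, zpow_natCast]
        ring
      have hc := congrArg (fun p => p.coeff (j + n)) hpoly
      simpa [Polynomial.coeff_eq_zero_of_natDegree_lt (show R.natDegree < j + n by omega)] using hc
    · have hjn : j < n := by simp at hjm; omega
      have hpoly : Polynomial.C a * Polynomial.X ^ j = R * Polynomial.X ^ n := by
        refine Polynomial.eq_of_infinite_eval_eq _ _ (hinf.mono fun u hu => ?_)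
        have hu : ‖u‖ = 1 := by simpa using hu
        have hu0 : u ≠ 0 := by
          rintro rfl
          simp at hu
        simp only [Set.mem_ofPred_eq, ← key u hu, Polynomial.eval_mul, Polynomial.eval_C,
          Polynomial.eval_pow, Polynomial.eval_X, zpow_neg, zpow_natCast]
        field_simp
      have hc := congrArg (fun p => p.coeff j) hpoly
      simpa [Polynomial.coeff_mul_X_pow', hjn.not_ge] using hc
  · intro j hmj hjk hodd
    rw [hφ j hjk]
    have h := iteratedFDeriv_diag_of_equivariant hreg' hjk (hequiv (-1) (by simp))
    have h' := (iteratedFDeriv ℝ j g 0).map_smul_univ (fun _ => (-1 : ℝ)) (fun _ => (1 : ℂ))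
    simp only [neg_smul, one_smul, Finset.prod_const, Finset.card_univ, Fintype.card_fin] at h'
    rw [h', Complex.real_smul] at h
    push_cast at h
    have hpar : ((-1 : ℂ) ^ j) = -(-1) ^ m := by
      obtain ⟨t, ht⟩ := hodd
      have hm : (-1 : ℂ) ^ m = (-1) ^ m.natAbs := by
        obtain ⟨n, rfl | rfl⟩ := m.eq_nat_or_neg <;> simp [← inv_pow, inv_neg]
      rw [hm, show j = m.natAbs + (2 * t + 1) by omega, pow_add, pow_succ, pow_mul]
      simp
    rw [hpar] at h
    have hne : (-1 : ℂ) ^ m ≠ 0 := zpow_ne_zero _ (by norm_num)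
    have h2 : (-1 : ℂ) ^ m * iteratedFDeriv ℝ j g 0 (fun _ => 1) = 0 := by
      linear_combination (-1 / 2) * h
    exact (mul_eq_zero.mp h2).resolve_left hne
end

section
/- Let n ≥ 2 and let F : ℝⁿ × ℝ → ℝ be smooth (C^∞) and rotationally symmetric in its first factor, i.e. F(x, z) = F(x′, z) whenever ‖x‖ = ‖x′‖ (x, x′ ∈ ℝⁿ, z ∈ ℝ). Then there exists a smooth function g : ℝ × ℝ → ℝ such that F(x, z) = g(‖x‖², z) for all (x, z) ∈ ℝⁿ × ℝ. -/
/-!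
Restricting `F` to a line through the origin of `ℝⁿ` gives a smooth function `f (t, z)`, even in
`t`, with `F (x, z) = f (‖x‖, z)`. The theorem is thus Whitney's theorem on even functions, with a
parameter `z`: a smooth `f`, even in `t`, equals `g (t², z)` with `g` smooth on all of `ℝ × ℝ`
(`exists_smooth_of_even`).

For `t` away from `0` one may take `g (s, z) = f (√s, z)`, so a cutoff reduces to `f` supported in
`|t| ≤ 1`. Let `f̂ (ξ, z) = ∫ f (t, z) cos (t ξ) dt` be the cosine transform in `t`, so that Fourier
inversion reads `2π f (t, z) = ∫ f̂ (ξ, z) cos (t ξ) dξ`. Choose a smooth `C : ℝ → ℝ` with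
`C (t²) = cos t` and with all derivatives bounded on `ℝ`: the entire function `cos √u`, cut off for
`u < 0` (`exists_bddSmooth_cos_sqrt`). Then
`g (s, z) = (2π)⁻¹ ∫ f̂ (ξ, z) C (s ξ²) dξ` is defined for every real `s` and satisfies
`g (t², z) = f (t, z)`.

Smoothness of `g` follows by induction because integrals of this form are closed under
differentiation: `∂_s` replaces `(C, f)` by `(C', -∂ₜ² f)`, as `ξ² f̂` is the transform of
`-∂ₜ² f`, and `∂_z` replaces `f` by `∂_z f`. The same integration by parts gives
`|f̂| ≤ M / (1 + ξ²)`, locally uniformly in `z`, which justifies differentiating under the integral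
sign (`hasFDerivAt_evenExtend`).
-/

open MeasureTheory Filter Topology Set
open scoped ContDiff

/-! ### A bounded smooth function `C` with `C (t²) = cos t` -/

/-- Smooth functions on the line all of whose derivatives (of every order, including zero) are
bounded. -/
def BddSmooth (C : ℝ → ℝ) : Prop :=
  ContDiff ℝ ∞ C ∧ ∀ k : ℕ, ∃ M : ℝ, ∀ u, |iteratedDeriv k C u| ≤ M

lemma BddSmooth.deriv {C : ℝ → ℝ} (h : BddSmooth C) : BddSmooth (deriv C) := by
  refine ⟨(contDiff_infty_iff_deriv.1 h.1).2, fun k => ?_⟩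
  obtain ⟨M, hM⟩ := h.2 (k + 1)
  exact ⟨M, fun u => by simpa [iteratedDeriv_succ'] using hM u⟩

/-- The power series `∑ (-1)ⁿ uⁿ / (2n)!` has infinite radius of convergence. -/
lemma exists_smooth_cos_sqrt :
    ∃ c : ℝ → ℝ, ContDiff ℝ ∞ c ∧ ∀ t, c (t ^ 2) = Real.cos t := by
  let a : ℕ → ℝ := fun n => (-1) ^ n / ((2 * n).factorial : ℝ)
  have ha : ∀ n, a n ≠ 0 := fun n => by simp [a, Nat.factorial_ne_zero]
  have hr : (FormalMultilinearSeries.ofScalars ℝ a).radius = ⊤ := by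
    apply FormalMultilinearSeries.ofScalars_radius_eq_top_of_tendsto
    · exact Eventually.of_forall ha
    · have h1 : ∀ n : ℕ, ‖a n.succ‖ / ‖a n‖ = 1 / (((2 * n + 1 : ℕ) : ℝ) * ((2 * n + 2 : ℕ) : ℝ)) := by
        intro n
        have : (2 * n.succ).factorial = (2 * n + 2) * ((2 * n + 1) * (2 * n).factorial) := by
          rw [show 2 * n.succ = 2 * n + 1 + 1 by omega, Nat.factorial_succ, Nat.factorial_succ]
        have hf : ((2 * n).factorial : ℝ) ≠ 0 := by positivity
        simp only [a, norm_div, norm_pow, norm_neg, norm_one, one_pow, this]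
        simp only [Nat.cast_mul, norm_mul, Real.norm_natCast]
        have h2 : ((2 * n + 1 : ℕ) : ℝ) ≠ 0 := by positivity
        have h3 : ((2 * n + 2 : ℕ) : ℝ) ≠ 0 := by positivity
        field_simp
      simp_rw [h1]
      refine squeeze_zero (fun n => by positivity) (fun n => ?_)
        tendsto_one_div_add_atTop_nhds_zero_nat
      apply one_div_le_one_div_of_le (by positivity)
      push_cast
      nlinarith [(Nat.cast_nonneg n : (0:ℝ) ≤ n)]
  have hb := (FormalMultilinearSeries.ofScalars ℝ a).hasFPowerSeriesOnBall (by rw [hr]; simp)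
  refine ⟨(FormalMultilinearSeries.ofScalars ℝ a).sum, ?_, fun t => ?_⟩
  · have := hb.analyticOnNhd
    rw [hr, Metric.eball_top] at this
    exact contDiffOn_univ.1 (this.contDiffOn uniqueDiffOn_univ)
  · have h1 := hb.hasSum (y := t ^ 2) (by rw [hr]; simp)
    have h2 := Real.hasSum_cos t
    rw [zero_add] at h1
    refine h1.unique ?_
    have h3 : (fun n => FormalMultilinearSeries.ofScalars ℝ a n fun _ => t ^ 2) =
        fun n => (-1) ^ n * t ^ (2 * n) / ((2 * n).factorial : ℝ) := by
      funext n
      rw [FormalMultilinearSeries.ofScalars_apply_eq]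
      simp only [a, smul_eq_mul]
      rw [pow_mul]; ring
    rw [h3]
    exact h2

/-- The equation `4 u c'' + 2 c' + c = 0` satisfied by `c (u) = cos √u`, differentiated `k`
times. -/
lemma cos_sqrt_ode {c : ℝ → ℝ} (hc : ContDiff ℝ ∞ c) (hcos : ∀ t, c (t ^ 2) = Real.cos t) (k : ℕ) :
    ∀ u : ℝ, 0 < u → 4 * u * iteratedDeriv (k + 2) c u + (4 * k + 2) * iteratedDeriv (k + 1) c u
      + iteratedDeriv k c u = 0 := by
  have hd : ∀ (k : ℕ) (u : ℝ), HasDerivAt (iteratedDeriv k c) (iteratedDeriv (k + 1) c u) u := by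
    intro k u
    rw [iteratedDeriv_succ]
    exact ((hc.differentiable_iteratedDeriv k (by exact_mod_cast ENat.natCast_lt_top k)) u).hasDerivAt
  induction k with
  | zero =>
    intro u hu
    have hsq : ∀ t : ℝ, HasDerivAt (fun t : ℝ => t ^ 2) (2 * t) t := fun t => by
      simpa using hasDerivAt_pow 2 t
    have h1 : ∀ t, iteratedDeriv 1 c (t ^ 2) * (2 * t) = - Real.sin t := by
      intro t
      have := (hd 0 (t ^ 2)).comp t (hsq t)
      have e : iteratedDeriv 0 c ∘ (fun t : ℝ => t ^ 2) = Real.cos := by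
        ext t; simp [hcos]
      rw [e] at this
      exact this.unique (Real.hasDerivAt_cos t)
    have h2 : ∀ t, iteratedDeriv 2 c (t ^ 2) * (2 * t) * (2 * t) + iteratedDeriv 1 c (t ^ 2) * 2
        = - Real.cos t := by
      intro t
      have := ((hd 1 (t ^ 2)).comp t (hsq t)).mul ((hasDerivAt_id t).const_mul 2)
      have e : (iteratedDeriv 1 c ∘ (fun t : ℝ => t ^ 2)) * (fun t => 2 * id t)
          = fun t => - Real.sin t := by
        ext t; simp [← h1]
      rw [e] at this
      simpa using this.unique (Real.hasDerivAt_sin t).neg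
    have := h2 (Real.sqrt u)
    rw [← hcos, Real.sq_sqrt hu.le] at this
    have h3 := Real.mul_self_sqrt hu.le
    simp only [zero_add, iteratedDeriv_zero, Nat.cast_zero]
    linear_combination this - 4 * iteratedDeriv 2 c u * h3
  | succ k ih =>
    intro u hu
    have h := ((((hasDerivAt_id u).const_mul 4).mul (hd (k + 2) u)).add
      ((hd (k + 1) u).const_mul (4 * (k : ℝ) + 2))).add (hd k u)
    have h0 : HasDerivAt (fun _ : ℝ => (0 : ℝ)) 0 u := hasDerivAt_const _ _
    have h' := h.congr_of_eventuallyEq (f₁ := fun _ => (0 : ℝ)) (by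
      filter_upwards [lt_mem_nhds hu] with v hv
      simpa using (ih v hv).symm)
    have := h'.unique h0
    push_cast
    simp only [id] at this
    linear_combination this

/-- Bounds for two consecutive derivatives propagate to the next one, as the differential equation
expresses `4 u c⁽ᵏ⁺²⁾` through `c⁽ᵏ⁺¹⁾` and `c⁽ᵏ⁾`, and `u ≥ 1`. -/
lemma cos_sqrt_bdd {c : ℝ → ℝ} (hc : ContDiff ℝ ∞ c) (hcos : ∀ t, c (t ^ 2) = Real.cos t) (k : ℕ) :
    (∃ M, ∀ u ≥ 1, |iteratedDeriv k c u| ≤ M) ∧ ∃ M, ∀ u ≥ 1, |iteratedDeriv (k + 1) c u| ≤ M := by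
  induction k with
  | zero =>
    refine ⟨⟨1, fun u hu => ?_⟩, 1, fun u hu => ?_⟩
    · have := hcos (Real.sqrt u)
      rw [Real.sq_sqrt (by linarith)] at this
      simpa [this] using Real.abs_cos_le_one _
    · have h1 : 1 ≤ Real.sqrt u := by rwa [Real.one_le_sqrt]
      have hd : HasDerivAt (fun t : ℝ => c (t ^ 2)) (iteratedDeriv 1 c u * (2 * Real.sqrt u))
          (Real.sqrt u) := by
        have h2 : HasDerivAt (fun t : ℝ => t ^ 2) (2 * Real.sqrt u) (Real.sqrt u) := by
          simpa using hasDerivAt_pow 2 (Real.sqrt u)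
        have h3 : HasDerivAt c (iteratedDeriv 1 c u) (Real.sqrt u ^ 2) := by
          rw [Real.sq_sqrt (by linarith), iteratedDeriv_one]
          exact ((hc.differentiable (by simp)) u).hasDerivAt
        exact HasDerivAt.comp (h₂ := c) (h := fun t : ℝ => t ^ 2) (Real.sqrt u) h3 h2
      simp only [hcos] at hd
      have h4 := congrArg abs (hd.unique (Real.hasDerivAt_cos _))
      rw [abs_mul, abs_neg, abs_of_nonneg (show 0 ≤ 2 * Real.sqrt u by positivity)] at h4
      have h5 := Real.abs_sin_le_one (Real.sqrt u)
      simp only [zero_add]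
      nlinarith [abs_nonneg (iteratedDeriv 1 c u)]
  | succ k ih =>
    obtain ⟨⟨M, hM⟩, N, hN⟩ := ih
    refine ⟨⟨N, hN⟩, (4 * k + 2) * N + M, fun u hu => ?_⟩
    have h := cos_sqrt_ode hc hcos k u (by linarith)
    have h1 : 4 * u * iteratedDeriv (k + 2) c u =
      -((4 * k + 2) * iteratedDeriv (k + 1) c u + iteratedDeriv k c u) := by linear_combination h
    have h2 := congrArg abs h1
    have h3 := abs_add_le ((4 * k + 2) * iteratedDeriv (k + 1) c u) (iteratedDeriv k c u)
    rw [abs_mul, abs_of_nonneg (show 0 ≤ 4 * u by linarith), abs_neg] at h2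
    rw [abs_mul, abs_of_nonneg (show (0 : ℝ) ≤ 4 * k + 2 by positivity)] at h3
    have h4 : (4 * (k : ℝ) + 2) * |iteratedDeriv (k + 1) c u| ≤ (4 * k + 2) * N := by
      gcongr; exact hN u hu
    have h5 := hM u hu
    change |iteratedDeriv (k + 2) c u| ≤ _
    nlinarith [abs_nonneg (iteratedDeriv (k + 2) c u)]

/-- A globally bounded substitute for `u ↦ cos √u`: the entire function `cos √u`, which grows
exponentially as `u → -∞`, is cut off on the negative half-line. -/
lemma exists_bddSmooth_cos_sqrt :
    ∃ C : ℝ → ℝ, BddSmooth C ∧ ∀ t, C (t ^ 2) = Real.cos t := by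
  obtain ⟨c, hc, hcos⟩ := exists_smooth_cos_sqrt
  let C : ℝ → ℝ := fun u => Real.smoothTransition (u + 2) * c u
  have hC : ContDiff ℝ ∞ C :=
    (Real.smoothTransition.contDiff.comp (contDiff_id.add contDiff_const)).mul hc
  refine ⟨C, ⟨hC, fun k => ?_⟩, fun t => ?_⟩
  · obtain ⟨M, hM⟩ := (cos_sqrt_bdd hc hcos k).1
    obtain ⟨N, hN⟩ := (isCompact_Icc (a := (-2 : ℝ)) (b := 1)).exists_bound_of_continuousOn
      (hC.continuous_iteratedDeriv k (by exact_mod_cast le_top)).continuousOn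
    refine ⟨max (max M N) 0, fun u => ?_⟩
    rcases lt_or_ge u (-2) with h | h
    · have : C =ᶠ[𝓝 u] fun _ => (0 : ℝ) := by
        filter_upwards [gt_mem_nhds h] with v hv
        simp [C, Real.smoothTransition.zero_of_nonpos (show v + 2 ≤ 0 by linarith)]
      rw [this.iteratedDeriv_eq]
      simp
    rcases le_or_gt u 1 with h' | h'
    · exact le_max_of_le_left (le_max_of_le_right (hN u ⟨h, h'⟩))
    · have : C =ᶠ[𝓝 u] c := by
        filter_upwards [lt_mem_nhds h'] with v hv
        simp [C, Real.smoothTransition.one_of_one_le (show 1 ≤ v + 2 by linarith)]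
      rw [this.iteratedDeriv_eq]
      exact le_max_of_le_left (le_max_of_le_left (hM u h'.le))
  · simp [C, hcos, Real.smoothTransition.one_of_one_le (show 1 ≤ t ^ 2 + 2 by nlinarith)]

/-! ### Cosine transform in the first variable -/

/-- Smooth functions `f (t, z)` supported in the strip `|t| ≤ 1`. -/
def StripSmooth (f : ℝ × ℝ → ℝ) : Prop :=
  ContDiff ℝ ∞ f ∧ ∀ t z : ℝ, 1 < |t| → f (t, z) = 0

/-- The directional derivative of `f (t, z)` along the constant vector `v`. -/
noncomputable def dirDeriv (v : ℝ × ℝ) (f : ℝ × ℝ → ℝ) : ℝ × ℝ → ℝ := fun p => fderiv ℝ f p v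

lemma StripSmooth.dirDeriv {f : ℝ × ℝ → ℝ} (hf : StripSmooth f) (v : ℝ × ℝ) :
    StripSmooth (dirDeriv v f) := by
  refine ⟨(hf.1.fderiv_right (m := ∞) (by simp)).clm_apply contDiff_const, fun t z ht => ?_⟩
  have : f =ᶠ[𝓝 (t, z)] fun _ => (0 : ℝ) := by
    have : {p : ℝ × ℝ | 1 < |p.1|} ∈ 𝓝 (t, z) :=
      (isOpen_lt continuous_const (continuous_fst.abs)).mem_nhds ht
    filter_upwards [this] with p hp using hf.2 p.1 p.2 hp
  simp [_root_.dirDeriv, this.fderiv_eq]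

lemma StripSmooth.sub {f g : ℝ × ℝ → ℝ} (hf : StripSmooth f) (hg : StripSmooth g) :
    StripSmooth (f - g) :=
  ⟨hf.1.sub hg.1, fun t z ht => by simp [hf.2 t z ht, hg.2 t z ht]⟩

lemma StripSmooth.neg {f : ℝ × ℝ → ℝ} (hf : StripSmooth f) : StripSmooth (-f) :=
  ⟨hf.1.neg, fun t z ht => by simp [hf.2 t z ht]⟩

lemma StripSmooth.hasDerivAt_fst {f : ℝ × ℝ → ℝ} (hf : StripSmooth f) (t z : ℝ) :
    HasDerivAt (fun t => f (t, z)) (_root_.dirDeriv (1, 0) f (t, z)) t :=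
  HasFDerivAt.comp_hasDerivAt (l := f) (f := fun t : ℝ => (t, z)) t
    ((hf.1.differentiable (by simp)) (t, z)).hasFDerivAt
    ((hasDerivAt_id t).prodMk (hasDerivAt_const t z))

lemma StripSmooth.hasDerivAt_snd {f : ℝ × ℝ → ℝ} (hf : StripSmooth f) (t z : ℝ) :
    HasDerivAt (fun z => f (t, z)) (_root_.dirDeriv (0, 1) f (t, z)) z :=
  HasFDerivAt.comp_hasDerivAt (l := f) (f := fun z : ℝ => (t, z)) z
    ((hf.1.differentiable (by simp)) (t, z)).hasFDerivAt
    ((hasDerivAt_const z t).prodMk (hasDerivAt_id z))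

/-- The cosine transform in the first variable. The interval `[-2, 2]` contains the strip
`|t| ≤ 1` in its interior, so that for `StripSmooth` functions this is the integral over `ℝ`. -/
noncomputable def cosT (f : ℝ × ℝ → ℝ) (ξ z : ℝ) : ℝ :=
  ∫ t in (-2 : ℝ)..2, f (t, z) * Real.cos (t * ξ)

lemma continuous_cosT {f : ℝ × ℝ → ℝ} (hf : Continuous f) :
    Continuous fun p : ℝ × ℝ => cosT f p.1 p.2 := by
  unfold cosT
  apply intervalIntegral.continuous_parametric_intervalIntegral_of_continuous'
  unfold Function.uncurry
  fun_prop

lemma cosT_sub {f g : ℝ × ℝ → ℝ} (hf : Continuous f) (hg : Continuous g) (ξ z : ℝ) :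
    cosT (f - g) ξ z = cosT f ξ z - cosT g ξ z := by
  unfold cosT
  rw [← intervalIntegral.integral_sub]
  · simp [sub_mul]
  all_goals exact Continuous.intervalIntegrable (by fun_prop) _ _

lemma cosT_neg (f : ℝ × ℝ → ℝ) (ξ z : ℝ) : cosT (-f) ξ z = - cosT f ξ z := by
  simp [cosT]

/-- Two integrations by parts; the boundary terms vanish since `f` is supported in `|t| ≤ 1`. -/
lemma cosT_dirDeriv_two {f : ℝ × ℝ → ℝ} (hf : StripSmooth f) (ξ z : ℝ) :
    cosT (dirDeriv (1, 0) (dirDeriv (1, 0) f)) ξ z = - (ξ ^ 2 * cosT f ξ z) := by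
  have hf1 := hf.dirDeriv (1, 0)
  have hf2 := hf1.dirDeriv (1, 0)
  have c0 := hf.1.continuous
  have c1 := hf1.1.continuous
  have c2 := hf2.1.continuous
  have hcos : ∀ t, HasDerivAt (fun t => Real.cos (t * ξ)) (-(ξ * Real.sin (t * ξ))) t := by
    intro t
    have := (Real.hasDerivAt_cos (t * ξ)).comp t ((hasDerivAt_id t).mul_const ξ)
    convert! this using 1; simp; ring
  have hsin : ∀ t, HasDerivAt (fun t => ξ * Real.sin (t * ξ)) (ξ ^ 2 * Real.cos (t * ξ)) t := by
    intro t
    have := ((Real.hasDerivAt_sin (t * ξ)).comp t ((hasDerivAt_id t).mul_const ξ)).const_mul ξ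
    convert! this using 1; simp; ring
  have i1 := intervalIntegral.integral_mul_deriv_eq_deriv_mul (a := -2) (b := 2)
    (fun t _ => hcos t) (fun t _ => hf1.hasDerivAt_fst t z)
    (Continuous.intervalIntegrable (by fun_prop) _ _)
    (Continuous.intervalIntegrable (by fun_prop) _ _)
  have i2 := intervalIntegral.integral_mul_deriv_eq_deriv_mul (a := -2) (b := 2)
    (fun t _ => hsin t) (fun t _ => hf.hasDerivAt_fst t z)
    (Continuous.intervalIntegrable (by fun_prop) _ _)
    (Continuous.intervalIntegrable (by fun_prop) _ _)
  rw [hf1.2 2 z (by norm_num), hf1.2 (-2) z (by norm_num)] at i1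
  rw [hf.2 2 z (by norm_num), hf.2 (-2) z (by norm_num)] at i2
  simp only [neg_mul, intervalIntegral.integral_neg, mul_zero, sub_zero, zero_sub, neg_neg] at i1 i2
  unfold cosT
  simp_rw [mul_comm _ (Real.cos _)]
  rw [i1, i2, ← intervalIntegral.integral_const_mul]
  simp only [mul_assoc]

lemma abs_cosT_le {f : ℝ × ℝ → ℝ} (hf : Continuous f) (z₀ : ℝ) :
    ∃ M, ∀ ξ z, z ∈ Metric.ball z₀ 1 → |cosT f ξ z| ≤ M := by
  obtain ⟨M, hM⟩ := ((isCompact_Icc (a := (-2 : ℝ)) (b := 2)).prod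
    (isCompact_closedBall z₀ 1)).exists_bound_of_continuousOn hf.continuousOn
  refine ⟨M * |2 - (-2)|, fun ξ z hz => ?_⟩
  rw [← Real.norm_eq_abs]
  apply intervalIntegral.norm_integral_le_of_norm_le_const
  intro t ht
  rw [uIoc_of_le (by norm_num)] at ht
  have h1 := hM (t, z) ⟨Ioc_subset_Icc_self ht, Metric.ball_subset_closedBall hz⟩
  rw [norm_mul]
  calc _ ≤ M * 1 := mul_le_mul h1 (Real.abs_cos_le_one _) (abs_nonneg _)
        ((norm_nonneg _).trans h1)
    _ = M := mul_one _

/-- Quadratic decay of the cosine transform, since `(1 + ξ²) f̂` is the transform of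
`f - ∂ₜ² f`. -/
lemma cosT_decay {f : ℝ × ℝ → ℝ} (hf : StripSmooth f) (z₀ : ℝ) :
    ∃ M, ∀ ξ z, z ∈ Metric.ball z₀ 1 → |cosT f ξ z| ≤ M * (1 + ξ ^ 2)⁻¹ := by
  have hf2 := (hf.dirDeriv (1, 0)).dirDeriv (1, 0)
  obtain ⟨M, hM⟩ := abs_cosT_le (hf.sub hf2).1.continuous z₀
  refine ⟨M, fun ξ z hz => ?_⟩
  have h := hM ξ z hz
  rw [cosT_sub hf.1.continuous hf2.1.continuous, cosT_dirDeriv_two hf,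
    show cosT f ξ z - -(ξ ^ 2 * cosT f ξ z) = cosT f ξ z * (1 + ξ ^ 2) by ring, abs_mul,
    abs_of_pos (show 0 < 1 + ξ ^ 2 by positivity)] at h
  rwa [← div_eq_mul_inv, le_div_iff₀ (by positivity)]

lemma integrable_cosT {f : ℝ × ℝ → ℝ} (hf : StripSmooth f) (z : ℝ) :
    Integrable fun ξ => cosT f ξ z := by
  obtain ⟨M, hM⟩ := cosT_decay hf z
  refine (integrable_inv_one_add_sq.const_mul M).mono' ?_
    (Eventually.of_forall fun ξ => hM ξ z (Metric.mem_ball_self one_pos))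
  exact ((continuous_cosT hf.1.continuous).comp
    (continuous_id.prodMk continuous_const)).aestronglyMeasurable

lemma hasDerivAt_cosT {f : ℝ × ℝ → ℝ} (hf : StripSmooth f) (ξ z : ℝ) :
    HasDerivAt (fun z => cosT f ξ z) (cosT (dirDeriv (0, 1) f) ξ z) z := by
  have c0 := hf.1.continuous
  have c1 := (hf.dirDeriv (0, 1)).1.continuous
  obtain ⟨M, hM⟩ := ((isCompact_Icc (a := (-2 : ℝ)) (b := 2)).prod
    (isCompact_closedBall z 1)).exists_bound_of_continuousOn c1.continuousOn
  refine (intervalIntegral.hasDerivAt_integral_of_dominated_loc_of_deriv_le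
    (μ := volume) (F := fun z t => f (t, z) * Real.cos (t * ξ))
    (F' := fun z t => dirDeriv (0, 1) f (t, z) * Real.cos (t * ξ))
    (bound := fun _ => M) (Metric.ball_mem_nhds z one_pos) ?_ ?_ ?_ ?_ ?_ ?_).2
  · exact Eventually.of_forall fun x => Continuous.aestronglyMeasurable (by fun_prop)
  · exact Continuous.intervalIntegrable (by fun_prop) _ _
  · exact Continuous.aestronglyMeasurable (by fun_prop)
  · refine Eventually.of_forall fun t ht x hx => ?_
    rw [uIoc_of_le (by norm_num)] at ht
    have h1 := hM (t, x) ⟨Ioc_subset_Icc_self ht, Metric.ball_subset_closedBall hx⟩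
    rw [norm_mul]
    calc _ ≤ M * 1 := mul_le_mul h1 (Real.abs_cos_le_one _) (abs_nonneg _)
          ((norm_nonneg _).trans h1)
      _ = M := mul_one _
  · simp
  · exact Eventually.of_forall fun t _ x _ => (hf.hasDerivAt_snd t x).mul_const _

/-! ### The extension to negative values of `t²` -/

/-- The candidate for (a multiple of) the function `g`: if `C (t²) = cos t`, then at `s = t²` this
is the inverse cosine transform of `cosT f`, while it also makes sense for `s < 0`. -/
noncomputable def evenExtend (C : ℝ → ℝ) (f : ℝ × ℝ → ℝ) (p : ℝ × ℝ) : ℝ :=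
  ∫ ξ : ℝ, cosT f ξ p.2 * C (p.1 * ξ ^ 2)

/-- The integrals defining `evenExtend` are closed under differentiation: differentiating `C (s ξ²)`
in `s` produces a factor `ξ²`, which is absorbed into `f` as `-∂ₜ²`. -/
lemma hasFDerivAt_evenExtend {C : ℝ → ℝ} (hC : BddSmooth C) {f : ℝ × ℝ → ℝ} (hf : StripSmooth f)
    (p : ℝ × ℝ) :
    HasFDerivAt (evenExtend C f)
      (evenExtend (deriv C) (-dirDeriv (1, 0) (dirDeriv (1, 0) f)) p • ContinuousLinearMap.fst ℝ ℝ ℝ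
        + evenExtend C (dirDeriv (0, 1) f) p • ContinuousLinearMap.snd ℝ ℝ ℝ) p := by
  have hf2 := ((hf.dirDeriv (1, 0)).dirDeriv (1, 0)).neg
  have hfz := hf.dirDeriv (0, 1)
  set f2 := -dirDeriv (1, 0) (dirDeriv (1, 0) f) with hf2def
  set fz := dirDeriv (0, 1) f
  have hξ : ∀ ξ z, cosT f2 ξ z = ξ ^ 2 * cosT f ξ z := fun ξ z => by
    rw [hf2def, cosT_neg, cosT_dirDeriv_two hf, neg_neg]
  obtain ⟨B0, hB0⟩ := hC.2 0
  obtain ⟨B1, hB1⟩ := hC.2 1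
  simp only [iteratedDeriv_zero, iteratedDeriv_one] at hB0 hB1
  obtain ⟨M2, hM2⟩ := cosT_decay hf2 p.2
  obtain ⟨Mz, hMz⟩ := cosT_decay hfz p.2
  have cC := hC.1.continuous
  have cC' := hC.deriv.1.continuous
  have meas : ∀ {h : ℝ × ℝ → ℝ} {D : ℝ → ℝ}, StripSmooth h → Continuous D → ∀ q : ℝ × ℝ,
      AEStronglyMeasurable (fun ξ : ℝ => cosT h ξ q.2 * D (q.1 * ξ ^ 2)) := by
    intro h D hh hD q
    have : Continuous fun ξ : ℝ => cosT h ξ q.2 :=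
      (continuous_cosT hh.1.continuous).comp (continuous_id.prodMk continuous_const)
    exact Continuous.aestronglyMeasurable (by fun_prop)
  have int : ∀ {h : ℝ × ℝ → ℝ} {D : ℝ → ℝ}, StripSmooth h → Continuous D →
      (∃ B, ∀ u, |D u| ≤ B) → ∀ q : ℝ × ℝ,
      Integrable (fun ξ : ℝ => cosT h ξ q.2 * D (q.1 * ξ ^ 2)) := by
    rintro h D hh hD ⟨B, hB⟩ q
    refine (integrable_cosT hh q.2).mul_bdd (c := B) ?_ ?_
    · exact Continuous.aestronglyMeasurable (by fun_prop)
    · exact Eventually.of_forall fun ξ => hB _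
  have i1 := (int hf2 cC' ⟨B1, hB1⟩ p).smul_const (ContinuousLinearMap.fst ℝ ℝ ℝ)
  have i2 := (int hfz cC ⟨B0, hB0⟩ p).smul_const (ContinuousLinearMap.snd ℝ ℝ ℝ)
  have key := hasFDerivAt_integral_of_dominated_of_fderiv_le (𝕜 := ℝ) (μ := volume)
    (F := fun (q : ℝ × ℝ) (ξ : ℝ) => cosT f ξ q.2 * C (q.1 * ξ ^ 2))
    (F' := fun q ξ => (cosT f2 ξ q.2 * deriv C (q.1 * ξ ^ 2)) • ContinuousLinearMap.fst ℝ ℝ ℝ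
      + (cosT fz ξ q.2 * C (q.1 * ξ ^ 2)) • ContinuousLinearMap.snd ℝ ℝ ℝ)
    (x₀ := p) (s := Metric.ball p 1)
    (bound := fun ξ => (M2 * B1 + Mz * B0) * (1 + ξ ^ 2)⁻¹)
    (Metric.ball_mem_nhds p one_pos) ?_ ?_ ?_ ?_ ?_ ?_
  · convert! key using 1
    rw [integral_add i1 i2, integral_smul_const, integral_smul_const]
    rfl
  · exact Eventually.of_forall fun q => meas hf cC q
  · exact int hf cC ⟨B0, hB0⟩ p
  · exact (i1.add i2).aestronglyMeasurable
  · refine Eventually.of_forall fun ξ q hq => ?_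
    have hq2 : q.2 ∈ Metric.ball p.2 1 :=
      lt_of_le_of_lt (by rw [Prod.dist_eq]; exact le_max_right _ _) (Metric.mem_ball.1 hq)
    have e1 := hM2 ξ q.2 hq2
    have e2 := hMz ξ q.2 hq2
    refine (norm_add_le _ _).trans ?_
    rw [norm_smul, norm_smul, norm_mul, norm_mul]
    simp only [Real.norm_eq_abs]
    calc _ ≤ (M2 * (1 + ξ ^ 2)⁻¹ * B1) * 1 + (Mz * (1 + ξ ^ 2)⁻¹ * B0) * 1 := by
          have a1 := (abs_nonneg _).trans e1
          have a2 := (abs_nonneg _).trans e2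
          have b1 := (abs_nonneg _).trans (hB1 0)
          have b0 := (abs_nonneg _).trans (hB0 0)
          gcongr
          · exact hB1 _
          · exact ContinuousLinearMap.norm_fst_le ℝ ℝ ℝ
          · exact hB0 _
          · exact ContinuousLinearMap.norm_snd_le ℝ ℝ ℝ
      _ = _ := by ring
  · exact integrable_inv_one_add_sq.const_mul _
  · refine Eventually.of_forall fun ξ q _ => ?_
    have d1 : HasFDerivAt (fun q : ℝ × ℝ => cosT f ξ q.2)
        (cosT fz ξ q.2 • ContinuousLinearMap.snd ℝ ℝ ℝ) q :=
      HasDerivAt.comp_hasFDerivAt (h₂ := fun z => cosT f ξ z) (f := fun q : ℝ × ℝ => q.2) q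
        (hasDerivAt_cosT hf ξ q.2) hasFDerivAt_snd
    have d2 : HasFDerivAt (fun q : ℝ × ℝ => C (q.1 * ξ ^ 2))
        (deriv C (q.1 * ξ ^ 2) • (ξ ^ 2 • ContinuousLinearMap.fst ℝ ℝ ℝ)) q :=
      HasDerivAt.comp_hasFDerivAt (h₂ := C) (f := fun q : ℝ × ℝ => q.1 * ξ ^ 2) q
        ((hC.1.differentiable (by simp)) _).hasDerivAt (hasFDerivAt_fst.mul_const _)
    convert! d1.mul d2 using 1
    rw [hξ]
    ext <;> simp <;> ring

lemma contDiff_evenExtend {C : ℝ → ℝ} (hC : BddSmooth C) {f : ℝ × ℝ → ℝ} (hf : StripSmooth f) :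
    ContDiff ℝ ∞ (evenExtend C f) := by
  refine contDiff_infty.2 fun m => ?_
  induction m generalizing C f with
  | zero =>
    exact contDiff_zero.2 (continuous_iff_continuousAt.2 fun p =>
      (hasFDerivAt_evenExtend hC hf p).continuousAt)
  | succ m ih =>
    push_cast
    refine contDiff_succ_iff_hasFDerivAt.2 ⟨_, ?_, hasFDerivAt_evenExtend hC hf⟩
    exact ((ih hC.deriv ((hf.dirDeriv (1, 0)).dirDeriv (1, 0)).neg).smul contDiff_const).add
      ((ih hC (hf.dirDeriv (0, 1))).smul contDiff_const)

/-! ### Fourier inversion and Whitney's theorem -/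

open scoped FourierTransform in
/-- For even `f` the sine part of the Fourier transform vanishes. The factor `2π` comes from
Mathlib's normalization `exp (-2πi t w)` of the Fourier kernel. -/
lemma fourier_eq_cosT {f : ℝ × ℝ → ℝ} (hf : StripSmooth f)
    (heven : ∀ t z, f (-t, z) = f (t, z)) (z w : ℝ) :
    𝓕 (fun t : ℝ => (f (t, z) : ℂ)) w = (cosT f (w * (2 * Real.pi)) z : ℂ) := by
  have c0 := hf.1.continuous
  have hint : ∀ {h : ℝ → ℝ}, Continuous h → Integrable fun t => f (t, z) * h t := by
    intro h hh
    refine Continuous.integrable_of_hasCompactSupport (by fun_prop) ?_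
    refine HasCompactSupport.intro (isCompact_Icc (a := (-1 : ℝ)) (b := 1)) fun t ht => ?_
    rw [hf.2 t z, zero_mul]
    by_contra hlt
    exact ht (abs_le.1 (not_lt.1 hlt))
  have hodd : ∫ t, f (t, z) * Real.sin (t * (w * (2 * Real.pi))) = 0 := by
    have := integral_neg_eq_self (fun t => f (t, z) * Real.sin (t * (w * (2 * Real.pi)))) volume
    simp only [heven, neg_mul, Real.sin_neg, mul_neg, integral_neg] at this
    linarith
  have hcos : ∫ t, f (t, z) * Real.cos (t * (w * (2 * Real.pi))) =
      cosT f (w * (2 * Real.pi)) z := by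
    unfold cosT
    refine (intervalIntegral.integral_eq_integral_of_support_subset fun t ht => ?_).symm
    by_contra h
    apply ht
    change f (t, z) * _ = 0
    rw [hf.2 t z, zero_mul]
    by_contra hlt
    have := abs_le.1 (not_lt.1 hlt)
    exact h ⟨by linarith, by linarith⟩
  rw [Real.fourier_real_eq_integral_exp_smul]
  have e : ∀ t : ℝ, Complex.exp (↑(-2 * Real.pi * t * w) * Complex.I) • (f (t, z) : ℂ) =
      ((f (t, z) * Real.cos (t * (w * (2 * Real.pi))) : ℝ) : ℂ)
        - ((f (t, z) * Real.sin (t * (w * (2 * Real.pi))) : ℝ) : ℂ) * Complex.I := by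
    intro t
    rw [Complex.exp_mul_I, ← Complex.ofReal_cos, ← Complex.ofReal_sin,
      show -2 * Real.pi * t * w = -(t * (w * (2 * Real.pi))) by ring, Real.cos_neg, Real.sin_neg]
    push_cast
    rw [smul_eq_mul]
    ring
  simp_rw [e]
  rw [integral_sub (hint (by fun_prop)).ofReal ((hint (by fun_prop)).ofReal.mul_const _),
    integral_mul_const, integral_complex_ofReal, integral_complex_ofReal, hodd, hcos]
  simp

open scoped FourierTransform in
/-- Fourier inversion for even functions, in terms of the cosine transform. -/
lemma evenExtend_sq {C : ℝ → ℝ} (hcos : ∀ t, C (t ^ 2) = Real.cos t) {f : ℝ × ℝ → ℝ}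
    (hf : StripSmooth f) (heven : ∀ t z, f (-t, z) = f (t, z)) (t z : ℝ) :
    evenExtend C f (t ^ 2, z) = 2 * Real.pi * f (t, z) := by
  have c0 := hf.1.continuous
  have h2pi : (2 * Real.pi) ≠ 0 := by positivity
  have hF : 𝓕 (fun t : ℝ => (f (t, z) : ℂ)) =
      fun w => ((cosT f (w * (2 * Real.pi)) z : ℝ) : ℂ) :=
    funext (fourier_eq_cosT hf heven z)
  have hcont : Continuous fun t : ℝ => (f (t, z) : ℂ) := by fun_prop
  have hint : Integrable fun t : ℝ => (f (t, z) : ℂ) := by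
    refine hcont.integrable_of_hasCompactSupport ?_
    refine HasCompactSupport.intro (isCompact_Icc (a := (-1 : ℝ)) (b := 1)) fun t ht => ?_
    rw [hf.2 t z, Complex.ofReal_zero]
    by_contra hlt
    exact ht (abs_le.1 (not_lt.1 hlt))
  have hintA : Integrable fun w => cosT f (w * (2 * Real.pi)) z :=
    (integrable_cosT hf z).comp_mul_right' h2pi
  have inv := congrFun (hcont.fourierInv_fourier_eq hint (by rw [hF]; exact hintA.ofReal)) t
  rw [hF, Real.fourierInv_eq'] at inv
  have hre := congrArg Complex.re inv
  rw [Complex.ofReal_re] at hre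
  rw [← RCLike.re_eq_complex_re] at hre
  rw [← integral_re] at hre
  · rw [← hre, evenExtend]
    have hsub := Measure.integral_comp_mul_right
      (fun ξ => cosT f ξ z * Real.cos (t * ξ)) (2 * Real.pi)
    rw [abs_of_pos (by positivity), smul_eq_mul] at hsub
    have e1 : ∀ ξ, C (t ^ 2 * ξ ^ 2) = Real.cos (t * ξ) := fun ξ => by rw [← mul_pow, hcos]
    simp_rw [e1]
    rw [← mul_right_inj' (inv_ne_zero h2pi), ← hsub, inv_mul_cancel_left₀ h2pi]
    congr 1
    funext v
    change _ = Complex.re _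
    rw [smul_eq_mul, Complex.re_mul_ofReal, Complex.exp_ofReal_mul_I_re]
    rw [mul_comm]
    congr 2
    simp
    ring
  · refine hintA.ofReal.bdd_mul (c := 1) ?_ ?_
    · exact Continuous.aestronglyMeasurable (by fun_prop)
    · exact Eventually.of_forall fun v => by rw [Complex.norm_exp_ofReal_mul_I]

/-- Whitney's theorem on even functions, with a parameter, for functions supported in a strip. -/
lemma exists_smooth_of_even_strip {f : ℝ × ℝ → ℝ} (hf : StripSmooth f)
    (heven : ∀ t z, f (-t, z) = f (t, z)) :
    ∃ g : ℝ × ℝ → ℝ, ContDiff ℝ ∞ g ∧ ∀ t z, f (t, z) = g (t ^ 2, z) := by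
  obtain ⟨C, hC, hcos⟩ := exists_bddSmooth_cos_sqrt
  refine ⟨fun p => (2 * Real.pi)⁻¹ * evenExtend C f p,
    contDiff_const.mul (contDiff_evenExtend hC hf), fun t z => ?_⟩
  change _ = (2 * Real.pi)⁻¹ * evenExtend C f (t ^ 2, z)
  rw [evenExtend_sq hcos hf heven, inv_mul_cancel_left₀ (by positivity)]

/-- Whitney's theorem on even functions, with a parameter. Away from `t = 0` one may take
`g (s, z) = f (√s, z)`; a cutoff function of `s = t²` reduces to functions supported in a
strip. -/
lemma exists_smooth_of_even {f : ℝ × ℝ → ℝ} (hf : ContDiff ℝ ∞ f)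
    (heven : ∀ t z, f (-t, z) = f (t, z)) :
    ∃ g : ℝ × ℝ → ℝ, ContDiff ℝ ∞ g ∧ ∀ t z, f (t, z) = g (t ^ 2, z) := by
  let η : ℝ → ℝ := fun s => Real.smoothTransition (2 * s - 1)
  have hη : ContDiff ℝ ∞ η :=
    Real.smoothTransition.contDiff.comp ((contDiff_const.mul contDiff_id).sub contDiff_const)
  have hη0 : ∀ s ≤ 1 / 2, η s = 0 := fun s hs =>
    Real.smoothTransition.zero_of_nonpos (by linarith)
  have hη1 : ∀ s ≥ 1, η s = 1 := fun s hs => Real.smoothTransition.one_of_one_le (by linarith)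
  obtain ⟨g₁, hg₁, h₁⟩ := exists_smooth_of_even_strip
    (f := fun p => (1 - η (p.1 ^ 2)) * f p)
    ⟨(contDiff_const.sub (hη.comp (contDiff_fst.pow 2))).mul hf, fun t z ht => by
      have : 1 ≤ t ^ 2 := by rw [← sq_abs]; nlinarith
      simp [hη1 _ this]⟩
    (fun t z => by simp [heven])
  refine ⟨fun p => g₁ p + η p.1 * f (Real.sqrt p.1, p.2), hg₁.add ?_, fun t z => ?_⟩
  · refine contDiff_iff_contDiffAt.2 fun p => ?_
    rcases lt_or_ge p.1 (1 / 2) with h | h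
    · have : (fun p : ℝ × ℝ => η p.1 * f (Real.sqrt p.1, p.2)) =ᶠ[𝓝 p] fun _ => (0 : ℝ) := by
        filter_upwards [continuous_fst.continuousAt.eventually_lt_const h] with q hq
        simp [hη0 _ hq.le]
      exact contDiffAt_const.congr_of_eventuallyEq this
    · have hs : ContDiffAt ℝ ∞ (fun q : ℝ × ℝ => Real.sqrt q.1) p :=
        contDiffAt_fst.sqrt (by linarith)
      exact (hη.comp contDiff_fst).contDiffAt.mul
        (hf.contDiffAt.comp p (hs.prodMk contDiffAt_snd))
  · have h := h₁ t z
    simp only at h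
    change _ = g₁ (t ^ 2, z) + η (t ^ 2) * f (Real.sqrt (t ^ 2), z)
    have habs : f (|t|, z) = f (t, z) := by
      rcases abs_choice t with e | e <;> rw [e]
      exact heven t z
    rw [← h, Real.sqrt_sq_eq_abs, habs]
    ring

/-- Lemma `lemm:rot-sym-extend` (first part): a smooth function on `ℝⁿ × ℝ`
(`n ≥ 2`) that is rotationally symmetric in its first factor is a smooth
function of `(‖x‖², z)`. -/
theorem rot_sym_smooth_extension
    (n : ℕ) (hn : 2 ≤ n)
    (F : EuclideanSpace ℝ (Fin n) × ℝ → ℝ)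
    (hF : ContDiff ℝ (⊤ : ℕ∞) F)
    (hsym : ∀ (x x' : EuclideanSpace ℝ (Fin n)) (z : ℝ),
      ‖x‖ = ‖x'‖ → F (x, z) = F (x', z)) :
    ∃ g : ℝ × ℝ → ℝ, ContDiff ℝ (⊤ : ℕ∞) g ∧
      ∀ (x : EuclideanSpace ℝ (Fin n)) (z : ℝ), F (x, z) = g (‖x‖ ^ 2, z) := by
  let e : EuclideanSpace ℝ (Fin n) := EuclideanSpace.single ⟨0, by omega⟩ 1
  have he : ‖e‖ = 1 := by simp [e]
  obtain ⟨g, hg, h⟩ := exists_smooth_of_even (f := fun p => F (p.1 • e, p.2))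
    (hF.comp ((contDiff_fst.smul contDiff_const).prodMk contDiff_snd))
    (fun t z => hsym _ _ z (by simp [norm_smul]))
  refine ⟨g, hg, fun x z => ?_⟩
  rw [← h]
  exact hsym _ _ z (by simp [norm_smul, he])
end

section
/- Let F : ℝ² × ℝ² → ℝ be smooth (C^∞) and satisfy F(x, y) = F(x′, y′) whenever ‖x‖ = ‖x′‖ and ‖y‖ = ‖y′‖ (x, x′, y, y′ ∈ ℝ²). Then there exists a smooth function g : ℝ × ℝ → ℝ such that F(x, y) = g(‖x‖², ‖y‖²) for all (x, y) ∈ ℝ² × ℝ². -/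
/-!
The function `f (s, t) = F ((s, 0), (t, 0))` is smooth, even in each variable and determines `F`, so
the point is that a smooth doubly even function is a smooth function `g` of `(s², t²)`. Such a `g` is
prescribed on the closed quadrant `u, v ≥ 0`; it must be shown smooth up to the boundary and extended.

For a single cosine this is explicit: there is a smooth `C : ℝ → ℝ` with `C (s²) = cos s` and all
derivatives bounded (`exists_bounded_cos_sq`). If `f` has compact support, Fourier inversion and
evenness give `f (s, t) = ∫ a(ξ) cos (2πξ₀s) cos (2πξ₁t) dξ` with `a` of Schwartz class, and
`g (u, v) = ∫ a(ξ) C ((2πξ₀)² u) C ((2πξ₁)² v) dξ` is the required function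
(`exists_contDiff_of_hasCompactSupport`); it is smooth by differentiation under the integral.

For general `f`, an even cut-off gives a suitable `g` near each point of `ℝ × ℝ`. Being a suitable
value at a given point is a convex condition, so these local choices are glued by a smooth partition
of unity.
-/

open scoped ContDiff
open MeasureTheory Filter Topology

/-- `cos √v` extends to an entire function of `v`, namely `∑ (-1)ⁿ vⁿ / (2n)!`. -/
theorem exists_contDiff_cos_sq : ∃ K : ℝ → ℝ, ContDiff ℝ ∞ K ∧ ∀ s, K (s ^ 2) = Real.cos s := by
  let c : ℕ → ℝ := fun n => (-1) ^ n / (2 * n).factorial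
  have hr : (FormalMultilinearSeries.ofScalars ℝ c).radius = ⊤ := by
    apply FormalMultilinearSeries.ofScalars_radius_eq_top_of_tendsto
    · exact Eventually.of_forall fun n => by simp only [c]; positivity
    · have h : ∀ n : ℕ, ‖c n.succ‖ / ‖c n‖ = 1 / (((2 * n + 2 : ℕ) : ℝ) * ((2 * n + 1 : ℕ) : ℝ)) := by
        intro n
        have h2 : (2 * n.succ).factorial = (2 * n + 2) * ((2 * n + 1) * (2 * n).factorial) := by
          rw [show 2 * n.succ = 2 * n + 1 + 1 by omega, Nat.factorial_succ, Nat.factorial_succ]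
        simp only [c, norm_div, norm_pow, norm_neg, norm_one, one_pow, h2, Real.norm_natCast]
        push_cast
        have : ((2 * n).factorial : ℝ) ≠ 0 := by positivity
        field_simp
      simp_rw [h]
      refine squeeze_zero (fun n => by positivity) (fun n => ?_)
        tendsto_one_div_add_atTop_nhds_zero_nat
      apply one_div_le_one_div_of_le (by positivity)
      push_cast
      nlinarith [(Nat.cast_nonneg n : (0 : ℝ) ≤ n)]
  refine ⟨FormalMultilinearSeries.ofScalarsSum c, ?_, fun s => ?_⟩
  · have h := (FormalMultilinearSeries.ofScalars ℝ c).hasFPowerSeriesOnBall (by simp [hr])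
    rw [hr] at h
    have h2 := h.analyticOnNhd
    simp only [Metric.eball_top] at h2
    exact (contDiffOn_univ.1 (h2.analyticOn.contDiffOn uniqueDiffOn_univ))
  · rw [FormalMultilinearSeries.ofScalars_sum_eq, ← (Real.hasSum_cos s).tsum_eq]
    refine tsum_congr fun n => ?_
    simp only [c, smul_eq_mul, pow_mul]
    ring

/-- A smooth `C` with `C (s²) = cos s` all of whose derivatives are bounded on the whole line. The
entire function `cos √v`, which grows like `cosh √|v|` at `-∞`, is cut off on the negative side. For
`v > 0` it satisfies `4 v C'' + 2 C' + C = 0`; differentiating this equation `k` times bounds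
`C⁽ᵏ⁺²⁾` on `[1, ∞)` in terms of `C⁽ᵏ⁺¹⁾` and `C⁽ᵏ⁾`. -/
theorem exists_bounded_cos_sq : ∃ C : ℝ → ℝ, ContDiff ℝ ∞ C ∧ (∀ s, C (s ^ 2) = Real.cos s) ∧
    ∀ k : ℕ, ∃ M : ℝ, ∀ v, ‖iteratedFDeriv ℝ k C v‖ ≤ M := by
  obtain ⟨K, hK, hKc⟩ := exists_contDiff_cos_sq
  let C : ℝ → ℝ := fun v => Real.smoothTransition (v + 2) * K v
  have hC : ContDiff ℝ ∞ C := by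
    refine ContDiff.mul (Real.smoothTransition.contDiff.comp (by fun_prop)) hK
  have hCc : ∀ s, C (s ^ 2) = Real.cos s := by
    intro s
    simp only [C]
    rw [Real.smoothTransition.one_of_one_le (by nlinarith [sq_nonneg s]), one_mul, hKc]
  have hCneg : ∀ v < -2, C v = 0 := by
    intro v hv
    simp only [C]
    rw [Real.smoothTransition.zero_of_nonpos (by linarith), zero_mul]
  have hD : ∀ k v, HasDerivAt (iteratedDeriv k C) (iteratedDeriv (k + 1) C v) v := by
    intro k v
    rw [iteratedDeriv_succ]
    exact ((hC.differentiable_iteratedDeriv k (by exact_mod_cast WithTop.coe_lt_top _)) v).hasDerivAt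
  have h1 : ∀ s, 2 * s * iteratedDeriv 1 C (s ^ 2) = - Real.sin s := by
    intro s
    have hsq : HasDerivAt (fun x : ℝ => x ^ 2) (2 * s) s := by simpa using hasDerivAt_pow 2 s
    have e1 : HasDerivAt (fun s : ℝ => C (s ^ 2)) (iteratedDeriv 1 C (s ^ 2) * (2 * s)) s := by
      have := hD 0 (s ^ 2)
      rw [iteratedDeriv_zero] at this
      exact HasDerivAt.comp (h := fun x : ℝ => x ^ 2) s this hsq
    have e2 : HasDerivAt (fun s : ℝ => C (s ^ 2)) (- Real.sin s) s := by
      simp_rw [hCc]; exact Real.hasDerivAt_cos s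
    rw [← e1.unique e2]; ring
  have h2 : ∀ s, 4 * s ^ 2 * iteratedDeriv 2 C (s ^ 2) + 2 * iteratedDeriv 1 C (s ^ 2)
      + C (s ^ 2) = 0 := by
    intro s
    have hsq : HasDerivAt (fun x : ℝ => x ^ 2) (2 * s) s := by simpa using hasDerivAt_pow 2 s
    have e0 : HasDerivAt (fun s : ℝ => iteratedDeriv 1 C (s ^ 2))
        (iteratedDeriv 2 C (s ^ 2) * (2 * s)) s :=
      HasDerivAt.comp (h := fun x : ℝ => x ^ 2) s (hD 1 (s ^ 2)) hsq
    have e1 := ((hasDerivAt_id s).const_mul 2).mul e0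
    have e2 : HasDerivAt (fun s : ℝ => 2 * s * iteratedDeriv 1 C (s ^ 2)) (- Real.cos s) s := by
      simp_rw [h1]; exact (Real.hasDerivAt_sin s).neg
    have := e1.unique e2
    rw [hCc]
    simp only [id] at this
    linarith
  have hode : ∀ k : ℕ, ∀ v > 0, 4 * v * iteratedDeriv (k + 2) C v
      + (4 * k + 2) * iteratedDeriv (k + 1) C v + iteratedDeriv k C v = 0 := by
    intro k
    induction k with
    | zero =>
      intro v hv
      have := h2 (√v)
      rw [Real.sq_sqrt hv.le] at this
      simpa using this
    | succ k ih =>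
      intro v hv
      have e1 := ((((hasDerivAt_id v).const_mul 4).mul (hD (k + 2) v)).add
        ((hD (k + 1) v).const_mul (4 * k + 2 : ℝ))).add (hD k v)
      have e2 := (hasDerivAt_const v (0 : ℝ)).congr_of_eventuallyEq
        (f₁ := fun v => 4 * v * iteratedDeriv (k + 2) C v
          + (4 * k + 2) * iteratedDeriv (k + 1) C v + iteratedDeriv k C v)
        (by filter_upwards [Ioi_mem_nhds hv] with w hw using ih w hw)
      have := e1.unique e2
      simp only [id] at this
      push_cast
      linarith
  have hbig : ∀ k : ℕ, ∃ M : ℝ, ∀ v ≥ 1, |iteratedDeriv k C v| ≤ M := by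
    intro k
    induction k using Nat.twoStepInduction with
    | zero =>
      refine ⟨1, fun v hv => ?_⟩
      rw [iteratedDeriv_zero, ← Real.sq_sqrt (zero_le_one.trans hv), hCc]
      exact Real.abs_cos_le_one _
    | one =>
      refine ⟨1, fun v hv => ?_⟩
      have e := h1 (√v)
      rw [Real.sq_sqrt (zero_le_one.trans hv)] at e
      have e1 : 1 ≤ √v := Real.one_le_sqrt.2 hv
      have e2 := congrArg abs e
      rw [abs_mul, abs_neg, abs_of_nonneg (by positivity)] at e2
      have := Real.abs_sin_le_one (√v)
      nlinarith [abs_nonneg (iteratedDeriv 1 C v)]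
    | more k ih1 ih2 =>
      obtain ⟨M1, hM1⟩ := ih1
      obtain ⟨M2, hM2⟩ := ih2
      refine ⟨(4 * k + 2) * M2 + M1, fun v hv => ?_⟩
      have e : 4 * v * iteratedDeriv (k + 2) C v =
        - ((4 * k + 2) * iteratedDeriv (k + 1) C v + iteratedDeriv k C v) := by
        linarith [hode k v (by linarith)]
      have e2 := congrArg abs e
      rw [abs_mul, abs_neg, abs_of_nonneg (by linarith)] at e2
      have e3 := abs_add_le ((4 * k + 2) * iteratedDeriv (k + 1) C v) (iteratedDeriv k C v)
      rw [abs_mul, abs_of_nonneg (show (0 : ℝ) ≤ 4 * k + 2 by positivity)] at e3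
      have e4 : (4 * k + 2 : ℝ) * |iteratedDeriv (k + 1) C v| ≤ (4 * k + 2) * M2 := by
        gcongr; exact hM2 v hv
      have e5 := hM1 v hv
      nlinarith [abs_nonneg (iteratedDeriv (k + 2) C v)]
  refine ⟨C, hC, hCc, fun k => ?_⟩
  obtain ⟨M, hM⟩ := hbig k
  obtain ⟨M', hM'⟩ := (isCompact_Icc (a := (-3 : ℝ)) (b := 1)).exists_bound_of_continuousOn
    (hC.continuous_iteratedDeriv k (by exact_mod_cast le_top)).continuousOn
  refine ⟨max (max M M') 0, fun v => ?_⟩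
  rw [norm_iteratedFDeriv_eq_norm_iteratedDeriv]
  rcases le_total 1 v with h | h
  · exact (hM v h).trans ((le_max_left _ _).trans (le_max_left _ _))
  rcases le_or_gt (-3) v with h' | h'
  · exact (hM' v ⟨h', h⟩).trans ((le_max_right _ _).trans (le_max_left _ _))
  · have : C =ᶠ[𝓝 v] fun _ => (0 : ℝ) := by
      filter_upwards [Iio_mem_nhds (show v < -2 by linarith)] with w hw using hCneg w hw
    rw [this.iteratedDeriv_eq]
    simp

/-- Differentiation under the integral sign to all finite orders. The target space is quantified
inside the statement because the induction on `n` passes from `k ξ` to its Fréchet derivative. -/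
theorem contDiff_integral_of_dominated {V E : Type} [NormedAddCommGroup V] [NormedSpace ℝ V]
    [FiniteDimensional ℝ V] [MeasurableSpace V] [BorelSpace V] {μ : Measure V}
    [NormedAddCommGroup E] [NormedSpace ℝ E] (n : ℕ) :
    ∀ {G : Type} [NormedAddCommGroup G] [NormedSpace ℝ G] (k : V → E → G),
      ContDiff ℝ ∞ (Function.uncurry k) →
      (∀ j : ℕ, ∃ b : V → ℝ, Integrable b μ ∧ ∀ ξ x, ‖iteratedFDeriv ℝ j (k ξ) x‖ ≤ b ξ) →
      ContDiff ℝ n (fun x => ∫ ξ, k ξ x ∂μ) := by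
  have : SecondCountableTopology V := by
    have := FiniteDimensional.proper_real V
    infer_instance
  have meas : ∀ {G : Type} [NormedAddCommGroup G] [NormedSpace ℝ G] (k : V → E → G),
      ContDiff ℝ ∞ (Function.uncurry k) → ∀ x, AEStronglyMeasurable (fun ξ => k ξ x) μ := by
    intro G _ _ k hk x
    exact (hk.continuous.comp (by fun_prop : Continuous fun ξ => (ξ, x))).aestronglyMeasurable
  induction n with
  | zero =>
    intro G _ _ k hk hb
    obtain ⟨b, hbi, hb⟩ := hb 0
    refine contDiff_zero.2 (continuous_of_dominated (meas k hk)
      (fun x => Eventually.of_forall fun ξ => ?_) hbi (Eventually.of_forall fun ξ => ?_))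
    · simpa using hb ξ x
    · exact hk.continuous.comp (by fun_prop : Continuous fun x => (ξ, x))
  | succ n ih =>
    intro G _ _ k hk hb
    have hk' : ContDiff ℝ ∞ (Function.uncurry fun ξ x => fderiv ℝ (k ξ) x) := by
      apply ContDiff.fderiv (f := fun p : V × E => k p.1) (g := Prod.snd) (m := ∞) (n := ∞)
      · exact hk.comp (by fun_prop : ContDiff ℝ ∞ fun q : (V × E) × E => (q.1.1, q.2))
      · fun_prop
      · simp
    have hkd : ∀ ξ x, HasFDerivAt (k ξ) (fderiv ℝ (k ξ) x) x := fun ξ x =>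
      ((hk.comp (by fun_prop : ContDiff ℝ ∞ fun x : E => (ξ, x))).differentiable
        (by simp) x).hasFDerivAt
    refine contDiff_succ_iff_hasFDerivAt.2 ⟨fun x => ∫ ξ, fderiv ℝ (k ξ) x ∂μ, ih _ hk' ?_, ?_⟩
    · intro j
      obtain ⟨b, hbi, hb⟩ := hb (j + 1)
      exact ⟨b, hbi, fun ξ x => by rw [norm_iteratedFDeriv_fderiv]; exact hb ξ x⟩
    · intro x
      obtain ⟨b, hbi, hb0⟩ := hb 0
      obtain ⟨b1, hbi1, hb1⟩ := hb 1
      refine hasFDerivAt_integral_of_dominated_of_fderiv_le (s := Set.univ) (bound := b1)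
        univ_mem (Eventually.of_forall (meas k hk))
        (hbi.mono' (meas k hk x) (Eventually.of_forall fun ξ => by simpa using hb0 ξ x))
        (meas _ hk' x) (Eventually.of_forall fun ξ y _ => ?_) hbi1
        (Eventually.of_forall fun ξ y _ => hkd ξ y)
      rw [← norm_iteratedFDeriv_one]; exact hb1 ξ y

/-- The tensor product of two copies of `C` inherits bounded derivatives, by the Leibniz rule. -/
theorem bounded_iteratedFDeriv_mul {C : ℝ → ℝ} (hC : ContDiff ℝ ∞ C)
    (hb : ∀ k : ℕ, ∃ M : ℝ, ∀ v, ‖iteratedFDeriv ℝ k C v‖ ≤ M) (j : ℕ) :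
    ∃ M : ℝ, ∀ p : ℝ × ℝ, ‖iteratedFDeriv ℝ j (fun q : ℝ × ℝ => C q.1 * C q.2) p‖ ≤ M := by
  choose M hM using hb
  have key : ∀ (L : ℝ × ℝ →L[ℝ] ℝ), ‖L‖ ≤ 1 → ∀ (i : ℕ) (p : ℝ × ℝ),
      ‖iteratedFDeriv ℝ i (fun q => C (L q)) p‖ ≤ M i := by
    intro L hL i p
    have e := L.iteratedFDeriv_comp_right hC p (i := i) (by exact_mod_cast le_top)
    change ‖iteratedFDeriv ℝ i (C ∘ L) p‖ ≤ _
    rw [e]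
    refine (ContinuousMultilinearMap.norm_compContinuousLinearMap_le _ _).trans ?_
    rw [Finset.prod_const]
    calc _ ≤ ‖iteratedFDeriv ℝ i C (L p)‖ * 1 := by
          gcongr; exact pow_le_one₀ (norm_nonneg _) hL
      _ ≤ _ := by rw [mul_one]; exact hM i _
  refine ⟨∑ i ∈ Finset.range (j + 1), (j.choose i : ℝ) * M i * M (j - i), fun p => ?_⟩
  refine (norm_iteratedFDeriv_mul_le (N := ∞) (hC.comp contDiff_fst) (hC.comp contDiff_snd) p
    (by exact_mod_cast le_top)).trans ?_
  gcongr with i hi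
  · exact mul_nonneg (Nat.cast_nonneg _) ((norm_nonneg _).trans (hM i 0))
  · exact key (ContinuousLinearMap.fst ℝ ℝ ℝ) (ContinuousLinearMap.norm_fst_le ℝ ℝ ℝ) i p
  · exact key (ContinuousLinearMap.snd ℝ ℝ ℝ) (ContinuousLinearMap.norm_snd_le ℝ ℝ ℝ) (j - i) p

/-- The cosine integral with `cos` replaced by `C` and `(s², t²)` by an arbitrary point of `ℝ × ℝ`.
Each derivative in `p` costs a factor of size at most `(2π‖ξ‖)²`, which the Schwartz decay of `a`
absorbs. -/
theorem contDiff_cosine_integral {C : ℝ → ℝ} (hC : ContDiff ℝ ∞ C)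
    (hb : ∀ k : ℕ, ∃ M : ℝ, ∀ v, ‖iteratedFDeriv ℝ k C v‖ ≤ M)
    (a : SchwartzMap (EuclideanSpace ℝ (Fin 2)) ℂ) :
    ContDiff ℝ ∞ (fun p : ℝ × ℝ => ∫ ξ : EuclideanSpace ℝ (Fin 2),
      (a ξ).re * (C ((2 * Real.pi * ξ 0) ^ 2 * p.1) * C ((2 * Real.pi * ξ 1) ^ 2 * p.2))) := by
  refine contDiff_infty.2 fun n => contDiff_integral_of_dominated n
    (fun (ξ : EuclideanSpace ℝ (Fin 2)) (p : ℝ × ℝ) =>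
      (a ξ).re * (C ((2 * Real.pi * ξ 0) ^ 2 * p.1) * C ((2 * Real.pi * ξ 1) ^ 2 * p.2))) ?_ ?_
  · have ha : ContDiff ℝ ∞ a := a.smooth _
    have ha' : ContDiff ℝ ∞ fun q : EuclideanSpace ℝ (Fin 2) × (ℝ × ℝ) => (a q.1).re :=
      Complex.reCLM.contDiff.comp (ha.comp contDiff_fst)
    refine ha'.mul ((hC.comp ?_).mul (hC.comp ?_)) <;> fun_prop
  · intro j
    obtain ⟨M, hM⟩ := bounded_iteratedFDeriv_mul hC hb j
    have hM0 : 0 ≤ M := (norm_nonneg _).trans (hM 0)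
    refine ⟨fun ξ => M * ((2 * Real.pi) ^ 2) ^ j * (‖ξ‖ ^ (2 * j) * ‖a ξ‖),
      (a.integrable_pow_mul volume (2 * j)).const_mul _, fun ξ p => ?_⟩
    let L : ℝ × ℝ →L[ℝ] ℝ × ℝ :=
      (((2 * Real.pi * ξ 0) ^ 2) • ContinuousLinearMap.id ℝ ℝ).prodMap
        (((2 * Real.pi * ξ 1) ^ 2) • ContinuousLinearMap.id ℝ ℝ)
    have hLn : ‖L‖ ≤ (2 * Real.pi) ^ 2 * ‖ξ‖ ^ 2 := by
      have hco : ∀ i (x : ℝ), ‖(2 * Real.pi * ξ i) ^ 2 * x‖ ≤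
          (2 * Real.pi) ^ 2 * ‖ξ‖ ^ 2 * ‖x‖ := by
        intro i x
        rw [norm_mul, norm_pow, norm_mul, mul_pow, Real.norm_of_nonneg Real.two_pi_pos.le]
        gcongr
        exact PiLp.norm_apply_le ξ i
      refine L.opNorm_le_bound (by positivity) fun q => ?_
      change ‖((2 * Real.pi * ξ 0) ^ 2 * q.1, (2 * Real.pi * ξ 1) ^ 2 * q.2)‖ ≤ _
      rw [Prod.norm_def]
      refine max_le ((hco 0 _).trans ?_) ((hco 1 _).trans ?_)
      · gcongr; exact norm_fst_le q
      · gcongr; exact norm_snd_le q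
    have hΦ : ContDiff ℝ ∞ fun q : ℝ × ℝ => C q.1 * C q.2 :=
      (hC.comp contDiff_fst).mul (hC.comp contDiff_snd)
    have hcomp := L.iteratedFDeriv_comp_right hΦ p (i := j) (by exact_mod_cast le_top)
    change ‖iteratedFDeriv ℝ j ((a ξ).re • ((fun q : ℝ × ℝ => C q.1 * C q.2) ∘ L)) p‖ ≤ _
    rw [iteratedFDeriv_const_smul_apply
      ((hΦ.comp L.contDiff).contDiffAt.of_le (by exact_mod_cast le_top)), norm_smul, hcomp]
    calc _ ≤ ‖a ξ‖ * (M * ((2 * Real.pi) ^ 2 * ‖ξ‖ ^ 2) ^ j) := by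
          gcongr
          · exact Complex.abs_re_le_norm _
          · refine (ContinuousMultilinearMap.norm_compContinuousLinearMap_le _ _).trans ?_
            rw [Finset.prod_const, Finset.card_univ, Fintype.card_fin]
            gcongr
            exact hM _
      _ = _ := by rw [mul_pow, ← pow_mul ‖ξ‖]; ring

/-- The claim for a compactly supported function of `(s, t)` that is even in each variable: Fourier
inversion, averaged over the four sign changes, writes it as a superposition of products
`cos (2πξ₀s) cos (2πξ₁t)`, and `cos (2πξs) = C ((2πξ)² s²)`. -/
theorem exists_contDiff_of_hasCompactSupport {ψ : EuclideanSpace ℝ (Fin 2) → ℝ}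
    (hψ : ContDiff ℝ ∞ ψ) (hc : HasCompactSupport ψ)
    (h0 : ∀ s t : ℝ, ψ !₂[-s, t] = ψ !₂[s, t]) (h1 : ∀ s t : ℝ, ψ !₂[s, -t] = ψ !₂[s, t]) :
    ∃ g : ℝ × ℝ → ℝ, ContDiff ℝ ∞ g ∧ ∀ s t : ℝ, ψ !₂[s, t] = g (s ^ 2, t ^ 2) := by
  obtain ⟨C, hC, hCc, hCb⟩ := exists_bounded_cos_sq
  let φ : SchwartzMap (EuclideanSpace ℝ (Fin 2)) ℂ :=
    (hc.comp_left (g := fun r : ℝ => (r : ℂ)) Complex.ofReal_zero).toSchwartzMap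
      (Complex.ofRealCLM.contDiff.comp hψ)
  let a := FourierTransform.fourier φ
  refine ⟨_, contDiff_cosine_integral hC hCb a, fun s t => ?_⟩
  have hint : ∀ s t : ℝ, Integrable fun ξ : EuclideanSpace ℝ (Fin 2) =>
      Complex.exp ((2 * Real.pi * (ξ 0 * s + ξ 1 * t) : ℝ) * Complex.I) * a ξ := by
    intro s t
    refine a.integrable.norm.mono' (Continuous.aestronglyMeasurable ?_)
      (Eventually.of_forall fun ξ => ?_)
    · have := a.continuous
      fun_prop
    · rw [norm_mul, Complex.norm_exp_ofReal_mul_I, one_mul]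
  have hinv : ∀ s t : ℝ, ψ !₂[s, t] = ∫ ξ : EuclideanSpace ℝ (Fin 2),
      (Complex.exp ((2 * Real.pi * (ξ 0 * s + ξ 1 * t) : ℝ) * Complex.I) * a ξ).re := by
    intro s t
    have e : FourierTransformInv.fourierInv a = φ := FourierTransform.fourierInv_fourier_eq φ
    have e1 := DFunLike.congr_fun e !₂[s, t]
    rw [SchwartzMap.fourierInv_coe, Real.fourierInv_eq'] at e1
    have e2 : φ !₂[s, t] = (ψ !₂[s, t] : ℂ) := rfl
    rw [e2] at e1
    have e3 := congrArg Complex.re e1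
    rw [Complex.ofReal_re] at e3
    rw [← e3, ← Complex.reCLM_apply, ← ContinuousLinearMap.integral_comp_comm]
    · refine integral_congr_ae (Eventually.of_forall fun ξ => ?_)
      simp [PiLp.inner_apply, Fin.sum_univ_two, mul_comm]
    · refine (hint s t).congr (Eventually.of_forall fun ξ => ?_)
      simp [PiLp.inner_apply, Fin.sum_univ_two, mul_comm]
  have hre := fun s t => (hint s t).re
  simp only [RCLike.re_eq_complex_re] at hre
  -- Averaging over `(±s, ±t)` turns the exponentials into products of cosines.
  have hsum : 4 * ψ !₂[s, t] = ψ !₂[s, t] + ψ !₂[-s, t] + (ψ !₂[s, -t] + ψ !₂[-s, -t]) := by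
    rw [h0 s (-t), h1, h0]; ring
  rw [hinv s t, hinv (-s) t, hinv s (-t), hinv (-s) (-t), ← integral_add (hre _ _) (hre _ _),
    ← integral_add (hre _ _) (hre _ _),
    ← integral_add ((hre _ _).fun_add (hre _ _)) ((hre _ _).fun_add (hre _ _)), ← hinv] at hsum
  rw [← mul_right_inj' (four_ne_zero' ℝ), hsum, ← integral_const_mul]
  refine integral_congr_ae (Eventually.of_forall fun ξ => ?_)
  simp only [← mul_pow, hCc]
  simp only [Complex.mul_re, Complex.exp_ofReal_mul_I_re, Complex.exp_ofReal_mul_I_im]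
  rw [show 2 * Real.pi * (ξ 0 * s + ξ 1 * t) =
      2 * Real.pi * ξ 0 * s + 2 * Real.pi * ξ 1 * t by ring,
    show 2 * Real.pi * (ξ 0 * -s + ξ 1 * t) =
      -(2 * Real.pi * ξ 0 * s) + 2 * Real.pi * ξ 1 * t by ring,
    show 2 * Real.pi * (ξ 0 * s + ξ 1 * -t) =
      2 * Real.pi * ξ 0 * s + -(2 * Real.pi * ξ 1 * t) by ring,
    show 2 * Real.pi * (ξ 0 * -s + ξ 1 * -t) =
      -(2 * Real.pi * ξ 0 * s) + -(2 * Real.pi * ξ 1 * t) by ring]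
  simp only [Real.cos_add, Real.sin_add, Real.cos_neg, Real.sin_neg]
  ring

/-- Lemma `lemm:rot-sym-extend` (second part): a smooth function on `ℝ² × ℝ²`
that is rotationally symmetric in each factor is a smooth function of
`(‖x‖², ‖y‖²)`. -/
theorem doubly_rot_sym_smooth_extension
    (F : EuclideanSpace ℝ (Fin 2) × EuclideanSpace ℝ (Fin 2) → ℝ)
    (hF : ContDiff ℝ (⊤ : ℕ∞) F)
    (hsym : ∀ (x x' y y' : EuclideanSpace ℝ (Fin 2)),
      ‖x‖ = ‖x'‖ → ‖y‖ = ‖y'‖ → F (x, y) = F (x', y')) :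
    ∃ g : ℝ × ℝ → ℝ, ContDiff ℝ (⊤ : ℕ∞) g ∧
      ∀ x y : EuclideanSpace ℝ (Fin 2), F (x, y) = g (‖x‖ ^ 2, ‖y‖ ^ 2) := by
  have hnorm : ∀ s : ℝ, ‖(!₂[s, 0] : EuclideanSpace ℝ (Fin 2))‖ = |s| := by
    intro s; simp [EuclideanSpace.norm_eq, Real.sqrt_sq_eq_abs]
  let f : ℝ → ℝ → ℝ := fun s t => F (!₂[s, 0], !₂[t, 0])
  have hf0 : ∀ s t, f (-s) t = f s t := fun s t => hsym _ _ _ _ (by simp [hnorm]) rfl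
  have hf1 : ∀ s t, f s (-t) = f s t := fun s t => hsym _ _ _ _ rfl (by simp [hnorm])
  -- The admissible values at `q`: a single value on the closed quadrant, all of `ℝ` off it.
  let T : ℝ × ℝ → Set ℝ := fun q => {y | ∀ s t : ℝ, s ^ 2 = q.1 → t ^ 2 = q.2 → y = f s t}
  have hT : ∀ q, Convex ℝ (T q) := by
    intro q y hy z hz b c _ _ hbc s t hs ht
    rw [hy s t hs ht, hz s t hs ht, ← add_smul, hbc, one_smul]
  obtain ⟨g, hg⟩ := exists_contMDiffMap_forall_mem_convex_of_local (n := (⊤ : ℕ∞))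
    (modelWithCornersSelf ℝ (ℝ × ℝ)) hT (fun p => by
      -- Near `p` only values `s², t² < R` matter, so `f` may be cut off by an even function.
      let R : ℝ := |p.1| + |p.2| + 1
      have hR : 1 ≤ R := by simp only [R]; linarith [abs_nonneg p.1, abs_nonneg p.2]
      let θ : ℝ → ℝ := fun s => Real.smoothTransition (R + 1 - s ^ 2)
      have hθ : ContDiff ℝ ∞ θ := Real.smoothTransition.contDiff.comp (by fun_prop)
      have hθ1 : ∀ s, s ^ 2 < R → θ s = 1 := fun s hs =>
        Real.smoothTransition.one_of_one_le (by linarith)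
      have hθ0 : ∀ s, R + 1 ≤ s ^ 2 → θ s = 0 := fun s hs =>
        Real.smoothTransition.zero_of_nonpos (by linarith)
      have hθn : ∀ s, θ (-s) = θ s := fun s => by simp [θ]
      let ψ : EuclideanSpace ℝ (Fin 2) → ℝ := fun x => θ (x 0) * θ (x 1) * f (x 0) (x 1)
      have hψ : ContDiff ℝ ∞ ψ := by
        refine ((hθ.comp (by fun_prop)).mul (hθ.comp (by fun_prop))).mul (hF.comp ?_)
        refine ContDiff.prodMk ?_ ?_ <;>
        · rw [contDiff_euclidean]
          intro i
          fin_cases i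
          · simp; fun_prop
          · simp; fun_prop
      have hψc : HasCompactSupport ψ := by
        refine HasCompactSupport.intro (isCompact_closedBall 0 (2 * (R + 1))) fun x hx => ?_
        have hx' : (2 * (R + 1)) ^ 2 < x 0 ^ 2 + x 1 ^ 2 := by
          have h2 := EuclideanSpace.norm_sq_eq x
          simp only [Fin.sum_univ_two, Real.norm_eq_abs, sq_abs] at h2
          rw [← h2]
          have : 2 * (R + 1) < ‖x‖ := by simpa using hx
          gcongr
        simp only [ψ]
        rcases le_or_gt (R + 1) (x 0 ^ 2) with h | h
        · rw [hθ0 _ h]; ring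
        · rw [hθ0 (x 1) (by nlinarith)]; ring
      obtain ⟨g, hg, hgψ⟩ := exists_contDiff_of_hasCompactSupport hψ hψc
        (fun s t => by simp [ψ, hθn, hf0]) (fun s t => by simp [ψ, hθn, hf1])
      refine ⟨{q | q.1 < R ∧ q.2 < R}, ?_, g, hg.contMDiff.contMDiffOn, ?_⟩
      · refine ((isOpen_lt continuous_fst continuous_const).inter
          (isOpen_lt continuous_snd continuous_const)).mem_nhds ⟨?_, ?_⟩
        · change p.1 < R
          simp only [R]; linarith [le_abs_self p.1, abs_nonneg p.2]
        · change p.2 < R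
          simp only [R]; linarith [le_abs_self p.2, abs_nonneg p.1]
      · rintro ⟨u, v⟩ ⟨hu, hv⟩ s t hs ht
        simp only at hs ht hu hv
        rw [← hs, ← ht, ← hgψ]
        simp [ψ, hθ1 s (hs ▸ hu), hθ1 t (ht ▸ hv)])
  refine ⟨g, g.contMDiff.contDiff, fun x y => ?_⟩
  rw [hg (‖x‖ ^ 2, ‖y‖ ^ 2) ‖x‖ ‖y‖ rfl rfl]
  exact hsym _ _ _ _ (by simp [hnorm]) (by simp [hnorm])
end
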